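/- Let ω be an irrational number of bounded type. For every κ > 0 there exist a 1-periodic C^∞ map D : ℝ → SL(2,ℝ) and a sequence of 1-periodic C^∞ maps C_k : ℝ → SL(2,ℝ) such that: (i) L(D) ≥ κ; (ii) for every k, L(C_k) = 0, i.e. the sequence (1/m)∫₀¹ log‖C_k^m(x)‖ dx tends to 0 as m → ∞; and (iii) for every j ∈ ℕ, sup_x ‖(d^j/dx^j)(C_k − D)(x)‖ → 0 as k → ∞ (derivatives taken entrywise). -/

import Mathlib

open Real MeasureTheory Filter

attribute [local instance] Matrix.normedAddCommGroup Matrix.normedSpace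

/-- Operator norm of a 2×2 real matrix, acting on Euclidean space. -/
noncomputable def opNorm (A : Matrix (Fin 2) (Fin 2) ℝ) : ℝ :=
  ‖(Matrix.toEuclideanCLM (𝕜 := ℝ) A : EuclideanSpace ℝ (Fin 2) →L[ℝ] EuclideanSpace ℝ (Fin 2))‖

/-- Iterates of the quasi-periodic cocycle: A^n(x) = A(x+(n-1)ω)⋯A(x+ω)A(x). -/
noncomputable def cocycle (ω : ℝ) (A : ℝ → Matrix (Fin 2) (Fin 2) ℝ) :
    ℕ → ℝ → Matrix (Fin 2) (Fin 2) ℝ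
  | 0, _ => 1
  | n + 1, x => A (x + n * ω) * cocycle ω A n x

/-- Finite Lyapunov exponents L_n(A) = (1/n) ∫₀¹ log ‖A^n(x)‖ dx. -/
noncomputable def LEn (ω : ℝ) (A : ℝ → Matrix (Fin 2) (Fin 2) ℝ) (n : ℕ) : ℝ :=
  (1 / n) * ∫ x in (0:ℝ)..1, Real.log (opNorm (cocycle ω A n x))

/-- The Schrödinger cocycle S_v(x) = [[v(x), -1],[1,0]]. -/
def SchrodingerCocycle (v : ℝ → ℝ) (x : ℝ) : Matrix (Fin 2) (Fin 2) ℝ := !![v x, -1; 1, 0]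

/-- The denominators of the continued fraction convergents of ω. -/
noncomputable def cfDen (ω : ℝ) (k : ℕ) : ℝ := (GenContFract.of ω).dens k

section PartA

theorem pa_not_term (ω : ℝ) (hω : Irrational ω) (n : ℕ) : ¬ (GenContFract.of ω).TerminatedAt n := by
  intro h
  obtain ⟨q, hq⟩ := (GenContFract.terminates_iff_rat ω).1 ⟨n, h⟩
  exact hω ⟨q, hq.symm⟩

theorem pa_get (ω : ℝ) (hω : Irrational ω) (n : ℕ) :
    ∃ z : ℤ, (GenContFract.of ω).s.get? n = some ⟨1, (z:ℝ)⟩ := by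
  have h := pa_not_term ω hω n
  obtain ⟨gp, hgp⟩ := Option.ne_none_iff_exists'.1 h
  have h1 := GenContFract.of_partNum_eq_one_and_exists_int_partDen_eq hgp
  obtain ⟨ha, z, hz⟩ := h1
  refine ⟨z, ?_⟩
  rw [hgp]; cases gp; simp_all

theorem pa_int (ω : ℝ) (hω : Irrational ω) (n : ℕ) :
    (∃ a : ℤ, (GenContFract.of ω).nums n = a) ∧ (∃ b : ℤ, (GenContFract.of ω).dens n = b) := by
  induction n using Nat.strong_induction_on with
  | _ n ih =>
  match n, ih with
  | 0, _ => 
    refine ⟨⟨⌊ω⌋, by simp⟩, ⟨1, by simp⟩⟩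
  | 1, _ =>
    obtain ⟨z, hz⟩ := pa_get ω hω 0
    rw [GenContFract.first_num_eq hz, GenContFract.first_den_eq hz]
    refine ⟨⟨z * ⌊ω⌋ + 1, by simp⟩, ⟨z, rfl⟩⟩
  | n+2, ih =>
    obtain ⟨z, hz⟩ := pa_get ω hω (n+1)
    obtain ⟨⟨a, ha⟩, ⟨b, hb⟩⟩ := ih n (by omega)
    obtain ⟨⟨a', ha'⟩, ⟨b', hb'⟩⟩ := ih (n+1) (by omega)
    rw [GenContFract.nums_recurrence hz ha ha', GenContFract.dens_recurrence hz hb hb']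
    refine ⟨⟨z * a' + a, by push_cast; ring⟩, ⟨z * b' + b, by push_cast; ring⟩⟩

theorem pa_den_pos (ω : ℝ) (hω : Irrational ω) (n : ℕ) : 1 ≤ (GenContFract.of ω).dens n := by
  induction n with
  | zero => simp
  | succ n ih => exact ih.trans GenContFract.of_den_mono

theorem pa_large (ω : ℝ) (hω : Irrational ω) (R : ℝ) : ∃ k, R ≤ (GenContFract.of ω).dens k := by
  obtain ⟨N, hN⟩ := exists_nat_ge R
  refine ⟨N + 5, ?_⟩
  have h := GenContFract.succ_nth_fib_le_of_nth_den (v := ω) (n := N+5) (Or.inr (pa_not_term ω hω _))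
  have h2 : N + 5 ≤ Nat.fib (N+5) := Nat.le_fib_self (by omega)
  have h3 : Nat.fib (N+5) ≤ Nat.fib (N+5+1) := Nat.fib_le_fib_succ
  have : ((N+5 : ℕ) : ℝ) ≤ (Nat.fib (N+5+1) : ℝ) := by exact_mod_cast h2.trans h3
  push_cast at this
  linarith

theorem pa_main (ω : ℝ) (hω : Irrational ω)
    (M : ℝ) (hM : 1 ≤ M) (hbt : ∀ k : ℕ, cfDen ω (k + 1) ≤ M * cfDen ω k)
    (n : ℕ) (hn : 1 ≤ n) (p : ℤ) : 1 / (4 * M^2 * n) ≤ |n * ω - p| := by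
  classical
  set B := (GenContFract.of ω).dens with hB
  set A := (GenContFract.of ω).nums with hA
  have hn' : (1:ℝ) ≤ n := by exact_mod_cast hn
  have hex := pa_large ω hω (2*n)
  have hpos := pa_den_pos ω hω
  have hbt' : ∀ k, B (k+1) ≤ M * B k := hbt
  let k := Nat.find hex
  have hk : 2*n ≤ B k := Nat.find_spec hex
  have hk1 : B k ≤ 2 * n * M := by
    rcases Nat.eq_zero_or_pos k with h0 | h0
    · rw [h0]; simp [hB]; nlinarith
    · have h1 := Nat.find_min hex (m := k-1) (by omega)
      have h2 := hbt' (k-1)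
      rw [Nat.sub_add_cancel h0] at h2
      push Not at h1
      have : B (k-1) < 2*n := h1
      nlinarith
  have hk2 : B (k+1) ≤ 2 * n * M^2 := by have := hbt' k; nlinarith
  have hk3 : B k ≤ B (k+1) := GenContFract.of_den_mono
  have hk1' : B k ≤ 2 * n * M^2 := by nlinarith [mul_le_mul_of_nonneg_left hM (by positivity : (0:ℝ) ≤ 2*n*M)]
  -- determinant
  have hdet : A k * B (k+1) - B k * A (k+1) = (-1)^(k+1) :=
    SimpContFract.determinant (s := ⟨_, GenContFract.of_isSimpContFract ω⟩) (pa_not_term ω hω k)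
  have key : ∀ i, 2*n ≤ B i → B i ≤ 2*n*M^2 → (n:ℝ) * A i - p * B i ≠ 0 →
      1 / (4 * M^2 * n) ≤ |n * ω - p| := by
    intro i h1 h2 h3
    obtain ⟨⟨a, ha⟩, ⟨b, hb⟩⟩ := pa_int ω hω i
    have hintg : 1 ≤ |(n:ℝ) * A i - p * B i| := by
      rw [show A i = a from ha, show B i = b from hb] at *
      have : ((n:ℤ) * a - p * b) ≠ 0 := by
        intro h; apply h3; exact_mod_cast congrArg (fun z : ℤ => (z:ℝ)) h
      have := Int.one_le_abs this
      exact_mod_cast this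
    have happ := GenContFract.abs_sub_convs_le (v := ω) (n := i) (pa_not_term ω hω i)
    rw [GenContFract.conv_eq_num_div_den] at happ
    change |ω - A i / B i| ≤ 1 / (B i * B (i+1)) at happ
    have hBi : 0 < B i := by linarith [hpos i]
    have hBi1 : B i ≤ B (i+1) := GenContFract.of_den_mono
    have h4 : |B i * ω - A i| ≤ 1 / B i := by
      have : B i * ω - A i = B i * (ω - A i / B i) := by field_simp
      rw [this, abs_mul, abs_of_pos hBi]
      calc B i * |ω - A i / B i| ≤ B i * (1 / (B i * B (i+1))) := by gcongr
        _ = 1 / B (i+1) := by field_simp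
        _ ≤ 1 / B i := by gcongr
    -- n A - p B = B (nω - p) - n (Bω - A)
    have h5 : 1 ≤ B i * |n*ω - p| + n * |B i * ω - A i| := by
      calc 1 ≤ |(n:ℝ) * A i - p * B i| := hintg
        _ = |B i * (n*ω - p) - n * (B i * ω - A i)| := by congr 1; ring
        _ ≤ |B i * (n*ω - p)| + |n * (B i * ω - A i)| := abs_sub _ _
        _ = _ := by rw [abs_mul, abs_mul, abs_of_pos hBi, Nat.abs_cast]
    have h6 : n * |B i * ω - A i| ≤ 1/2 := by
      calc n * |B i * ω - A i| ≤ n * (1 / B i) := by gcongr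
        _ ≤ n * (1/(2*n)) := by gcongr
        _ = 1/2 := by field_simp
    have h7 : 1/2 ≤ B i * |n*ω - p| := by linarith
    have h8 : 1/2 ≤ (2*n*M^2) * |n*ω - p| := h7.trans (by gcongr)
    rw [div_le_iff₀ (by positivity)]
    nlinarith
  by_cases hz : (n:ℝ) * A k - p * B k = 0
  · refine key (k+1) (by linarith) hk2 ?_
    intro hz'
    have e1 : (p:ℝ) * (A k * B (k+1) - B k * A (k+1)) = 0 := by linear_combination A k * (-hz') + A (k+1) * hz
    have e2 : (n:ℝ) * (A k * B (k+1) - B k * A (k+1)) = 0 := by linear_combination B (k+1) * hz - B k * hz'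
    rw [hdet] at e2
    rcases mul_eq_zero.1 e2 with h | h
    · linarith
    · exact absurd h (by simp)
  · exact key k hk hk1' hz

theorem pa_sin_ge (x : ℝ) : ∃ p : ℤ, 2 * |x - p| ≤ |Real.sin (π * x)| := by
  refine ⟨round x, ?_⟩
  have h1 : |x - round x| ≤ 1/2 := abs_sub_round x
  have h2 := Real.mul_abs_le_abs_sin (x := π * (x - round x)) (by
    rw [abs_mul, abs_of_pos Real.pi_pos]; nlinarith [Real.pi_pos])
  have h3 : |Real.sin (π * (x - round x))| = |Real.sin (π * x)| := by
    rw [mul_sub, mul_comm π (round x : ℝ), Real.sin_sub_int_mul_pi, abs_mul]; simp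
  rw [h3, abs_mul, abs_of_pos Real.pi_pos] at h2
  calc 2 * |x - round x| = 2/π * (π * |x - round x|) := by field_simp
    _ ≤ _ := h2

/-- the diophantine constant -/
theorem pa_sin (ω : ℝ) (hω : Irrational ω)
    (M : ℝ) (hM : 1 ≤ M) (hbt : ∀ k : ℕ, cfDen ω (k + 1) ≤ M * cfDen ω k) :
    ∃ c : ℝ, 0 < c ∧ c ≤ 1 ∧ ∀ n : ℕ, 1 ≤ n → c / n ≤ |Real.sin (π * (n * ω))| := by
  refine ⟨1 / (2 * M^2), by positivity, ?_, ?_⟩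
  · rw [div_le_one (by positivity)]; nlinarith
  · intro n hn
    obtain ⟨p, hp⟩ := pa_sin_ge (n * ω)
    have := pa_main ω hω M hM hbt n hn p
    refine le_trans ?_ hp
    have hn' : (1:ℝ) ≤ n := by exact_mod_cast hn
    calc 1 / (2*M^2) / n = 2 * (1 / (4 * M^2 * n)) := by field_simp; norm_num
      _ ≤ _ := by gcongr

end PartA

section PartB

theorem pb_shift {F : ℝ → ℝ} (hF : Function.Periodic F 1) (a : ℝ) :
    ∫ x in (0:ℝ)..1, F (x + a) = ∫ x in (0:ℝ)..1, F x := by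
  rw [intervalIntegral.integral_comp_add_right]
  have := hF.intervalIntegral_add_eq (0+a) 0
  simpa [add_comm] using this

theorem pb_T {F : ℝ → ℝ} (hF : Function.Periodic F 1) (hc : Continuous F) {Λ : ℝ} 
    (hΛ : ∀ x y, |F x - F y| ≤ Λ * |x - y|) (p : ℤ) (q : ℕ) (hq : 0 < q) (hpq : IsCoprime p (q:ℤ)) (x : ℝ) :
    |∑ i ∈ Finset.range q, F (x + i * (p / q)) - q * ∫ y in (0:ℝ)..1, F y| ≤ Λ := by
  set T : ℝ → ℝ := fun x => ∑ i ∈ Finset.range q, F (x + i * (p / q)) with hT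
  have hq' : (0:ℝ) < q := by exact_mod_cast hq
  have hT1 : Function.Periodic T 1 := by
    intro y; simp only [hT]
    refine Finset.sum_congr rfl fun i _ => ?_
    rw [show y + 1 + i * (p/q) = (y + i * (p/q) : ℝ) + 1 by ring, hF]
  have hTp : Function.Periodic T (p/q : ℝ) := by
    intro y; simp only [hT]
    have h1 := Finset.sum_range_succ (fun i : ℕ => F (y + i * (p / q : ℝ))) q
    have h2 := Finset.sum_range_succ' (fun i : ℕ => F (y + i * (p / q : ℝ))) q
    have h3 : F (y + q * (p/q : ℝ)) = F y := by
      rw [show (q * (p/q : ℝ)) = p * 1 by field_simp]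
      exact hF.int_mul p y
    rw [h1, h3] at h2
    simp at h2
    rw [h2]
    refine Finset.sum_congr rfl fun i _ => ?_
    congr 1; ring
  have hTq : Function.Periodic T (1/q : ℝ) := by
    obtain ⟨a, b, hab⟩ := hpq
    have h := (hTp.int_mul a).add_period (hT1.int_mul b)
    have e : (1/q : ℝ) = a * (p/q) + b * 1 := by
      field_simp
      rw [mul_comm (q:ℝ) (b:ℝ)]; exact_mod_cast hab.symm
    rw [e]; exact h
  have hTL : ∀ x y, |T x - T y| ≤ q * Λ * |x - y| := by
    intro x y
    simp only [hT]
    rw [← Finset.sum_sub_distrib]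
    refine (Finset.abs_sum_le_sum_abs _ _).trans ?_
    calc _ ≤ ∑ i ∈ Finset.range q, Λ * |x - y| := by
          refine Finset.sum_le_sum fun i _ => ?_
          have := hΛ (x + i * (p/q)) (y + i * (p/q))
          simpa using this
      _ = _ := by simp [mul_assoc]
  have hΛ0 : 0 ≤ Λ := by have := (abs_nonneg _).trans (hΛ 1 0); simpa using this
  have hosc : ∀ x y, |T x - T y| ≤ Λ := by
    intro x y
    obtain ⟨y', hy', hy⟩ := hTq.exists_mem_Ico (by positivity : (0:ℝ) < 1/q) y x
    rw [hy]
    refine (hTL x y').trans ?_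
    have : |x - y'| ≤ 1/q := by rw [abs_le]; constructor <;> linarith [hy'.1, hy'.2]
    calc q * Λ * |x - y'| ≤ q * Λ * (1/q) := by gcongr
      _ = Λ := by field_simp
  have hTc : Continuous T := by simp only [hT]; fun_prop
  have hintg : ∫ y in (0:ℝ)..1, T y = q * ∫ y in (0:ℝ)..1, F y := by
    simp only [hT]
    rw [intervalIntegral.integral_finsetSum]
    · simp [pb_shift hF]
    · intro i _; apply Continuous.intervalIntegrable; fun_prop
  have hc : T x = ∫ y in (0:ℝ)..1, T x := by simp
  change |T x - _| ≤ Λ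
  rw [← hintg, hc, ← intervalIntegral.integral_sub (by simp) (hTc.intervalIntegrable _ _)]
  have := intervalIntegral.norm_integral_le_of_norm_le_const (a := 0) (b := 1) (f := fun y => T x - T y) (C := Λ)
    (fun y _ => by rw [Real.norm_eq_abs]; exact hosc x y)
  simpa using this

theorem pb_equi (ω c : ℝ) (hc0 : 0 < c) (hsin : ∀ n : ℕ, 1 ≤ n → c / n ≤ |Real.sin (π * (n * ω))|)
    {F : ℝ → ℝ} (hF : Function.Periodic F 1) (hc : Continuous F) {Λ A : ℝ}
    (hΛ : ∀ x y, |F x - F y| ≤ Λ * |x - y|) (hA : ∀ x, |F x| ≤ A) (Q : ℕ) (hQ : 0 < Q) (n : ℕ) (x : ℝ) :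
    n * (∫ y in (0:ℝ)..1, F y) - 2 * Λ * n * π / (c * Q) - 2 * Q * A ≤ ∑ i ∈ Finset.range n, F (x + i * ω) := by
  obtain ⟨r, hr, hrQ⟩ := Real.exists_rat_abs_sub_le_and_den_le ω hQ
  set q := r.den with hqdef
  set p := r.num with hpdef
  have hq : 0 < q := r.den_pos
  have hq' : (0:ℝ) < q := by exact_mod_cast hq
  have hQ' : (0:ℝ) < Q := by exact_mod_cast hQ
  have hqQ' : (q:ℝ) ≤ Q := by exact_mod_cast hrQ
  have hrr : (r:ℝ) = p / q := by rw [hpdef, hqdef]; exact_mod_cast (Rat.num_div_den r).symm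
  rw [hrr] at hr
  have hΛ0 : 0 ≤ Λ := by have := (abs_nonneg _).trans (hΛ 1 0); simpa using this
  have hA0 : 0 ≤ A := (abs_nonneg _).trans (hA 0)
  have hcop : IsCoprime p (q:ℤ) := by
    rw [Int.isCoprime_iff_gcd_eq_one]; exact r.reduced
  -- lower bound on q
  have hqlow : c * Q / π ≤ q := by
    have h1 := hsin q hq
    have h2 : |Real.sin (π * (q * ω))| ≤ π * |q * ω - p| := by
      have : |Real.sin (π * (q * ω))| = |Real.sin (π * (q * ω - p))| := by
        rw [mul_sub, mul_comm π (p : ℝ), Real.sin_sub_int_mul_pi, abs_mul]; simp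
      rw [this]
      refine Real.abs_sin_le_abs.trans ?_
      rw [abs_mul, abs_of_pos Real.pi_pos]
    have h3 : |q * ω - p| ≤ 1 / Q := by
      have : (q:ℝ) * ω - p = q * (ω - p / q) := by field_simp
      rw [this, abs_mul, abs_of_pos hq']
      calc (q:ℝ) * |ω - p/q| ≤ q * (1 / ((Q+1) * q)) := by gcongr
        _ = 1 / (Q+1) := by field_simp
        _ ≤ 1 / Q := by gcongr; linarith
    have h4 : c / q ≤ π / Q := by
      refine h1.trans (h2.trans ?_)
      calc π * |q * ω - p| ≤ π * (1/Q) := by gcongr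
        _ = _ := by ring
    rw [div_le_div_iff₀ hq' hQ'] at h4
    rw [div_le_iff₀ Real.pi_pos]; linarith
  set I := ∫ y in (0:ℝ)..1, F y with hI
  have hIA : |I| ≤ A := by
    have := intervalIntegral.norm_integral_le_of_norm_le_const (a := 0) (b := 1) (f := F) (C := A)
      (fun y _ => by rw [Real.norm_eq_abs]; exact hA y)
    simpa using this
  have hblock : ∀ x, q * I - 2 * Λ ≤ ∑ i ∈ Finset.range q, F (x + i * ω) := by
    intro x
    have h1 := pb_T hF hc hΛ p q hq hcop x
    have h2 : |∑ i ∈ Finset.range q, F (x + i * ω) - ∑ i ∈ Finset.range q, F (x + i * (p/q))| ≤ Λ := by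
      rw [← Finset.sum_sub_distrib]
      refine (Finset.abs_sum_le_sum_abs _ _).trans ?_
      calc _ ≤ ∑ i ∈ Finset.range q, Λ * (1/q) := by
            refine Finset.sum_le_sum fun i hi => ?_
            refine (hΛ _ _).trans ?_
            gcongr
            have hi' : (i:ℝ) ≤ q := by exact_mod_cast (Finset.mem_range.1 hi).le
            have : (x + i * ω - (x + i * (p/q)) : ℝ) = i * (ω - p/q) := by ring
            rw [this, abs_mul, Nat.abs_cast]
            calc (i:ℝ) * |ω - p/q| ≤ q * (1 / ((Q+1) * q)) := by gcongr
              _ = 1/(Q+1) := by field_simp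
              _ ≤ 1/q := by gcongr; linarith
        _ = Λ := by simp; field_simp
    have := abs_le.1 h1; have := abs_le.1 h2
    linarith
  have hblocks : ∀ b : ℕ, b * (q * I - 2 * Λ) ≤ ∑ i ∈ Finset.range (b * q), F (x + i * ω) := by
    intro b
    induction b with
    | zero => simp
    | succ b ih =>
      rw [Nat.succ_mul, Finset.sum_range_add]
      have h := hblock (x + (b*q : ℕ) * ω)
      have e : ∑ i ∈ Finset.range q, F (x + (b*q:ℕ) * ω + i * ω) = ∑ i ∈ Finset.range q, F (x + ((b*q + i : ℕ):ℝ) * ω) := by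
        refine Finset.sum_congr rfl fun i _ => ?_
        congr 1; push_cast; ring
      rw [e] at h
      push_cast at *
      linarith
  set b := n / q
  set r' := n % q
  have hn : b * q + r' = n := Nat.div_add_mod' n q
  have hr'q : r' < q := Nat.mod_lt _ hq
  have hr'q' : (r':ℝ) ≤ q := by exact_mod_cast hr'q.le
  have hnr : (n:ℝ) = b * q + r' := by exact_mod_cast hn.symm
  have hlast : -(r' * A) ≤ ∑ i ∈ Finset.range r', F (x + ((b*q + i : ℕ):ℝ) * ω) := by
    calc -(r' * A) = ∑ i ∈ Finset.range r', (-A) := by simp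
      _ ≤ _ := Finset.sum_le_sum fun i _ => (abs_le.1 (hA _)).1
  rw [← hn, Finset.sum_range_add, hn]
  have hb := hblocks b
  have e1 : (r':ℝ) * I ≤ Q * A := by
    calc (r':ℝ) * I ≤ r' * A := by gcongr; exact (abs_le.1 hIA).2
      _ ≤ Q * A := by gcongr; linarith
  have e2 : (r':ℝ) * A ≤ Q * A := by gcongr; linarith
  have e3 : b * (2*Λ) ≤ 2 * Λ * n * π / (c * Q) := by
    rw [le_div_iff₀ (by positivity)]
    rw [div_le_iff₀ Real.pi_pos] at hqlow
    have : (b:ℝ) * q ≤ n := by rw [hnr]; linarith [Nat.cast_nonneg (α := ℝ) r']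
    calc b * (2*Λ) * (c * Q) ≤ b * (2*Λ) * (q * π) := by gcongr
      _ = 2 * Λ * (b * q) * π := by ring
      _ ≤ _ := by gcongr
  have e4 : (n:ℝ) * I = b * q * I + r' * I := by rw [hnr]; ring
  linarith

end PartB

section PartC

/-- Diophantine condition -/
structure Dio (ω c : ℝ) : Prop where
  pos : 0 < c
  le_one : c ≤ 1
  sin_ge : ∀ n : ℕ, 1 ≤ n → c / n ≤ |Real.sin (π * (n * ω))|

/-- scales -/
def NN : ℕ → ℕ
  | 0 => 2
  | k + 1 => (NN k) ^ (k + 2)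

def mm (k : ℕ) : ℕ := (NN (k+1)) ^ 2

noncomputable def ell (c : ℝ) (k : ℕ) : ℝ := c / (12 * mm k)

noncomputable def chi (c : ℝ) (k : ℕ) (x : ℝ) : ℝ :=
  Real.smoothTransition (2 - (Real.sin (π * x))^2 / (ell c k)^2)

noncomputable def II (c : ℝ) (k : ℕ) : ℝ := ∫ x in (0:ℝ)..1, chi c k x

noncomputable def theta (c : ℝ) (k : ℕ) (x : ℝ) : ℝ := if chi c k x = 0 then 0 else 1

theorem NN_ge (k : ℕ) : 2 ^ (k+1) ≤ NN k := by
  induction k with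
  | zero => simp [NN]
  | succ k ih =>
    have h1 : 1 ≤ 2^(k+1) := Nat.one_le_two_pow
    calc 2^(k+1+1) = 2^(k+1) * 2 := pow_succ _ _
      _ ≤ 2^(k+1) * 2^(k+1) := by gcongr; exact Nat.le_self_pow (by omega) 2
      _ ≤ NN k * NN k := by gcongr
      _ = NN k ^ 2 := by ring
      _ ≤ NN k ^ (k+2) := Nat.pow_le_pow_right (by omega) (by omega)

theorem NN_two (k : ℕ) : 2 ≤ NN k := by
  have := NN_ge k
  have : 2 ≤ 2^(k+1) := Nat.le_self_pow (by omega) 2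
  omega

theorem NN_step (k : ℕ) : 2 * NN k ≤ NN (k+1) := by
  have := NN_two k
  calc 2 * NN k ≤ NN k * NN k := by gcongr
      _ = NN k ^ 2 := by ring
      _ ≤ NN k ^ (k+2) := Nat.pow_le_pow_right (by omega) (by omega)

theorem NN_mono : Monotone NN := monotone_nat_of_le_succ fun k => by have := NN_step k; omega

theorem NN_lt {i k : ℕ} (h : i < k) : 2 * NN i ≤ NN k := (NN_step i).trans (NN_mono h)

theorem mm_pos (k : ℕ) : 1 ≤ mm k := by
  have := NN_two (k+1); unfold mm; nlinarith

theorem mm_lt {i k : ℕ} (h : i < k) : 2 * mm i ≤ mm k := by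
  have := NN_lt (Nat.succ_lt_succ h)
  have h2 := NN_two (i+1)
  unfold mm
  calc 2 * NN (i+1)^2 ≤ (2 * NN (i+1))^2 := by nlinarith
    _ ≤ _ := by gcongr

theorem ell_pos {c : ℝ} (hc : 0 < c) (k : ℕ) : 0 < ell c k := by
  have := mm_pos k
  have : (0:ℝ) < mm k := by exact_mod_cast this
  unfold ell; positivity

theorem ell_lt {c : ℝ} (hc : 0 < c) {i k : ℕ} (h : i < k) : 2 * ell c k ≤ ell c i := by
  have h1 : ((2 * mm i : ℕ):ℝ) ≤ mm k := by exact_mod_cast mm_lt h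
  have h2 : (0:ℝ) < mm i := by exact_mod_cast mm_pos i
  have h3 : (0:ℝ) < mm k := by exact_mod_cast mm_pos k
  unfold ell
  push_cast at h1
  rw [mul_div_assoc', div_le_div_iff₀ (by positivity) (by positivity)]
  nlinarith

theorem chi_periodic (c : ℝ) (k : ℕ) : Function.Periodic (chi c k) 1 := by
  intro x
  unfold chi
  rw [mul_add, mul_one, Real.sin_add_pi, neg_sq]

theorem chi_nonneg (c : ℝ) (k : ℕ) (x : ℝ) : 0 ≤ chi c k x := Real.smoothTransition.nonneg _
theorem chi_le_one (c : ℝ) (k : ℕ) (x : ℝ) : chi c k x ≤ 1 := Real.smoothTransition.le_one _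

theorem chi_contDiff (c : ℝ) (k : ℕ) : ContDiff ℝ (⊤ : ℕ∞) (chi c k) := by
  unfold chi
  refine Real.smoothTransition.contDiff.comp ?_
  fun_prop

theorem chi_ne {c : ℝ} (hc : 0 < c) {k : ℕ} {x : ℝ} (h : chi c k x ≠ 0) :
    (Real.sin (π * x))^2 < 2 * (ell c k)^2 := by
  by_contra h1
  push Not at h1
  apply h
  apply Real.smoothTransition.zero_of_nonpos
  have := ell_pos hc k
  rw [sub_nonpos, le_div_iff₀ (by positivity)]
  exact h1

theorem chi_one {c : ℝ} (hc : 0 < c) {k : ℕ} {x : ℝ} (h : (Real.sin (π * x))^2 ≤ (ell c k)^2) :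
    chi c k x = 1 := by
  apply Real.smoothTransition.one_of_one_le
  have := ell_pos hc k
  have : (Real.sin (π * x))^2 / (ell c k)^2 ≤ 1 := by rw [div_le_one (by positivity)]; exact h
  linarith

theorem chi_nest {c : ℝ} (hc : 0 < c) {i k : ℕ} (hik : i < k) {x : ℝ} (h : chi c k x ≠ 0) :
    chi c i x = 1 := by
  apply chi_one hc
  have h1 := chi_ne hc h
  have h2 := ell_lt hc hik
  have h3 := ell_pos hc k
  nlinarith

theorem chi_disj {ω c : ℝ} (hd : Dio ω c) (k : ℕ) (y : ℝ) (d : ℕ) (hd1 : 1 ≤ d) (hd2 : d ≤ 2 * mm k + 1) :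
    chi c k y = 0 ∨ chi c k (y + d * ω) = 0 := by
  by_contra hcon
  push Not at hcon
  have h1 := chi_ne hd.pos hcon.1
  have h2 := chi_ne hd.pos hcon.2
  have h3 := hd.sin_ge d hd1
  have hl := ell_pos hd.pos k
  have h0 : (1:ℝ) ≤ mm k := by exact_mod_cast mm_pos k
  have h4 : 4 * ell c k ≤ c / d := by
    have : (d:ℝ) ≤ 2 * mm k + 1 := by exact_mod_cast hd2
    have hd' : (1:ℝ) ≤ d := by exact_mod_cast hd1
    unfold ell
    rw [mul_div_assoc', div_le_div_iff₀ (by positivity) (by positivity)]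
    have := hd.pos
    have : c * d ≤ c * (3 * mm k) := by gcongr; linarith
    linarith
  have h5 : |Real.sin (π * (d * ω))| ≤ |Real.sin (π * (y + d*ω))| + |Real.sin (π * y)| := by
    have e : π * (d * ω) = π * (y + d*ω) - π * y := by ring
    rw [e, Real.sin_sub]
    refine (abs_sub _ _).trans ?_
    rw [abs_mul, abs_mul]
    have := Real.abs_cos_le_one (π * y)
    have := Real.abs_cos_le_one (π * (y + d*ω))
    have := abs_nonneg (Real.sin (π * y))
    have := abs_nonneg (Real.sin (π * (y + d*ω)))
    nlinarith
  have h6 : |Real.sin (π * y)| < 2 * ell c k := by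
    apply abs_lt_of_sq_lt_sq <;> nlinarith
  have h7 : |Real.sin (π * (y + d*ω))| < 2 * ell c k := by
    apply abs_lt_of_sq_lt_sq <;> nlinarith
  linarith

theorem pc_int_le {ω : ℝ} {h : ℝ → ℝ} (hm : Measurable h) (hp : Function.Periodic h 1) (h0 : ∀ x, 0 ≤ h x) (h1 : ∀ x, h x ≤ 1)
    (m : ℕ) (hm1 : 1 ≤ m) (hdis : ∀ y, ∀ d : ℕ, 1 ≤ d → d < m → h y = 0 ∨ h (y + d * ω) = 0) :
    ∫ x in (0:ℝ)..1, h x ≤ 1 / m := by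
  have hintg : ∀ a : ℝ, IntervalIntegrable (fun x => h (x + a)) volume 0 1 := by
    intro a
    rw [intervalIntegrable_iff]
    refine Measure.integrableOn_of_bounded (M := 1) (by simp) ?_ ?_
    · exact (hm.comp (measurable_add_const a)).aestronglyMeasurable
    · refine ae_of_all _ fun x => ?_
      rw [Real.norm_eq_abs, abs_le]; constructor <;> linarith [h0 (x+a), h1 (x+a)]
  have hsum : ∀ y, ∑ j ∈ Finset.range m, h (y + j * ω) ≤ 1 := by
    intro y
    by_cases hall : ∀ j ∈ Finset.range m, h (y + j * ω) = 0
    · rw [Finset.sum_eq_zero hall]; norm_num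
    · push Not at hall
      obtain ⟨j0, hj0, hne⟩ := hall
      rw [Finset.sum_eq_single_of_mem j0 hj0]
      · exact h1 _
      · intro j hj hjj
        rw [Finset.mem_range] at hj hj0
        rcases lt_or_gt_of_ne hjj with hlt | hlt
        · have := hdis (y + j*ω) (j0 - j) (by omega) (by omega)
          rw [Nat.cast_sub hlt.le, show y + j * ω + ((j0:ℝ) - j) * ω = y + j0 * ω by ring] at this
          tauto
        · have := hdis (y + j0*ω) (j - j0) (by omega) (by omega)
          rw [Nat.cast_sub hlt.le, show y + j0 * ω + ((j:ℝ) - j0) * ω = y + j * ω by ring] at this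
          tauto
  have hI : ∫ x in (0:ℝ)..1, ∑ j ∈ Finset.range m, h (x + j * ω) = m * ∫ x in (0:ℝ)..1, h x := by
    rw [intervalIntegral.integral_finsetSum]
    · simp [pb_shift hp]
    · intro j _; exact hintg _
  have hI2 : ∫ x in (0:ℝ)..1, ∑ j ∈ Finset.range m, h (x + j * ω) ≤ ∫ x in (0:ℝ)..1, (1:ℝ) := by
    apply intervalIntegral.integral_mono_on (by norm_num)
    · rw [← Finset.sum_fn]
      exact IntervalIntegrable.sum _ (fun j _ => hintg _)
    · simp
    · intro x _; exact hsum x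
  rw [hI] at hI2
  simp at hI2
  have : (0:ℝ) < m := by exact_mod_cast hm1
  rw [le_div_iff₀ this]; linarith

theorem II_le {ω c : ℝ} (hd : Dio ω c) (k : ℕ) : II c k ≤ 1 / mm k := by
  refine pc_int_le (ω := ω) (chi_contDiff c k).continuous.measurable (chi_periodic c k) (chi_nonneg c k) (chi_le_one c k) _ (mm_pos k) ?_
  intro y d h1 h2
  exact chi_disj hd k y d h1 (by omega)

theorem theta_periodic (c : ℝ) (k : ℕ) : Function.Periodic (theta c k) 1 := by
  intro x; unfold theta; rw [chi_periodic c k x]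

theorem theta_measurable (c : ℝ) (k : ℕ) : Measurable (theta c k) := by
  unfold theta
  refine Measurable.ite ?_ measurable_const measurable_const
  exact (chi_contDiff c k).continuous.measurable (measurableSet_singleton 0)

theorem theta_nonneg (c : ℝ) (k : ℕ) (x : ℝ) : 0 ≤ theta c k x := by unfold theta; split_ifs <;> norm_num
theorem theta_le_one (c : ℝ) (k : ℕ) (x : ℝ) : theta c k x ≤ 1 := by unfold theta; split_ifs <;> norm_num

theorem theta_int {ω c : ℝ} (hd : Dio ω c) (k : ℕ) : ∫ x in (0:ℝ)..1, theta c k x ≤ 1 / mm k := by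
  refine pc_int_le (ω := ω) (theta_measurable c k) (theta_periodic c k) (theta_nonneg c k) (theta_le_one c k) _ (mm_pos k) ?_
  intro y d h1 h2
  have := chi_disj hd k y d h1 (by omega)
  unfold theta
  rcases this with h | h <;> simp [h]

theorem II_ge {ω c : ℝ} (hd : Dio ω c) (k : ℕ) : c / (48 * mm k) ≤ II c k := by
  have hl := ell_pos hd.pos k
  have h0 : (1:ℝ) ≤ mm k := by exact_mod_cast mm_pos k
  have hl1 : ell c k ≤ 1 := by
    unfold ell; rw [div_le_one (by positivity)]; linarith [hd.le_one]
  have hintg : ∀ a b, IntervalIntegrable (chi c k) volume a b :=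
    fun a b => (chi_contDiff c k).continuous.intervalIntegrable a b
  have e : c / (48 * mm k) = ell c k / 4 := by unfold ell; field_simp; ring
  rw [e]; unfold II
  rw [← intervalIntegral.integral_add_adjacent_intervals (hintg 0 (ell c k / 4)) (hintg _ 1)]
  have h1 : ∫ x in (0:ℝ)..(ell c k / 4), (1:ℝ) ≤ ∫ x in (0:ℝ)..(ell c k / 4), chi c k x := by
    apply intervalIntegral.integral_mono_on (by positivity) (by simp) (hintg _ _)
    intro x hx
    rw [chi_one hd.pos]
    have h3 : |Real.sin (π * x)| ≤ ell c k := by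
      refine Real.abs_sin_le_abs.trans ?_
      rw [abs_of_nonneg (by have := hx.1; positivity)]
      have := hx.2; have := Real.pi_lt_four; have := Real.pi_pos; have := hx.1
      nlinarith
    exact sq_le_sq' (by linarith [(abs_le.1 h3).1]) (abs_le.1 h3).2
  have h2 : 0 ≤ ∫ x in (ell c k / 4)..1, chi c k x :=
    intervalIntegral.integral_nonneg (by linarith) (fun x _ => chi_nonneg c k x)
  simp at h1
  linarith

end PartC

section PartD

abbrev M2 := Matrix (Fin 2) (Fin 2) ℝ

def Umat (r : ℝ) : M2 := !![1, r; 0, 1]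
def Lmat (t : ℝ) : M2 := !![1, 0; t, 1]
noncomputable def Dmat (s : ℝ) : M2 := !![Real.exp s, 0; 0, Real.exp (-s)]
def Nmat : M2 := !![-1, -1; 1, 1]
def Cut (ρ τ : ℝ) : M2 := !![0, ρ; -τ, 0]

/-- Birkhoff sums -/
noncomputable def SS (ω : ℝ) (g : ℝ → ℝ) (j : ℕ) (y : ℝ) : ℝ := ∑ i ∈ Finset.range j, g (y + i * ω)

noncomputable def rterm (ω : ℝ) (f g : ℝ → ℝ) (j : ℕ) (y : ℝ) : ℝ :=
  (Real.exp (f (y + j * ω)) - 1) * Real.exp (- 2 * SS ω g j y)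

noncomputable def tterm (ω : ℝ) (f g : ℝ → ℝ) (j : ℕ) (y : ℝ) : ℝ :=
  (Real.exp (f (y - j * ω)) - 1) * Real.exp (- 2 * SS ω g j (y - j * ω))

noncomputable def rr (ω : ℝ) (f g : ℝ → ℝ) (m : ℕ) (y : ℝ) : ℝ :=
  ∑ j ∈ Finset.range (m+1), rterm ω f g j y

noncomputable def tt (ω : ℝ) (f g : ℝ → ℝ) (m : ℕ) (y : ℝ) : ℝ :=
  ∑ j ∈ Finset.range m, tterm ω f g (j+1) y

noncomputable def ff (c : ℝ) (a : ℕ → ℝ) (k : ℕ) (y : ℝ) : ℝ := a k * chi c k y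

noncomputable def gg (ω c κ : ℝ) (a : ℕ → ℝ) : ℕ → ℝ → ℝ
  | 0 => fun _ => κ + 2
  | k + 1 => fun y => gg ω c κ a k y - ff c a k y / 2 - ff c a k (y + ω) / 2

noncomputable def rk (ω c κ : ℝ) (a : ℕ → ℝ) (k : ℕ) : ℝ → ℝ := rr ω (ff c a k) (gg ω c κ a k) (mm k)
noncomputable def tk (ω c κ : ℝ) (a : ℕ → ℝ) (k : ℕ) : ℝ → ℝ := tt ω (ff c a k) (gg ω c κ a k) (mm k)
noncomputable def rhok (ω c κ : ℝ) (a : ℕ → ℝ) (k : ℕ) : ℝ → ℝ := rterm ω (ff c a k) (gg ω c κ a k) (mm k + 1)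
noncomputable def taumk (ω c κ : ℝ) (a : ℕ → ℝ) (k : ℕ) : ℝ → ℝ := tterm ω (ff c a k) (gg ω c κ a k) (mm k)

noncomputable def VV (ω c κ : ℝ) (a : ℕ → ℝ) : ℕ → ℝ → M2
  | 0 => fun _ => 1
  | k + 1 => fun y => VV ω c κ a k y * (Umat (rk ω c κ a k y) * Lmat (tk ω c κ a k y) * Dmat (ff c a k y / 2))

noncomputable def DD (ω c κ : ℝ) (a : ℕ → ℝ) (k : ℕ) (y : ℝ) : M2 :=
  VV ω c κ a k (y + ω) * Dmat (gg ω c κ a k y) * (VV ω c κ a k y).adjugate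

noncomputable def EE (a : ℕ → ℝ) (k : ℕ) : ℝ := Real.exp (- ∑ i ∈ Finset.range k, a i)

noncomputable def tauk (c : ℝ) (a : ℕ → ℝ) (k : ℕ) (y : ℝ) : ℝ := 1 - Real.exp (- ff c a k y)

theorem SS_succ' (ω : ℝ) (g : ℝ → ℝ) (j : ℕ) (y : ℝ) : SS ω g (j+1) y = g y + SS ω g j (y + ω) := by
  unfold SS
  rw [Finset.sum_range_succ']
  simp only [Nat.cast_zero, zero_mul, add_zero]
  rw [add_comm]
  congr 1
  refine Finset.sum_congr rfl fun i _ => ?_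
  congr 1; push_cast; ring

theorem SS_succ (ω : ℝ) (g : ℝ → ℝ) (j : ℕ) (y : ℝ) : SS ω g (j+1) y = SS ω g j y + g (y + j * ω) := by
  unfold SS; rw [Finset.sum_range_succ]

theorem rterm_succ (ω : ℝ) (f g : ℝ → ℝ) (j : ℕ) (y : ℝ) :
    Real.exp (-2 * g y) * rterm ω f g j (y + ω) = rterm ω f g (j+1) y := by
  unfold rterm
  rw [SS_succ', show y + ω + j * ω = y + (j+1 : ℕ) * ω by push_cast; ring,
    show -2 * (g y + SS ω g j (y+ω)) = -2 * g y + -2 * SS ω g j (y + ω) by ring, Real.exp_add]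
  ring

theorem tterm_succ (ω : ℝ) (f g : ℝ → ℝ) (j : ℕ) (y : ℝ) :
    Real.exp (2 * g y) * tterm ω f g (j+1) (y + ω) = tterm ω f g j y := by
  unfold tterm
  rw [show y + ω - (j+1 : ℕ) * ω = y - j * ω by push_cast; ring, SS_succ,
    show y - j * ω + j * ω = y by ring,
    show -2 * (SS ω g j (y - j*ω) + g y) = -2 * g y + -2 * SS ω g j (y - j*ω) by ring, Real.exp_add]
  have : Real.exp (2 * g y) * Real.exp (-2 * g y) = 1 := by rw [← Real.exp_add]; simp
  linear_combination ((Real.exp (f (y - j * ω)) - 1) * Real.exp (-2 * SS ω g j (y - j * ω))) * this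

theorem rr_rec (ω : ℝ) (f g : ℝ → ℝ) (m : ℕ) (y : ℝ) :
    Real.exp (-2 * g y) * rr ω f g m (y + ω) = rr ω f g m y - (Real.exp (f y) - 1) + rterm ω f g (m+1) y := by
  unfold rr
  rw [Finset.mul_sum, Finset.sum_congr rfl (fun j _ => rterm_succ ω f g j y)]
  have h1 := Finset.sum_range_succ (fun j => rterm ω f g j y) (m+1)
  have h2 := Finset.sum_range_succ' (fun j => rterm ω f g j y) (m+1)
  have h3 : rterm ω f g 0 y = Real.exp (f y) - 1 := by simp [rterm, SS]
  rw [h3] at h2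
  linarith

theorem tt_rec (ω : ℝ) (f g : ℝ → ℝ) (m : ℕ) (y : ℝ) :
    Real.exp (2 * g y) * tt ω f g m (y + ω) = (Real.exp (f y) - 1) + tt ω f g m y - tterm ω f g m y := by
  unfold tt
  rw [Finset.mul_sum, Finset.sum_congr rfl (fun j _ => tterm_succ ω f g j y)]
  have h1 := Finset.sum_range_succ (fun j => tterm ω f g j y) m
  have h2 := Finset.sum_range_succ' (fun j => tterm ω f g j y) m
  have h3 : tterm ω f g 0 y = Real.exp (f y) - 1 := by simp [tterm, SS]
  rw [h3] at h2
  linarith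

theorem m2_ext {A B : M2} (h00 : A 0 0 = B 0 0) (h01 : A 0 1 = B 0 1) (h10 : A 1 0 = B 1 0) (h11 : A 1 1 = B 1 1) : A = B := by
  ext i j; fin_cases i <;> fin_cases j <;> assumption

/-- case A of the local identity -/
theorem pd_caseA (g f r t' : ℝ) (hr : r = Real.exp f - 1) (ht : Real.exp (2*g) * t' = Real.exp f - 1) :
    Umat 0 * Lmat t' * Dmat (g - f) * Lmat (-0) * Umat (-r) = Dmat g * (1 + (1 - Real.exp (-f)) • Nmat + Cut 0 0) := by
  have e1 : Real.exp (g - f) = Real.exp g * Real.exp (-f) := by rw [← Real.exp_add]; ring_nf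
  have e2 : Real.exp (-(g - f)) = Real.exp (-g) * Real.exp f := by rw [← Real.exp_add]; ring_nf
  have e3 : Real.exp f * Real.exp (-f) = 1 := by rw [← Real.exp_add]; simp
  have e4 : Real.exp g * Real.exp (-g) = 1 := by rw [← Real.exp_add]; simp
  have e5 : t' * Real.exp g = Real.exp (-g) * (Real.exp f - 1) := by
    have : Real.exp (2*g) = Real.exp g * Real.exp g := by rw [← Real.exp_add]; ring_nf
    rw [this] at ht
    linear_combination Real.exp (-g) * ht - Real.exp g * t' * e4
  unfold Umat Lmat Dmat Nmat Cut
  rw [e1, e2, hr]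
  apply m2_ext <;> simp [Matrix.mul_apply, Fin.sum_univ_two]
  · linear_combination (-Real.exp g) * e3
  · linear_combination Real.exp (-f) * e5 + Real.exp (-g) * e3
  · linear_combination (-Real.exp (-f) * (Real.exp f - 1)) * e5 + (-Real.exp (-g) * Real.exp f + 2 * Real.exp (-g)) * e3

/-- case B of the local identity -/
theorem pd_caseB (g r t r' t' ρ τ : ℝ) (hr : Real.exp (-2*g) * r' = r + ρ) (ht : Real.exp (2*g) * t' = t - τ)
    (h1 : r * τ = 0) (h2 : ρ * τ = 0) :
    Umat r' * Lmat t' * Dmat g * Lmat (-t) * Umat (-r) = Dmat g * (1 + Cut ρ τ) := by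
  have e4 : Real.exp g * Real.exp (-g) = 1 := by rw [← Real.exp_add]; simp
  have e6 : Real.exp (-2*g) = Real.exp (-g) * Real.exp (-g) := by rw [← Real.exp_add]; ring_nf
  have e7 : Real.exp (2*g) = Real.exp g * Real.exp g := by rw [← Real.exp_add]; ring_nf
  rw [e6] at hr; rw [e7] at ht
  set G := Real.exp g
  set H := Real.exp (-g)
  have hr' : r' = G * G * (r + ρ) := by linear_combination G*G*hr - (r' * (1 + G * H)) * e4
  have ht' : t' = H * H * (t - τ) := by linear_combination H*H*ht - (t' * (1 + G * H)) * e4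
  have hkey : Umat r' * Lmat t' * Dmat g = Dmat g * (Umat (r+ρ) * Lmat (t-τ)) := by
    rw [hr', ht']
    unfold Umat Lmat Dmat
    change !![1, G * G * (r + ρ); 0, 1] * !![1, 0; H * H * (t - τ), 1] * !![G, 0; 0, H] = !![G, 0; 0, H] * (_ * _)
    apply m2_ext <;> simp [Matrix.mul_apply, Fin.sum_univ_two]
    · linear_combination G * (r+ρ) * (t-τ) * (1 + G * H) * e4
    · linear_combination G * (r+ρ) * e4
    · linear_combination H * (t-τ) * e4
  rw [hkey]
  rw [Matrix.mul_assoc, Matrix.mul_assoc]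
  congr 1
  unfold Umat Lmat Cut
  apply m2_ext <;> simp [Matrix.mul_apply, Fin.sum_univ_two]
  · linear_combination -h1 - h2
  · linear_combination r * (h1 + h2)
  · ring
  · linear_combination h1

end PartD

section PartE

variable {ω c κ : ℝ} {a : ℕ → ℝ}

theorem det_Umat (r : ℝ) : (Umat r).det = 1 := by simp [Umat, Matrix.det_fin_two]
theorem det_Lmat (r : ℝ) : (Lmat r).det = 1 := by simp [Lmat, Matrix.det_fin_two]
theorem det_Dmat (r : ℝ) : (Dmat r).det = 1 := by simp [Dmat, Matrix.det_fin_two, ← Real.exp_add]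
theorem adj_Umat (r : ℝ) : (Umat r).adjugate = Umat (-r) := by
  simp [Umat, Matrix.adjugate_fin_two]
theorem adj_Lmat (r : ℝ) : (Lmat r).adjugate = Lmat (-r) := by
  simp [Lmat, Matrix.adjugate_fin_two]
theorem adj_Dmat (r : ℝ) : (Dmat r).adjugate = Dmat (-r) := by
  simp [Dmat, Matrix.adjugate_fin_two]
theorem Dmat_add (r s : ℝ) : Dmat (r + s) = Dmat r * Dmat s := by
  unfold Dmat
  apply m2_ext <;> simp [Matrix.mul_apply, Fin.sum_univ_two, Real.exp_add, mul_comm]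
theorem Nmat_sq : Nmat * Nmat = 0 := by
  unfold Nmat; apply m2_ext <;> simp [Matrix.mul_apply, Fin.sum_univ_two]

theorem det_VV (ω c κ : ℝ) (a : ℕ → ℝ) (k : ℕ) (y : ℝ) : (VV ω c κ a k y).det = 1 := by
  induction k with
  | zero => simp [VV]
  | succ k ih => simp [VV, ih, det_Umat, det_Lmat, det_Dmat]

theorem adj_mul_VV (ω c κ : ℝ) (a : ℕ → ℝ) (k : ℕ) (y : ℝ) : (VV ω c κ a k y).adjugate * VV ω c κ a k y = 1 := by
  rw [Matrix.adjugate_mul, det_VV, one_smul]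
theorem VV_mul_adj (ω c κ : ℝ) (a : ℕ → ℝ) (k : ℕ) (y : ℝ) : VV ω c κ a k y * (VV ω c κ a k y).adjugate = 1 := by
  rw [Matrix.mul_adjugate, det_VV, one_smul]

theorem det_DD (ω c κ : ℝ) (a : ℕ → ℝ) (k : ℕ) (y : ℝ) : (DD ω c κ a k y).det = 1 := by
  unfold DD
  rw [Matrix.det_mul, Matrix.det_mul, Matrix.det_adjugate, det_VV, det_VV, det_Dmat]; simp

theorem rterm_zero {f g : ℝ → ℝ} {j : ℕ} {y : ℝ} (h : f (y + j * ω) = 0) : rterm ω f g j y = 0 := by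
  simp [rterm, h]
theorem tterm_zero {f g : ℝ → ℝ} {j : ℕ} {y : ℝ} (h : f (y - j * ω) = 0) : tterm ω f g j y = 0 := by
  simp [tterm, h]

theorem ff_disj (hd : Dio ω c) (k : ℕ) (y z : ℝ) (d : ℕ) (hz : z = y + d * ω) (hd1 : 1 ≤ d) (hd2 : d ≤ 2 * mm k + 1) :
    ff c a k y = 0 ∨ ff c a k z = 0 := by
  rw [hz]
  rcases chi_disj hd k y d hd1 hd2 with h | h
  · left; simp [ff, h]
  · right; simp [ff, h]

theorem near (hd : Dio ω c) (k : ℕ) (y : ℝ) (h : ff c a k y ≠ 0) :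
    rk ω c κ a k y = Real.exp (ff c a k y) - 1 ∧ tk ω c κ a k y = 0 ∧ rhok ω c κ a k y = 0 ∧ taumk ω c κ a k y = 0 := by
  have hm := mm_pos k
  have hp : ∀ j : ℕ, 1 ≤ j → j ≤ mm k + 1 → ff c a k (y + j * ω) = 0 := fun j h1 h2 =>
    (ff_disj hd k y _ j rfl h1 (by omega)).resolve_left h
  have hn : ∀ j : ℕ, 1 ≤ j → j ≤ mm k + 1 → ff c a k (y - j * ω) = 0 := fun j h1 h2 =>
    (ff_disj hd k (y - j*ω) y j (by ring) h1 (by omega)).resolve_right h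
  refine ⟨?_, ?_, ?_, ?_⟩
  · unfold rk rr
    rw [Finset.sum_range_succ', Finset.sum_eq_zero]
    · simp [rterm, SS]
    · intro j hj
      rw [Finset.mem_range] at hj
      exact rterm_zero (hp _ (by omega) (by omega))
  · unfold tk tt
    apply Finset.sum_eq_zero
    intro j hj
    rw [Finset.mem_range] at hj
    exact tterm_zero (hn _ (by omega) (by omega))
  · exact rterm_zero (hp _ (by omega) (by omega))
  · exact tterm_zero (hn _ (by omega) (by omega))

theorem cut_prod (hd : Dio ω c) (k : ℕ) (y : ℝ) :
    rk ω c κ a k y * taumk ω c κ a k y = 0 ∧ rhok ω c κ a k y * taumk ω c κ a k y = 0 := by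
  have hm := mm_pos k
  by_cases h : ff c a k (y - mm k * ω) = 0
  · have : taumk ω c κ a k y = 0 := tterm_zero h
    simp [this]
  · have hp : ∀ j : ℕ, j ≤ mm k + 1 → ff c a k (y + j * ω) = 0 := fun j h2 =>
      (ff_disj hd k (y - mm k * ω) _ (mm k + j) (by push_cast; ring) (by omega) (by omega)).resolve_left h
    have h1 : rhok ω c κ a k y = 0 := rterm_zero (hp _ le_rfl)
    have h2 : rk ω c κ a k y = 0 := by
      unfold rk rr
      apply Finset.sum_eq_zero
      intro j hj
      rw [Finset.mem_range] at hj
      exact rterm_zero (hp _ (by omega))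
    simp [h1, h2]

theorem local_id (hd : Dio ω c) (k : ℕ) (y : ℝ) :
    Umat (rk ω c κ a k (y+ω)) * Lmat (tk ω c κ a k (y+ω)) * Dmat (gg ω c κ a k y - ff c a k y)
      * Lmat (-tk ω c κ a k y) * Umat (-rk ω c κ a k y)
    = Dmat (gg ω c κ a k y) * (1 + tauk c a k y • Nmat + Cut (rhok ω c κ a k y) (taumk ω c κ a k y)) := by
  have hr : Real.exp (-2 * gg ω c κ a k y) * rk ω c κ a k (y+ω) =
    rk ω c κ a k y - (Real.exp (ff c a k y) - 1) + rhok ω c κ a k y := rr_rec ω _ _ (mm k) y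
  have ht : Real.exp (2 * gg ω c κ a k y) * tk ω c κ a k (y+ω) =
    (Real.exp (ff c a k y) - 1) + tk ω c κ a k y - taumk ω c κ a k y := tt_rec ω _ _ (mm k) y
  by_cases h : ff c a k y = 0
  · rw [h] at hr ht ⊢
    obtain ⟨h1, h2⟩ := cut_prod (κ := κ) (a := a) hd k y
    have := pd_caseB (gg ω c κ a k y) (rk ω c κ a k y) (tk ω c κ a k y) _ _ _ _ (by rw [hr]; simp) (by rw [ht]; simp) h1 h2
    rw [sub_zero, this]
    simp [tauk, h]
  · obtain ⟨h1, h2, h3, h4⟩ := near (κ := κ) hd k y h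
    rw [h1, h3] at hr
    rw [h2, h4] at ht
    have hr' : rk ω c κ a k (y+ω) = 0 := by
      have : Real.exp (-2 * gg ω c κ a k y) * rk ω c κ a k (y+ω) = 0 := by rw [hr]; ring
      simpa [Real.exp_ne_zero] using this
    have := pd_caseA (gg ω c κ a k y) (ff c a k y) (rk ω c κ a k y) _ h1 (by rw [ht]; simp)
    rw [h2, h3, h4, hr', this]
    rfl

theorem DD_succ_eq (hd : Dio ω c) (k : ℕ) (y : ℝ) :
    DD ω c κ a (k+1) y = VV ω c κ a k (y+ω) * (Dmat (gg ω c κ a k y) *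
      (1 + tauk c a k y • Nmat + Cut (rhok ω c κ a k y) (taumk ω c κ a k y))) * (VV ω c κ a k y).adjugate := by
  rw [← local_id hd]
  have e : Dmat (gg ω c κ a k y - ff c a k y) = Dmat (ff c a k (y+ω) / 2) * Dmat (gg ω c κ a (k+1) y) * Dmat (-(ff c a k y / 2)) := by
    rw [← Dmat_add, ← Dmat_add]; congr 1; simp only [gg]; ring
  rw [e]
  unfold DD
  simp only [VV, Matrix.adjugate_mul_distrib, adj_Umat, adj_Lmat, adj_Dmat, Matrix.mul_assoc]

theorem VV_plateau (hd : Dio ω c) (ha : ∀ i, a i ≠ 0) (k : ℕ) (y : ℝ) (h : ∀ i < k, chi c i y = 1) :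
    VV ω c κ a k y * Nmat * (VV ω c κ a k y).adjugate = EE a k • Nmat := by
  induction k with
  | zero => simp [VV, EE]
  | succ k ih =>
    have ih := ih (fun i hi => h i (by omega))
    have hf : ff c a k y = a k := by simp [ff, h k (by omega)]
    obtain ⟨h1, h2, -, -⟩ := near (κ := κ) hd k y (by rw [hf]; exact ha k)
    have key : Umat (rk ω c κ a k y) * Lmat (tk ω c κ a k y) * Dmat (ff c a k y / 2) * Nmat *
        (Dmat (-(ff c a k y / 2)) * (Lmat (-tk ω c κ a k y) * Umat (-rk ω c κ a k y))) = Real.exp (- a k) • Nmat := by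
      rw [h1, h2, hf]
      have e1 : Real.exp (a k) = Real.exp (a k / 2) * Real.exp (a k / 2) := by rw [← Real.exp_add]; ring_nf
      have e2 : Real.exp (-a k) = Real.exp (-(a k / 2)) * Real.exp (-(a k / 2)) := by rw [← Real.exp_add]; ring_nf
      have e3 : Real.exp (a k / 2) * Real.exp (-(a k / 2)) = 1 := by rw [← Real.exp_add]; simp
      rw [e1, e2]
      unfold Umat Lmat Dmat Nmat
      rw [neg_neg]
      generalize Real.exp (a k / 2) = P at *
      generalize Real.exp (-(a k / 2)) = Q at *
      apply m2_ext <;> simp [Matrix.mul_apply, Fin.sum_univ_two]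
      · linear_combination (P * Q) * e3
      · linear_combination (2 * P * Q + P * P - P * P * (P * Q)) * e3
      · linear_combination (-(P * Q)) * e3
    have e : EE a (k+1) • Nmat = Real.exp (- a k) • (EE a k • Nmat) := by
      rw [smul_smul]; congr 1
      unfold EE; rw [Finset.sum_range_succ, neg_add, Real.exp_add, mul_comm]
    rw [e, ← ih]
    simp only [VV, Matrix.adjugate_mul_distrib, adj_Umat, adj_Lmat, adj_Dmat]
    rw [← Matrix.smul_mul, ← Matrix.mul_smul, ← key]
    simp only [Matrix.mul_assoc]

theorem DD_succ_of (hd : Dio ω c) (ha : ∀ i, a i ≠ 0) (k : ℕ) (y : ℝ)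
    (hP : (∀ i < k, chi c i y = 1) → DD ω c κ a k y * Nmat = DD ω c κ a 0 y * Nmat) :
    DD ω c κ a (k+1) y = DD ω c κ a k y + (EE a k * tauk c a k y) • (DD ω c κ a 0 y * Nmat) +
      VV ω c κ a k (y+ω) * Dmat (gg ω c κ a k y) * Cut (rhok ω c κ a k y) (taumk ω c κ a k y) * (VV ω c κ a k y).adjugate := by
  rw [DD_succ_eq hd]
  have e : VV ω c κ a k (y+ω) * (Dmat (gg ω c κ a k y) * (tauk c a k y • Nmat)) * (VV ω c κ a k y).adjugate
      = (EE a k * tauk c a k y) • (DD ω c κ a 0 y * Nmat) := by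
    by_cases h : chi c k y = 0
    · have : tauk c a k y = 0 := by simp [tauk, ff, h]
      simp [this]
    · have hpl : ∀ i < k, chi c i y = 1 := fun i hi => chi_nest hd.pos hi h
      have h1 := VV_plateau (κ := κ) hd ha k y hpl
      have h2 := hP hpl
      have h3 : VV ω c κ a k (y+ω) * (Dmat (gg ω c κ a k y) * (tauk c a k y • Nmat)) * (VV ω c κ a k y).adjugate
        = tauk c a k y • (DD ω c κ a k y * (VV ω c κ a k y * Nmat * (VV ω c κ a k y).adjugate)) := by
        unfold DD
        have := adj_mul_VV ω c κ a k y
        simp only [Matrix.mul_smul, Matrix.smul_mul, Matrix.mul_assoc]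
        rw [← Matrix.mul_assoc (VV ω c κ a k y).adjugate (VV ω c κ a k y), this, Matrix.one_mul]
      rw [h3, h1, Matrix.mul_smul, h2, smul_smul, mul_comm]
  rw [← e]
  unfold DD
  simp only [Matrix.mul_add, Matrix.add_mul, Matrix.mul_one, Matrix.mul_assoc]

theorem DD_plateau (hd : Dio ω c) (ha : ∀ i, a i ≠ 0) (k : ℕ) (y : ℝ) (h : ∀ i < k, chi c i y = 1) :
    DD ω c κ a k y * Nmat = DD ω c κ a 0 y * Nmat := by
  induction k with
  | zero => rfl
  | succ k ih =>
    have ih := ih (fun i hi => h i (by omega))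
    rw [DD_succ_of hd ha k y (fun _ => ih)]
    have hf : ff c a k y = a k := by simp [ff, h k (by omega)]
    obtain ⟨-, -, h3, h4⟩ := near (κ := κ) hd k y (by rw [hf]; exact ha k)
    have hc : Cut 0 0 = 0 := by unfold Cut; apply m2_ext <;> simp
    rw [h3, h4, hc, Matrix.add_mul, Matrix.add_mul, ih, Matrix.smul_mul, Matrix.mul_assoc, Nmat_sq]
    simp

theorem DD_succ (hd : Dio ω c) (ha : ∀ i, a i ≠ 0) (k : ℕ) (y : ℝ) :
    DD ω c κ a (k+1) y = DD ω c κ a k y + (EE a k * tauk c a k y) • (DD ω c κ a 0 y * Nmat) +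
      VV ω c κ a k (y+ω) * Dmat (gg ω c κ a k y) * Cut (rhok ω c κ a k y) (taumk ω c κ a k y) * (VV ω c κ a k y).adjugate :=
  DD_succ_of hd ha k y (DD_plateau hd ha k y)

/-- initial segment property -/
theorem gg_initseg {b : ℕ → ℝ} (k : ℕ) (h : ∀ i < k, a i = b i) : gg ω c κ a k = gg ω c κ b k := by
  induction k with
  | zero => rfl
  | succ k ih =>
    have ih := ih (fun i hi => h i (by omega))
    simp only [gg, ih, ff, h k (by omega)]

theorem VV_initseg {b : ℕ → ℝ} (k : ℕ) (h : ∀ i < k, a i = b i) : VV ω c κ a k = VV ω c κ b k := by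
  induction k with
  | zero => rfl
  | succ k ih =>
    have h' := fun i (hi : i < k) => h i (by omega)
    have hf : ff c a k = ff c b k := by ext y; simp [ff, h k (by omega)]
    simp only [VV, ih h', rk, tk, gg_initseg k h', hf]

theorem DD_initseg {b : ℕ → ℝ} (k : ℕ) (h : ∀ i < k, a i = b i) : DD ω c κ a k = DD ω c κ b k := by
  ext1 y; unfold DD; rw [VV_initseg k h, gg_initseg k h]

end PartE

section PartF

/-- uniform bounds on the derivatives of order at most `j` -/
def CB (j : ℕ) (F : ℝ → ℝ) (A : ℝ) : Prop :=
  ContDiff ℝ (⊤ : ℕ∞) F ∧ ∀ i ≤ j, ∀ x, ‖iteratedDeriv i F x‖ ≤ A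

theorem CB.nonneg {j : ℕ} {F : ℝ → ℝ} {A : ℝ} (h : CB j F A) : 0 ≤ A :=
  (norm_nonneg _).trans (h.2 0 (Nat.zero_le _) 0)

theorem CB.mono {j : ℕ} {F : ℝ → ℝ} {A B : ℝ} (h : CB j F A) (hAB : A ≤ B) : CB j F B :=
  ⟨h.1, fun i hi x => (h.2 i hi x).trans hAB⟩

theorem CB.abs_le {j : ℕ} {F : ℝ → ℝ} {A : ℝ} (h : CB j F A) (x : ℝ) : |F x| ≤ A := by
  have := h.2 0 (Nat.zero_le _) x
  simpa using this

theorem CB.of_le {i j : ℕ} {F : ℝ → ℝ} {A : ℝ} (h : CB j F A) (hij : i ≤ j) : CB i F A :=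
  ⟨h.1, fun l hl x => h.2 l (hl.trans hij) x⟩

theorem cdAt {F : ℝ → ℝ} (h : ContDiff ℝ (⊤ : ℕ∞) F) (i : ℕ) (x : ℝ) : ContDiffAt ℝ i F x :=
  (h.of_le (by exact_mod_cast le_top)).contDiffAt

theorem CB.const (j : ℕ) (b : ℝ) : CB j (fun _ => b) |b| := by
  refine ⟨contDiff_const, fun i _ x => ?_⟩
  rw [iteratedDeriv_const]
  split_ifs <;> simp

theorem CB.add {j : ℕ} {F G : ℝ → ℝ} {A B : ℝ} (h : CB j F A) (h' : CB j G B) : CB j (fun x => F x + G x) (A + B) := by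
  refine ⟨h.1.add h'.1, fun i hi x => ?_⟩
  rw [iteratedDeriv_fun_add (cdAt h.1 i x) (cdAt h'.1 i x)]
  exact (norm_add_le _ _).trans (add_le_add (h.2 i hi x) (h'.2 i hi x))

theorem CB.const_mul {j : ℕ} {F : ℝ → ℝ} {A : ℝ} (h : CB j F A) (b : ℝ) : CB j (fun x => b * F x) (|b| * A) := by
  refine ⟨contDiff_const.mul h.1, fun i hi x => ?_⟩
  rw [iteratedDeriv_const_mul_field, norm_mul]
  exact mul_le_mul_of_nonneg_left (h.2 i hi x) (abs_nonneg _)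

theorem CB.neg {j : ℕ} {F : ℝ → ℝ} {A : ℝ} (h : CB j F A) : CB j (fun x => - F x) A := by
  have := h.const_mul (-1)
  simpa using this

theorem CB.sub {j : ℕ} {F G : ℝ → ℝ} {A B : ℝ} (h : CB j F A) (h' : CB j G B) : CB j (fun x => F x - G x) (A + B) := by
  simp only [sub_eq_add_neg]; exact h.add h'.neg

theorem CB.shift {j : ℕ} {F : ℝ → ℝ} {A : ℝ} (h : CB j F A) (b : ℝ) : CB j (fun x => F (x + b)) A := by
  refine ⟨h.1.comp (contDiff_id.add contDiff_const), fun i hi x => ?_⟩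
  rw [iteratedDeriv_comp_add_const]
  exact h.2 i hi _

theorem CB.sum {ι : Type*} {j : ℕ} {F : ι → ℝ → ℝ} {A : ι → ℝ} (s : Finset ι) (h : ∀ i ∈ s, CB j (F i) (A i)) :
    CB j (fun x => ∑ i ∈ s, F i x) (∑ i ∈ s, A i) := by
  classical
  induction s using Finset.induction_on with
  | empty => simpa using CB.const j 0
  | insert b s hb ih =>
    simp only [Finset.sum_insert hb]
    exact (h b (by simp)).add (ih (fun i hi => h i (by simp [hi])))

theorem CB.mul {j : ℕ} {F G : ℝ → ℝ} {A B : ℝ} (h : CB j F A) (h' : CB j G B) :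
    CB j (fun x => F x * G x) (2^j * (A * B)) := by
  refine ⟨h.1.mul h'.1, fun i hi x => ?_⟩
  rw [← norm_iteratedFDeriv_eq_norm_iteratedDeriv]
  refine (norm_iteratedFDeriv_mul_le h.1 h'.1 x (n := i) (by exact_mod_cast le_top)).trans ?_
  have hA := h.nonneg
  have hB := h'.nonneg
  calc _ ≤ ∑ l ∈ Finset.range (i+1), (i.choose l : ℝ) * A * B := by
        refine Finset.sum_le_sum fun l hl => ?_
        rw [Finset.mem_range] at hl
        rw [norm_iteratedFDeriv_eq_norm_iteratedDeriv, norm_iteratedFDeriv_eq_norm_iteratedDeriv]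
        gcongr
        · exact h.2 l (by omega) x
        · exact h'.2 (i-l) (by omega) x
    _ = 2^i * (A * B) := by
        simp only [mul_assoc]
        rw [← Finset.sum_mul]
        congr 1
        exact_mod_cast Nat.sum_range_choose i
    _ ≤ 2^j * (A * B) := by gcongr; norm_num

theorem CB.comp {j : ℕ} {F G : ℝ → ℝ} {C Y : ℝ} (hG : ContDiff ℝ (⊤ : ℕ∞) G) (h : CB j F Y) (hY : 1 ≤ Y)
    (hC : ∀ i ≤ j, ∀ x, ‖iteratedDeriv i G (F x)‖ ≤ C) : CB j (fun x => G (F x)) (j.factorial * C * Y^j) := by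
  refine ⟨hG.comp h.1, fun i hi x => ?_⟩
  have hC0 : 0 ≤ C := (norm_nonneg _).trans (hC 0 (Nat.zero_le _) 0)
  rw [← norm_iteratedFDeriv_eq_norm_iteratedDeriv]
  refine (norm_iteratedFDeriv_comp_le (n := i) hG h.1 (by exact_mod_cast le_top) x (C := C) (D := Y) ?_ ?_).trans ?_
  · intro l hl
    rw [norm_iteratedFDeriv_eq_norm_iteratedDeriv]; exact hC l (hl.trans hi) x
  · intro l hl1 hl
    rw [norm_iteratedFDeriv_eq_norm_iteratedDeriv]
    exact (h.2 l (hl.trans hi) x).trans (le_self_pow₀ hY (by omega))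
  · gcongr

theorem CB.exp {j : ℕ} {F : ℝ → ℝ} {σ Y : ℝ} (h : CB j F Y) (hY : 1 ≤ Y) (hσ : ∀ x, F x ≤ σ) :
    CB j (fun x => Real.exp (F x)) (j.factorial * Real.exp σ * Y^j) := by
  refine CB.comp (G := Real.exp) Real.contDiff_exp h hY fun i _ x => ?_
  rw [iteratedDeriv_eq_iterate, Real.iter_deriv_exp, Real.norm_eq_abs, Real.abs_exp]
  exact Real.exp_le_exp.2 (hσ x)

theorem smoothTransition_bdd (j : ℕ) : ∃ C, ∀ i ≤ j, ∀ x, ‖iteratedDeriv i Real.smoothTransition x‖ ≤ C := by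
  have h1 : ∀ i : ℕ, ∃ C, ∀ x, ‖iteratedDeriv i Real.smoothTransition x‖ ≤ C := by
    intro i
    have hcd : ContDiff ℝ (⊤ : ℕ∞) Real.smoothTransition := Real.smoothTransition.contDiff
    have hcont : Continuous (iteratedDeriv i Real.smoothTransition) :=
      hcd.continuous_iteratedDeriv i (by exact_mod_cast le_top)
    obtain ⟨C, hC⟩ := (isCompact_Icc (a := (0:ℝ)) (b := 1)).exists_bound_of_continuousOn hcont.continuousOn
    refine ⟨max C 1, fun x => ?_⟩
    by_cases hx : x ∈ Set.Icc (0:ℝ) 1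
    · exact (hC x hx).trans (le_max_left _ _)
    · refine le_trans ?_ (le_max_right _ _)
      have : ∃ b : ℝ, |b| ≤ 1 ∧ Real.smoothTransition =ᶠ[nhds x] fun _ => b := by
        rcases lt_or_ge x 0 with h | h
        · refine ⟨0, by simp, ?_⟩
          filter_upwards [Iio_mem_nhds h] with y hy
          exact Real.smoothTransition.zero_of_nonpos (le_of_lt hy)
        · have : 1 < x := by by_contra h2; exact hx ⟨h, not_lt.1 h2⟩
          refine ⟨1, by simp, ?_⟩
          filter_upwards [Ioi_mem_nhds this] with y hy
          exact Real.smoothTransition.one_of_one_le (le_of_lt hy)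
      obtain ⟨b, hb, hbe⟩ := this
      rw [hbe.iteratedDeriv_eq]
      exact ((CB.const i b).2 i le_rfl x).trans hb
  choose C hC using h1
  refine ⟨∑ i ∈ Finset.range (j+1), C i, fun i hi x => (hC i x).trans ?_⟩
  exact Finset.single_le_sum (f := C) (fun l _ => (norm_nonneg _).trans (hC l 0)) (Finset.mem_range.2 (by omega))

theorem CB_of_periodic {F : ℝ → ℝ} (hF : ContDiff ℝ (⊤ : ℕ∞) F) (hp : Function.Periodic F 1) (j : ℕ) : ∃ A, CB j F A := by
  have h1 : ∀ i : ℕ, ∃ C, ∀ x, ‖iteratedDeriv i F x‖ ≤ C := by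
    intro i
    have hcont : Continuous (iteratedDeriv i F) :=
      hF.continuous_iteratedDeriv i (by exact_mod_cast le_top)
    have hper : Function.Periodic (iteratedDeriv i F) 1 := by
      intro x
      have : iteratedDeriv i (fun z => F (z + 1)) x = iteratedDeriv i F (x + 1) := by
        rw [iteratedDeriv_comp_add_const]
      rw [← this]; congr 1; ext z; exact hp z
    obtain ⟨C, hC⟩ := (isCompact_Icc (a := (0:ℝ)) (b := 1)).exists_bound_of_continuousOn hcont.continuousOn
    refine ⟨C, fun x => ?_⟩
    obtain ⟨y, hy, hxy⟩ := hper.exists_mem_Ico₀ one_pos x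
    rw [hxy]; exact hC y ⟨hy.1, hy.2.le⟩
  choose C hC using h1
  refine ⟨∑ i ∈ Finset.range (j+1), C i, hF, fun i hi x => (hC i x).trans ?_⟩
  exact Finset.single_le_sum (f := C) (fun l _ => (norm_nonneg _).trans (hC l 0)) (Finset.mem_range.2 (by omega))

/-- polynomial bounds of a family in terms of a scale -/
def PB {ι : Type*} (X : ι → ℝ) (j : ℕ) (F : ι → ℝ → ℝ) : Prop := ∃ p : ℕ, ∀ i, CB j (F i) (X i ^ p)

/-- exponential bounds of a family in terms of a scale -/
def EB {ι : Type*} (X : ι → ℝ) (j : ℕ) (F : ι → ℝ → ℝ) : Prop := ∃ p : ℕ, ∀ i, CB j (F i) (Real.exp (X i ^ p))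

/-- polynomially bounded family of constants -/
def PK {ι : Type*} (X : ι → ℝ) (C : ι → ℝ) : Prop := ∃ p : ℕ, ∀ i, |C i| ≤ X i ^ p

section fam
variable {ι : Type*} {X : ι → ℝ} {j : ℕ} {F G : ι → ℝ → ℝ} {C : ι → ℝ}

theorem exists_two_pow (A : ℝ) : ∃ p : ℕ, A ≤ 2 ^ p := by
  obtain ⟨p, hp⟩ := pow_unbounded_of_one_lt A (by norm_num : (1:ℝ) < 2)
  exact ⟨p, hp.le⟩

theorem PK.const (hX : ∀ i, 2 ≤ X i) (b : ℝ) : PK X (fun _ => b) := by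
  obtain ⟨p, hp⟩ := exists_two_pow |b|
  exact ⟨p, fun i => hp.trans (pow_le_pow_left₀ (by norm_num) (hX i) p)⟩

theorem PK.mul {C' : ι → ℝ} (h : PK X C) (h' : PK X C') : PK X (fun i => C i * C' i) := by
  obtain ⟨p, hp⟩ := h; obtain ⟨q, hq⟩ := h'
  refine ⟨p + q, fun i => ?_⟩
  rw [abs_mul, pow_add]
  exact mul_le_mul (hp i) (hq i) (abs_nonneg _) ((abs_nonneg _).trans (hp i))

theorem PK.mono {C' : ι → ℝ} (h : PK X C) (h' : ∀ i, |C' i| ≤ |C i|) : PK X C' := by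
  obtain ⟨p, hp⟩ := h
  exact ⟨p, fun i => (h' i).trans (hp i)⟩

theorem PB.of_le (h : PB X j F) {i : ℕ} (hi : i ≤ j) : PB X i F := by
  obtain ⟨p, hp⟩ := h
  exact ⟨p, fun k => (hp k).of_le hi⟩

theorem PB.reindex {κ' : Type*} (h : PB X j F) (e : κ' → ι) : PB (fun i => X (e i)) j (fun i => F (e i)) := by
  obtain ⟨p, hp⟩ := h
  exact ⟨p, fun i => hp (e i)⟩

theorem EB.reindex {κ' : Type*} (h : EB X j F) (e : κ' → ι) : EB (fun i => X (e i)) j (fun i => F (e i)) := by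
  obtain ⟨p, hp⟩ := h
  exact ⟨p, fun i => hp (e i)⟩

theorem PB.of_CB (hX : ∀ i, 2 ≤ X i) {A : ι → ℝ} (hA : PK X A) (h : ∀ i, CB j (F i) (A i)) : PB X j F := by
  obtain ⟨p, hp⟩ := hA
  exact ⟨p, fun i => (h i).mono ((le_abs_self _).trans (hp i))⟩

theorem PB.scale {Y : ι → ℝ} (h : PB X j F) (h0 : ∀ i, 0 ≤ X i) (hXY : ∀ i, X i ≤ Y i) : PB Y j F := by
  obtain ⟨p, hp⟩ := h
  exact ⟨p, fun i => (hp i).mono (pow_le_pow_left₀ (h0 i) (hXY i) p)⟩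

theorem PB.const (hX : ∀ i, 2 ≤ X i) (hC : PK X C) : PB X j (fun i _ => C i) := by
  obtain ⟨p, hp⟩ := hC
  exact ⟨p, fun i => (CB.const j (C i)).mono (hp i)⟩

theorem PB.mul (hX : ∀ i, 2 ≤ X i) (h : PB X j F) (h' : PB X j G) : PB X j (fun i x => F i x * G i x) := by
  obtain ⟨p, hp⟩ := h; obtain ⟨q, hq⟩ := h'
  refine ⟨j + (p + q), fun i => ((hp i).mul (hq i)).mono ?_⟩
  rw [pow_add, pow_add]
  have := hX i
  gcongr

theorem PB.const_mul (hX : ∀ i, 2 ≤ X i) (hC : PK X C) (h : PB X j F) : PB X j (fun i x => C i * F i x) :=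
  PB.mul hX (PB.const hX hC) h

theorem PB.add (hX : ∀ i, 2 ≤ X i) (h : PB X j F) (h' : PB X j G) : PB X j (fun i x => F i x + G i x) := by
  obtain ⟨p, hp⟩ := h; obtain ⟨q, hq⟩ := h'
  refine ⟨p + q + 1, fun i => ((hp i).add (hq i)).mono ?_⟩
  have := hX i
  have h1 : X i ^ p ≤ X i ^ (p+q) := pow_le_pow_right₀ (by linarith) (by omega)
  have h2 : X i ^ q ≤ X i ^ (p+q) := pow_le_pow_right₀ (by linarith) (by omega)
  have h3 : 0 ≤ X i ^ (p+q) := by positivity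
  rw [pow_succ]; nlinarith

theorem PB.neg (h : PB X j F) : PB X j (fun i x => - F i x) := by
  obtain ⟨p, hp⟩ := h
  exact ⟨p, fun i => (hp i).neg⟩

theorem PB.sub (hX : ∀ i, 2 ≤ X i) (h : PB X j F) (h' : PB X j G) : PB X j (fun i x => F i x - G i x) := by
  simp only [sub_eq_add_neg]; exact PB.add hX h h'.neg

theorem PB.shift (h : PB X j F) (b : ι → ℝ) : PB X j (fun i x => F i (x + b i)) := by
  obtain ⟨p, hp⟩ := h
  exact ⟨p, fun i => (hp i).shift (b i)⟩

theorem EB.shift (h : EB X j F) (b : ι → ℝ) : EB X j (fun i x => F i (x + b i)) := by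
  obtain ⟨p, hp⟩ := h
  exact ⟨p, fun i => (hp i).shift (b i)⟩

theorem PB.comp (hX : ∀ i, 2 ≤ X i) {H : ℝ → ℝ} (hH : ContDiff ℝ (⊤ : ℕ∞) H) {A : ι → ℝ} (hA : PK X A) (h : PB X j F)
    (hC : ∀ i, ∀ l ≤ j, ∀ x, ‖iteratedDeriv l H (F i x)‖ ≤ A i) : PB X j (fun i x => H (F i x)) := by
  obtain ⟨p, hp⟩ := h; obtain ⟨q, hq⟩ := hA
  obtain ⟨r, hr⟩ := exists_two_pow (j.factorial : ℝ)
  refine ⟨r + q + p * j, fun i => (CB.comp hH (hp i) (one_le_pow₀ (by linarith [hX i])) (hC i)).mono ?_⟩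
  have := hX i
  rw [pow_add, pow_add, pow_mul]
  have hA0 : 0 ≤ A i := (norm_nonneg _).trans (hC i 0 (Nat.zero_le _) 0)
  gcongr
  · exact hr.trans (by gcongr)
  · exact (le_abs_self _).trans (hq i)

theorem PB.exp_neg (hX : ∀ i, 2 ≤ X i) (h : PB X j F) (h0 : ∀ i x, F i x ≤ 0) : PB X j (fun i x => Real.exp (F i x)) := by
  refine PB.comp hX Real.contDiff_exp (PK.const hX 1) h fun i l _ x => ?_
  rw [iteratedDeriv_eq_iterate, Real.iter_deriv_exp, Real.norm_eq_abs, Real.abs_exp]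
  exact Real.exp_le_one_iff.2 (h0 i x)

theorem pow_exp_le {x : ℝ} (hx : 2 ≤ x) (p q : ℕ) : x ^ p * Real.exp (x ^ q) ≤ Real.exp (x ^ (p + q + 1)) := by
  have h1 : x ^ p ≤ Real.exp (x ^ p) := by linarith [Real.add_one_le_exp (x^p)]
  calc x ^ p * Real.exp (x ^ q) ≤ Real.exp (x^p) * Real.exp (x^q) := by gcongr
    _ = Real.exp (x^p + x^q) := by rw [Real.exp_add]
    _ ≤ _ := by
      apply Real.exp_le_exp.2
      have h1 : x ^ p ≤ x ^ (p+q) := pow_le_pow_right₀ (by linarith) (by omega)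
      have h2 : x ^ q ≤ x ^ (p+q) := pow_le_pow_right₀ (by linarith) (by omega)
      have h3 : 0 ≤ x ^ (p+q) := by positivity
      rw [pow_succ]; nlinarith

theorem exp_exp_le {x : ℝ} (hx : 2 ≤ x) (p q : ℕ) : Real.exp (x ^ p) * Real.exp (x ^ q) ≤ Real.exp (x ^ (p + q + 1)) := by
  rw [← Real.exp_add]
  apply Real.exp_le_exp.2
  have h1 : x ^ p ≤ x ^ (p+q) := pow_le_pow_right₀ (by linarith) (by omega)
  have h2 : x ^ q ≤ x ^ (p+q) := pow_le_pow_right₀ (by linarith) (by omega)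
  have h3 : 0 ≤ x ^ (p+q) := by positivity
  rw [pow_succ]; nlinarith

theorem EB.of_PB (h : PB X j F) : EB X j F := by
  obtain ⟨p, hp⟩ := h
  exact ⟨p, fun i => (hp i).mono (by linarith [Real.add_one_le_exp (X i ^p)])⟩

theorem EB.mul (hX : ∀ i, 2 ≤ X i) (h : EB X j F) (h' : EB X j G) : EB X j (fun i x => F i x * G i x) := by
  obtain ⟨p, hp⟩ := h; obtain ⟨q, hq⟩ := h'
  refine ⟨j + (p + q + 1) + 1, fun i => ((hp i).mul (hq i)).mono ?_⟩
  have := hX i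
  calc 2 ^ j * (Real.exp (X i ^ p) * Real.exp (X i ^ q)) ≤ X i ^ j * Real.exp (X i ^ (p + q + 1)) := by
        gcongr; exact exp_exp_le this p q
    _ ≤ _ := pow_exp_le this _ _

theorem EB.add (hX : ∀ i, 2 ≤ X i) (h : EB X j F) (h' : EB X j G) : EB X j (fun i x => F i x + G i x) := by
  obtain ⟨p, hp⟩ := h; obtain ⟨q, hq⟩ := h'
  refine ⟨1 + (p + q + 1) + 1, fun i => ((hp i).add (hq i)).mono ?_⟩
  have hx := hX i
  have h1 : 1 ≤ Real.exp (X i ^ p) := Real.one_le_exp (by positivity)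
  have h2 : 1 ≤ Real.exp (X i ^ q) := Real.one_le_exp (by positivity)
  calc Real.exp (X i ^ p) + Real.exp (X i ^ q) ≤ 2 * (Real.exp (X i ^ p) * Real.exp (X i ^ q)) := by nlinarith
    _ ≤ X i ^ 1 * Real.exp (X i ^ (p + q + 1)) := by
        rw [pow_one]; gcongr; exact exp_exp_le hx p q
    _ ≤ _ := pow_exp_le hx _ _

theorem EB.neg (h : EB X j F) : EB X j (fun i x => - F i x) := by
  obtain ⟨p, hp⟩ := h
  exact ⟨p, fun i => (hp i).neg⟩

theorem EB.sub (hX : ∀ i, 2 ≤ X i) (h : EB X j F) (h' : EB X j G) : EB X j (fun i x => F i x - G i x) := by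
  simp only [sub_eq_add_neg]; exact EB.add hX h h'.neg

theorem EB.one (hX : ∀ i, 2 ≤ X i) (b : ℝ) : EB X j (fun _ _ => b) := EB.of_PB (PB.const hX (PK.const hX b))

theorem EB.exp (hX : ∀ i, 2 ≤ X i) (h : PB X j F) : EB X j (fun i x => Real.exp (F i x)) := by
  obtain ⟨p, hp⟩ := h
  obtain ⟨r, hr⟩ := exists_two_pow (j.factorial : ℝ)
  refine ⟨r + p * j + p + 1, fun i => (CB.exp (hp i) (one_le_pow₀ (by linarith [hX i]))
    (fun x => (le_abs_self _).trans ((hp i).abs_le x))).mono ?_⟩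
  have := hX i
  refine le_trans ?_ (pow_exp_le this _ _)
  rw [pow_add, pow_mul]
  calc (j.factorial : ℝ) * Real.exp (X i ^ p) * (X i ^ p) ^ j = j.factorial * (X i ^ p)^j * Real.exp (X i ^ p) := by ring
    _ ≤ _ := by
      gcongr
      exact hr.trans (by gcongr)

/-- sums with polynomially many terms -/
theorem EB.sum (hX : ∀ i, 2 ≤ X i) {n : ι → ℕ} (hn : PK X (fun i => n i)) {F : (Σ i : ι, Fin (n i)) → ℝ → ℝ}
    (h : EB (fun i => X i.1) j F) : EB X j (fun i x => ∑ l : Fin (n i), F ⟨i, l⟩ x) := by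
  obtain ⟨p, hp⟩ := h; obtain ⟨q, hq⟩ := hn
  refine ⟨q + p + 1, fun i => (CB.sum Finset.univ (fun l _ => hp ⟨i, l⟩)).mono ?_⟩
  refine le_trans ?_ (pow_exp_le (hX i) q p)
  simp only [Finset.sum_const, Finset.card_univ, Fintype.card_fin, nsmul_eq_mul]
  have := hq i
  simp only [Nat.abs_cast] at this
  gcongr

theorem PB.sum (hX : ∀ i, 2 ≤ X i) {n : ι → ℕ} (hn : PK X (fun i => n i)) {F : (Σ i : ι, Fin (n i)) → ℝ → ℝ}
    (h : PB (fun i => X i.1) j F) : PB X j (fun i x => ∑ l : Fin (n i), F ⟨i, l⟩ x) := by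
  obtain ⟨p, hp⟩ := h; obtain ⟨q, hq⟩ := hn
  refine ⟨q + p, fun i => (CB.sum Finset.univ (fun l _ => hp ⟨i, l⟩)).mono ?_⟩
  simp only [Finset.sum_const, Finset.card_univ, Fintype.card_fin, nsmul_eq_mul]
  have := hq i
  simp only [Nat.abs_cast] at this
  rw [pow_add]
  have := hX i
  gcongr

end fam
end PartF

section PartG

noncomputable def Lk (c κ : ℝ) (a : ℕ → ℝ) (k : ℕ) : ℝ := κ + 2 - ∑ i ∈ Finset.range k, a i * II c i

structure Adm (c κ : ℝ) (a : ℕ → ℝ) : Prop where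
  lo : ∀ i, (NN (i+1) : ℝ) ≤ a i
  hi : ∀ i, a i ≤ Lk c κ a i * mm i / 2

/-- index set for uniform estimates -/
abbrev Idx (c κ : ℝ) := {a : ℕ → ℝ // Adm c κ a} × ℕ

noncomputable def X0 {c κ : ℝ} (i : Idx c κ) : ℝ := NN i.2
noncomputable def X1 {c κ : ℝ} (i : Idx c κ) : ℝ := NN (i.2+1)

variable {ω c κ : ℝ} {a : ℕ → ℝ}

theorem NN_two' (k : ℕ) : (2:ℝ) ≤ NN k := by exact_mod_cast NN_two k
theorem NN_step' (k : ℕ) : 2 * (NN k : ℝ) ≤ NN (k+1) := by exact_mod_cast NN_step k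
theorem NN_four' (k : ℕ) : (4:ℝ) ≤ NN (k+1) := by linarith [NN_step' k, NN_two' k]
theorem mm_cast (k : ℕ) : (mm k : ℝ) = (NN (k+1) : ℝ)^2 := by unfold mm; push_cast; rfl
theorem hX0 (i : Idx c κ) : 2 ≤ X0 i := NN_two' _
theorem hX1 (i : Idx c κ) : 2 ≤ X1 i := NN_two' _
theorem hX01 (i : Idx c κ) : X0 i ≤ X1 i := by
  have := NN_step' i.2; have := NN_two' i.2; unfold X0 X1; linarith

theorem Adm.pos (h : Adm c κ a) (i : ℕ) : 0 < a i := by linarith [h.lo i, NN_two' (i+1)]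

theorem Lk_succ (c κ : ℝ) (a : ℕ → ℝ) (k : ℕ) : Lk c κ a (k+1) = Lk c κ a k - a k * II c k := by
  unfold Lk; rw [Finset.sum_range_succ]; ring

theorem II_nonneg (c : ℝ) (k : ℕ) : 0 ≤ II c k :=
  intervalIntegral.integral_nonneg (by norm_num) (fun x _ => chi_nonneg c k x)

theorem mm_pos' (k : ℕ) : (0:ℝ) < mm k := by exact_mod_cast mm_pos k

theorem Lk_half (hd : Dio ω c) (L : ℝ) (hL : 0 ≤ L) (k : ℕ) : (L * mm k / 2) * II c k ≤ L / 2 := by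
  have h1 := II_le hd k
  have h2 := mm_pos' k
  rw [le_div_iff₀ h2] at h1
  nlinarith

theorem Lk_ge (hd : Dio ω c) (hκ : 0 < κ) (h : Adm c κ a) (k : ℕ) : (1/2)^k ≤ Lk c κ a k := by
  induction k with
  | zero => simp [Lk]; linarith
  | succ k ih =>
    rw [Lk_succ, pow_succ]
    have h0 : 0 ≤ Lk c κ a k := le_trans (by positivity) ih
    have h1 := Lk_half hd _ h0 k
    have h2 : a k * II c k ≤ (Lk c κ a k * mm k / 2) * II c k :=
      mul_le_mul_of_nonneg_right (h.hi k) (II_nonneg c k)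
    linarith

theorem Lk_pos (hd : Dio ω c) (hκ : 0 < κ) (h : Adm c κ a) (k : ℕ) : 0 < Lk c κ a k :=
  lt_of_lt_of_le (by positivity) (Lk_ge hd hκ h k)

theorem Lk_le (h : Adm c κ a) (k : ℕ) : Lk c κ a k ≤ κ + 2 := by
  unfold Lk
  have : 0 ≤ ∑ i ∈ Finset.range k, a i * II c i :=
    Finset.sum_nonneg fun i _ => mul_nonneg (h.pos i).le (II_nonneg c i)
  linarith

theorem a_le (h : Adm c κ a) (k : ℕ) : a k ≤ (κ + 2) * (NN (k+1) : ℝ)^2 := by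
  have h1 := h.hi k
  rw [mm_cast] at h1
  have h2 := Lk_le h k
  have h4 := (h.pos k)
  have h3 : (0:ℝ) < (NN (k+1) : ℝ)^2 := by have := NN_two' (k+1); positivity
  nlinarith [mul_le_mul_of_nonneg_right h2 h3.le]

theorem EE_le (h : Adm c κ a) (k : ℕ) : EE a k ≤ 8 * Real.exp (-(NN k : ℝ)) := by
  rcases k with _ | k
  · have h1 : Real.exp 1 < 2.7182818286 := Real.exp_one_lt_d9
    have h2 : Real.exp (-2) * (Real.exp 1 * Real.exp 1) = 1 := by rw [← Real.exp_add, ← Real.exp_add]; norm_num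
    have h3 : 0 < Real.exp 1 := Real.exp_pos 1
    simp [EE, NN]
    have h4 : Real.exp 1 * Real.exp 1 ≤ 8 := by nlinarith
    have h5 := Real.exp_pos (-2)
    nlinarith
  · have h1 : a k ≤ ∑ i ∈ Finset.range (k+1), a i :=
      Finset.single_le_sum (f := a) (fun i _ => (h.pos i).le) (Finset.mem_range.2 (by omega))
    have h2 : EE a (k+1) ≤ Real.exp (-(NN (k+1) : ℝ)) := by
      unfold EE; apply Real.exp_le_exp.2; linarith [h.lo k]
    linarith [Real.exp_pos (-(NN (k+1) : ℝ))]

/-! periodicity -/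

theorem ff_periodic (c : ℝ) (a : ℕ → ℝ) (k : ℕ) : Function.Periodic (ff c a k) 1 := by
  intro y; unfold ff; rw [chi_periodic c k y]

theorem gg_periodic (ω c κ : ℝ) (a : ℕ → ℝ) (k : ℕ) : Function.Periodic (gg ω c κ a k) 1 := by
  induction k with
  | zero => intro y; rfl
  | succ k ih =>
    intro y
    simp only [gg]
    rw [ih y, ff_periodic c a k y, show y + 1 + ω = y + ω + 1 by ring, ff_periodic c a k]

theorem SS_periodic {g : ℝ → ℝ} (hg : Function.Periodic g 1) (ω : ℝ) (n : ℕ) : Function.Periodic (SS ω g n) 1 := by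
  intro y; unfold SS
  refine Finset.sum_congr rfl fun i _ => ?_
  rw [show y + 1 + i * ω = y + i * ω + 1 by ring, hg]

theorem rterm_periodic {f g : ℝ → ℝ} (hf : Function.Periodic f 1) (hg : Function.Periodic g 1) (ω : ℝ) (n : ℕ) :
    Function.Periodic (rterm ω f g n) 1 := by
  intro y; unfold rterm
  rw [show y + 1 + n * ω = y + n * ω + 1 by ring, hf, SS_periodic hg ω n y]

theorem tterm_periodic {f g : ℝ → ℝ} (hf : Function.Periodic f 1) (hg : Function.Periodic g 1) (ω : ℝ) (n : ℕ) :
    Function.Periodic (tterm ω f g n) 1 := by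
  intro y; unfold tterm
  rw [show y + 1 - n * ω = y - n * ω + 1 by ring, hf, SS_periodic hg ω n]

theorem VV_periodic (ω c κ : ℝ) (a : ℕ → ℝ) (k : ℕ) : Function.Periodic (VV ω c κ a k) 1 := by
  induction k with
  | zero => intro y; rfl
  | succ k ih =>
    intro y
    have h1 : rk ω c κ a k (y+1) = rk ω c κ a k y := by
      unfold rk rr
      exact Finset.sum_congr rfl fun j _ => rterm_periodic (ff_periodic c a k) (gg_periodic ω c κ a k) ω j y
    have h2 : tk ω c κ a k (y+1) = tk ω c κ a k y := by
      unfold tk tt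
      exact Finset.sum_congr rfl fun j _ => tterm_periodic (ff_periodic c a k) (gg_periodic ω c κ a k) ω (j+1) y
    simp only [VV]
    rw [ih y, h1, h2, ff_periodic c a k y]

theorem DD_periodic (ω c κ : ℝ) (a : ℕ → ℝ) (k : ℕ) : Function.Periodic (DD ω c κ a k) 1 := by
  intro y; unfold DD
  rw [show y + 1 + ω = y + ω + 1 by ring, VV_periodic ω c κ a k, VV_periodic ω c κ a k, gg_periodic ω c κ a k]

/-! bounds -/

theorem PK_mm : PK (X1 (c := c) (κ := κ)) (fun i => (mm i.2 : ℝ)) :=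
  ⟨2, fun i => by rw [Nat.abs_cast, mm_cast]; exact le_rfl⟩

theorem PB_chi (hd : Dio ω c) (κ : ℝ) (j : ℕ) : PB (X1 (c := c) (κ := κ)) j (fun i => chi c i.2) := by
  obtain ⟨C, hC⟩ := smoothTransition_bdd j
  obtain ⟨A, hA⟩ := CB_of_periodic (F := fun x => (Real.sin (π * x))^2) (by fun_prop)
    (by intro x; simp only; rw [mul_add, mul_one, Real.sin_add_pi, neg_sq]) j
  have h1 : PB (X1 (c := c) (κ := κ)) j (fun _ x => (Real.sin (π * x))^2) :=
    PB.of_CB hX1 (PK.const hX1 A) (fun _ => hA)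
  have h2 : PK (X1 (c := c) (κ := κ)) (fun i => 1 / (ell c i.2)^2) := by
    refine PK.mono ((PK.const hX1 (144 / c^2)).mul (PK_mm.mul PK_mm)) (fun i => ?_)
    have := mm_pos' i.2
    have hc := hd.pos
    apply le_of_eq
    congr 1
    unfold ell
    field_simp
    norm_num
  have h3 : PB (X1 (c := c) (κ := κ)) j (fun i x => 2 - (1 / (ell c i.2)^2) * (Real.sin (π * x))^2) :=
    PB.sub hX1 (PB.const hX1 (PK.const hX1 2)) (PB.const_mul hX1 h2 h1)
  have h4 := PB.comp hX1 (H := Real.smoothTransition) Real.smoothTransition.contDiff (PK.const hX1 C) h3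
    (fun i l hl x => hC l hl _)
  obtain ⟨p, hp⟩ := h4
  refine ⟨p, fun i => ?_⟩
  have e : chi c i.2 = fun x => (2 - 1 / ell c i.2 ^ 2 * Real.sin (π * x) ^ 2).smoothTransition := by
    funext x; unfold chi; congr 1; ring
  simp only
  rw [e]
  exact hp i

theorem PK_a : PK (X1 (c := c) (κ := κ)) (fun i => i.1.1 i.2) := by
  refine PK.mono ((PK.const hX1 (κ+2)).mul PK_mm) (fun i => ?_)
  rw [mm_cast]
  rw [abs_of_pos (i.1.2.pos i.2)]
  exact (a_le i.1.2 i.2).trans (le_abs_self _)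

theorem PB_ff (hd : Dio ω c) (κ : ℝ) (j : ℕ) : PB (X1 (c := c) (κ := κ)) j (fun i => ff c i.1.1 i.2) :=
  PB.const_mul hX1 PK_a (PB_chi hd κ j)

theorem grow {x y : ℝ} (hx : 0 ≤ x) (hxy : 2 * x ≤ y) (hy : 4 ≤ y) {p q : ℕ} (hpq : p + 1 ≤ q) : x ^ q + y ^ p ≤ y ^ q := by
  have h1 : x ^ q * 2 ≤ y ^ q := by
    calc x ^ q * 2 ≤ x ^ q * 2 ^ q := by gcongr; exact le_self_pow₀ (by norm_num) (by omega)
      _ = (2 * x) ^ q := by rw [mul_pow]; ring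
      _ ≤ _ := by gcongr
  have h2 : y ^ p * 2 ≤ y ^ q := by
    calc y ^ p * 2 ≤ y ^ p * y := by gcongr; linarith
      _ = y ^ (p+1) := (pow_succ _ _).symm
      _ ≤ _ := pow_le_pow_right₀ (by linarith) hpq
  linarith

theorem PB_gg (hd : Dio ω c) (κ : ℝ) (j : ℕ) : PB (X0 (c := c) (κ := κ)) j (fun i => gg ω c κ i.1.1 i.2) := by
  obtain ⟨p, hp⟩ := PB_ff hd κ j
  obtain ⟨r, hr⟩ := exists_two_pow |κ + 2|
  refine ⟨p + 1 + r, fun i => ?_⟩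
  obtain ⟨a, k⟩ := i
  simp only [X0]
  induction k with
  | zero =>
    refine (CB.const j (κ+2)).mono (hr.trans ?_)
    simp [NN]; gcongr <;> norm_num
  | succ k ih =>
    have hf := hp (a, k)
    simp only [X1] at hf
    have h1 := (ih.sub (hf.const_mul (1/2))).sub ((hf.shift ω).const_mul (1/2))
    refine CB.mono (A := _) ?_ (grow (p := p) (by positivity) (NN_step' k) (NN_four' k) (by omega))
    convert h1 using 1
    · ext y; simp only [gg]; ring
    · rw [abs_of_pos (by norm_num)]; ring

theorem PB_gg1 (hd : Dio ω c) (κ : ℝ) (j : ℕ) : PB (X1 (c := c) (κ := κ)) j (fun i => gg ω c κ i.1.1 i.2) :=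
  (PB_gg hd κ j).scale (fun i => by linarith [hX0 i]) hX01

abbrev Idx2 (c κ : ℝ) := Σ i : Idx c κ, Fin (mm i.2 + 2)

theorem hX2 (i : Idx2 c κ) : 2 ≤ X1 i.1 := hX1 _

theorem PK_mm2 (q : ℕ) : PK (X1 (c := c) (κ := κ)) (fun i => ((mm i.2 + q : ℕ) : ℝ)) := by
  refine PK.mono ((PK.const hX1 (q+1)).mul PK_mm) (fun i => ?_)
  have : (1:ℝ) ≤ mm i.2 := by exact_mod_cast mm_pos i.2
  push_cast
  rw [abs_of_nonneg (by positivity), abs_of_nonneg (by positivity)]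
  have : (0:ℝ) ≤ q := by positivity
  nlinarith

theorem PB_SS (hd : Dio ω c) (κ : ℝ) (j : ℕ) :
    PB (fun i : Idx2 c κ => X1 i.1) j (fun i => SS ω (gg ω c κ i.1.1.1 i.1.2) i.2) := by
  obtain ⟨p, hp⟩ := PB_gg1 hd κ j
  obtain ⟨q, hq⟩ := PK_mm2 (c := c) (κ := κ) 2
  refine ⟨q + p, fun i => ?_⟩
  have := CB.sum (Finset.range (i.2 : ℕ)) (fun l _ => (hp i.1).shift ((l:ℝ) * ω))
  refine this.mono ?_
  simp only [Finset.sum_const, Finset.card_range, nsmul_eq_mul]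
  have h1 := hq i.1
  rw [Nat.abs_cast] at h1
  rw [pow_add]
  have := hX1 i.1
  have h2 : ((i.2 : ℕ) : ℝ) ≤ ((mm i.1.2 + 2 : ℕ) : ℝ) := by exact_mod_cast i.2.2.le
  gcongr
  linarith

theorem EB_rterm (hd : Dio ω c) (κ : ℝ) (j : ℕ) :
    EB (fun i : Idx2 c κ => X1 i.1) j (fun i => rterm ω (ff c i.1.1.1 i.1.2) (gg ω c κ i.1.1.1 i.1.2) i.2) := by
  have h1 := ((PB_ff hd κ j).reindex (fun i : Idx2 c κ => i.1)).shift (fun i => (i.2 : ℕ) * ω)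
  have h2 := PB.const_mul hX2 (PK.const hX2 (-2)) (PB_SS hd κ j)
  exact EB.mul hX2 (EB.sub hX2 (EB.exp hX2 h1) (EB.one hX2 1)) (EB.exp hX2 h2)

theorem EB_tterm (hd : Dio ω c) (κ : ℝ) (j : ℕ) :
    EB (fun i : Idx2 c κ => X1 i.1) j (fun i => tterm ω (ff c i.1.1.1 i.1.2) (gg ω c κ i.1.1.1 i.1.2) i.2) := by
  have h1 := ((PB_ff hd κ j).reindex (fun i : Idx2 c κ => i.1)).shift (fun i => -((i.2 : ℕ) * ω))
  have h2 := PB.const_mul hX2 (PK.const hX2 (-2)) ((PB_SS hd κ j).shift (fun i => -((i.2 : ℕ) * ω)))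
  exact EB.mul hX2 (EB.sub hX2 (EB.exp hX2 h1) (EB.one hX2 1)) (EB.exp hX2 h2)

theorem EB_rk (hd : Dio ω c) (κ : ℝ) (j : ℕ) : EB (X1 (c := c) (κ := κ)) j (fun i => rk ω c κ i.1.1 i.2) := by
  have h := EB.sum (j := j) hX1 (PK_mm2 (c := c) (κ := κ) 1) ((EB_rterm hd κ j).reindex
    (fun i : (Σ i : Idx c κ, Fin (mm i.2 + 1)) => (⟨i.1, ⟨i.2, by omega⟩⟩ : Idx2 c κ)))
  obtain ⟨p, hp⟩ := h
  refine ⟨p, fun i => ?_⟩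
  have e : rk ω c κ i.1.1 i.2 = fun x => ∑ l : Fin (mm i.2 + 1), rterm ω (ff c i.1.1 i.2) (gg ω c κ i.1.1 i.2) l x := by
    funext x; unfold rk rr; rw [Finset.sum_range]
  simp only
  rw [e]
  exact hp i

theorem EB_tk (hd : Dio ω c) (κ : ℝ) (j : ℕ) : EB (X1 (c := c) (κ := κ)) j (fun i => tk ω c κ i.1.1 i.2) := by
  have h := EB.sum (j := j) hX1 (PK_mm2 (c := c) (κ := κ) 0) ((EB_tterm hd κ j).reindex
    (fun i : (Σ i : Idx c κ, Fin (mm i.2 + 0)) => (⟨i.1, ⟨i.2 + 1, by omega⟩⟩ : Idx2 c κ)))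
  obtain ⟨p, hp⟩ := h
  refine ⟨p, fun i => ?_⟩
  have e : tk ω c κ i.1.1 i.2 = fun x => ∑ l : Fin (mm i.2 + 0), tterm ω (ff c i.1.1 i.2) (gg ω c κ i.1.1 i.2) (l+1) x := by
    funext x; unfold tk tt; rw [Finset.sum_range]; rfl
  simp only
  rw [e]
  exact hp i

end PartG

section PartH

variable {ω c κ : ℝ} {a : ℕ → ℝ}

def EM {ι : Type*} (X : ι → ℝ) (j : ℕ) (F : ι → ℝ → M2) : Prop := ∀ r s, EB X j (fun i x => F i x r s)

theorem EM.mul {ι : Type*} {X : ι → ℝ} (hX : ∀ i, 2 ≤ X i) {j : ℕ} {F G : ι → ℝ → M2} (h : EM X j F) (h' : EM X j G) :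
    EM X j (fun i x => F i x * G i x) := by
  intro r s
  simp only [Matrix.mul_apply, Fin.sum_univ_two]
  exact EB.add hX (EB.mul hX (h r 0) (h' 0 s)) (EB.mul hX (h r 1) (h' 1 s))

theorem EM.of {ι : Type*} {X : ι → ℝ} {j : ℕ} {F : ι → ℝ → M2} (h00 : EB X j (fun i x => F i x 0 0))
    (h01 : EB X j (fun i x => F i x 0 1)) (h10 : EB X j (fun i x => F i x 1 0)) (h11 : EB X j (fun i x => F i x 1 1)) :
    EM X j F := by
  intro r s; fin_cases r <;> fin_cases s <;> assumption

theorem EB.scale {ι : Type*} {X Y : ι → ℝ} {j : ℕ} {F : ι → ℝ → ℝ} (h : EB X j F) (h0 : ∀ i, 0 ≤ X i) (hXY : ∀ i, X i ≤ Y i) :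
    EB Y j F := by
  obtain ⟨p, hp⟩ := h
  refine ⟨p, fun i => (hp i).mono ?_⟩
  have := h0 i; have := hXY i
  gcongr

theorem EM.adj {ι : Type*} {X : ι → ℝ} {j : ℕ} {F : ι → ℝ → M2} (h : EM X j F) :
    EM X j (fun i x => (F i x).adjugate) := by
  apply EM.of <;> simp only [Matrix.adjugate_fin_two, Matrix.of_apply, Matrix.cons_val_zero, Matrix.cons_val_one, Matrix.cons_val', Matrix.cons_val_fin_one]
  · exact h 1 1
  · exact (h 0 1).neg
  · exact (h 1 0).neg
  · exact h 0 0

theorem EM.shift {ι : Type*} {X : ι → ℝ} {j : ℕ} {F : ι → ℝ → M2} (h : EM X j F) (b : ι → ℝ) :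
    EM X j (fun i x => F i (x + b i)) := fun r s => (h r s).shift b

theorem EM.uniform {ι : Type*} {X : ι → ℝ} (hX : ∀ i, 2 ≤ X i) {j : ℕ} {F : ι → ℝ → M2} (h : EM X j F) :
    ∃ p : ℕ, ∀ i r s, CB j (fun x => F i x r s) (Real.exp (X i ^ p)) := by
  choose p hp using h
  refine ⟨p 0 0 + p 0 1 + p 1 0 + p 1 1, fun i r s => (hp r s i).mono ?_⟩
  have : 1 ≤ X i := by linarith [hX i]
  apply Real.exp_le_exp.2
  apply pow_le_pow_right₀ this
  fin_cases r <;> fin_cases s <;> simp <;> omega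

theorem EM_Dmat {ι : Type*} {X : ι → ℝ} (hX : ∀ i, 2 ≤ X i) {j : ℕ} {F : ι → ℝ → ℝ} (h : PB X j F) :
    EM X j (fun i x => Dmat (F i x)) := by
  apply EM.of <;> simp only [Dmat, Matrix.of_apply, Matrix.cons_val_zero, Matrix.cons_val_one, Matrix.cons_val', Matrix.cons_val_fin_one]
  · exact EB.exp hX h
  · exact EB.one hX 0
  · exact EB.one hX 0
  · exact EB.exp hX h.neg

theorem EM_W (hd : Dio ω c) (κ : ℝ) (j : ℕ) : EM (X1 (c := c) (κ := κ)) j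
    (fun i y => Umat (rk ω c κ i.1.1 i.2 y) * Lmat (tk ω c κ i.1.1 i.2 y) * Dmat (ff c i.1.1 i.2 y / 2)) := by
  have h1 : EM (X1 (c := c) (κ := κ)) j (fun i y => Umat (rk ω c κ i.1.1 i.2 y)) := by
    apply EM.of <;> simp only [Umat, Matrix.of_apply, Matrix.cons_val_zero, Matrix.cons_val_one, Matrix.cons_val', Matrix.cons_val_fin_one]
    · exact EB.one hX1 1
    · exact EB_rk hd κ j
    · exact EB.one hX1 0
    · exact EB.one hX1 1
  have h2 : EM (X1 (c := c) (κ := κ)) j (fun i y => Lmat (tk ω c κ i.1.1 i.2 y)) := by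
    apply EM.of <;> simp only [Lmat, Matrix.of_apply, Matrix.cons_val_zero, Matrix.cons_val_one, Matrix.cons_val', Matrix.cons_val_fin_one]
    · exact EB.one hX1 1
    · exact EB.one hX1 0
    · exact EB_tk hd κ j
    · exact EB.one hX1 1
  have h3 : EM (X1 (c := c) (κ := κ)) j (fun i y => Dmat (ff c i.1.1 i.2 y / 2)) := by
    have := PB.const_mul hX1 (PK.const hX1 (1/2)) (PB_ff hd κ j)
    have h4 := EM_Dmat hX1 this
    simpa only [one_div, inv_mul_eq_div] using h4
  exact EM.mul hX1 (EM.mul hX1 h1 h2) h3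

theorem EM_VV (hd : Dio ω c) (κ : ℝ) (j : ℕ) : EM (X0 (c := c) (κ := κ)) j (fun i => VV ω c κ i.1.1 i.2) := by
  obtain ⟨p, hp⟩ := EM.uniform hX1 (EM_W hd κ j)
  suffices h : ∀ (a : {a // Adm c κ a}) k r s, CB j (fun x => VV ω c κ a k x r s) (Real.exp ((NN k : ℝ) ^ (j + p + 4))) by
    intro r s
    exact ⟨j + p + 4, fun i => h i.1 i.2 r s⟩
  intro a k
  induction k with
  | zero =>
    intro r s
    refine (CB.const j ((1 : M2) r s)).mono ?_
    have : |(1:M2) r s| ≤ 1 := by fin_cases r <;> fin_cases s <;> simp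
    exact this.trans (Real.one_le_exp (by positivity))
  | succ k ih =>
    intro r s
    have hW := hp (a, k)
    have h1 := ((ih r 0).mul (hW 0 s)).add ((ih r 1).mul (hW 1 s))
    simp only [VV]
    simp only [X1] at h1
    refine CB.mono (A := _) ?_ (?_ : 2^j * (Real.exp ((NN k : ℝ) ^ (j + p + 4)) * Real.exp ((NN (k+1) : ℝ) ^ p)) + 2^j * (Real.exp ((NN k : ℝ) ^ (j + p + 4)) * Real.exp ((NN (k+1) : ℝ) ^ p)) ≤ _)
    · convert h1 using 2 with x
      rw [Matrix.mul_apply, Fin.sum_univ_two]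
    · have h2 := pow_exp_le (NN_two' (k+1)) (j+1) p
      have h3 := grow (p := j + 1 + p + 1) (q := j + p + 4) (by positivity : (0:ℝ) ≤ NN k) (NN_step' k) (NN_four' k) (by omega)
      calc 2^j * (Real.exp ((NN k : ℝ) ^ (j + p + 4)) * Real.exp ((NN (k+1) : ℝ) ^ p)) + 2^j * (Real.exp ((NN k : ℝ) ^ (j + p + 4)) * Real.exp ((NN (k+1) : ℝ) ^ p))
          = Real.exp ((NN k : ℝ) ^ (j + p + 4)) * (2^(j+1) * Real.exp ((NN (k+1) : ℝ) ^ p)) := by rw [pow_succ]; ring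
        _ ≤ Real.exp ((NN k : ℝ) ^ (j + p + 4)) * ((NN (k+1) : ℝ)^(j+1) * Real.exp ((NN (k+1) : ℝ) ^ p)) := by
            have := NN_two' (k+1)
            gcongr
        _ ≤ Real.exp ((NN k : ℝ) ^ (j + p + 4)) * Real.exp ((NN (k+1) : ℝ) ^ (j+1+p+1)) := by gcongr
        _ ≤ _ := by rw [← Real.exp_add]; exact Real.exp_le_exp.2 h3

theorem EM_Dgg (hd : Dio ω c) (κ : ℝ) (j : ℕ) : EM (X0 (c := c) (κ := κ)) j (fun i y => Dmat (gg ω c κ i.1.1 i.2 y)) :=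
  EM_Dmat hX0 (PB_gg hd κ j)

theorem gg_contDiff (ω c κ : ℝ) (a : ℕ → ℝ) (k : ℕ) : ContDiff ℝ (⊤ : ℕ∞) (gg ω c κ a k) := by
  induction k with
  | zero => exact contDiff_const
  | succ k ih =>
    have := chi_contDiff c k
    simp only [gg, ff]
    fun_prop

theorem gg_int (ω c κ : ℝ) (a : ℕ → ℝ) (k : ℕ) : ∫ x in (0:ℝ)..1, gg ω c κ a k x = Lk c κ a k := by
  induction k with
  | zero => simp [gg, Lk]
  | succ k ih =>
    have hc := (chi_contDiff c k).continuous
    have hg := (gg_contDiff ω c κ a k).continuous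
    rw [Lk_succ, ← ih]
    have h1 : ∫ x in (0:ℝ)..1, ff c a k x / 2 = a k * II c k / 2 := by
      unfold ff II
      rw [intervalIntegral.integral_div, intervalIntegral.integral_const_mul]
    have h2 : ∫ x in (0:ℝ)..1, ff c a k (x + ω) / 2 = a k * II c k / 2 := by
      rw [← h1]
      exact pb_shift (F := fun x => ff c a k x / 2) (by intro x; simp only; rw [ff_periodic c a k x]) ω
    have hf : Continuous (ff c a k) := by unfold ff; fun_prop
    simp only [gg]
    rw [intervalIntegral.integral_sub, intervalIntegral.integral_sub, h1, h2]
    · ring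
    all_goals apply Continuous.intervalIntegrable; fun_prop

theorem CB.lip {F : ℝ → ℝ} {A : ℝ} (h : CB 1 F A) (x y : ℝ) : |F x - F y| ≤ A * |x - y| := by
  have := convex_univ.norm_image_sub_le_of_norm_deriv_le (f := F) (C := A) (x := y) (y := x)
    (fun z _ => (h.1.differentiable (by simp)).differentiableAt)
    (fun z _ => by have := h.2 1 le_rfl z; rwa [iteratedDeriv_one] at this) (Set.mem_univ _) (Set.mem_univ _)
  simpa [Real.norm_eq_abs] using this

theorem NN_ge' (k : ℕ) : (2:ℝ)^(k+1) ≤ NN k := by exact_mod_cast NN_ge k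
theorem NN_succ' (k : ℕ) : (NN (k+1) : ℝ) = (NN k : ℝ)^(k+2) := by simp [NN]

/-- Birkhoff sums of `gg k` over about `mm k` steps are large. -/
theorem SS_large (hd : Dio ω c) (hκ : 0 < κ) : ∃ K, ∀ a, Adm c κ a → ∀ k ≥ K, ∀ n : ℕ, mm k ≤ n → n ≤ mm k + 1 → ∀ y,
    Lk c κ a k * mm k / 2 ≤ SS ω (gg ω c κ a k) n y := by
  obtain ⟨p, hp⟩ := PB_gg hd κ 1
  obtain ⟨r, hr⟩ := exists_two_pow (2 * (4 * π / c + 2))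
  refine ⟨p + r, fun a ha k hk n hn1 hn2 y => ?_⟩
  have hc := hd.pos
  have hb := hp (⟨a, ha⟩, k)
  simp only [X0] at hb
  set x : ℝ := (NN k : ℝ) with hx
  set N : ℝ := (NN (k+1) : ℝ) with hN
  have hx2 : 2 ≤ x := NN_two' k
  have hN2 : 2 ≤ N := NN_two' (k+1)
  have h1 := pb_equi ω c hd.pos hd.sin_ge (gg_periodic ω c κ a k) hb.1.continuous hb.lip hb.abs_le (NN (k+1))
    (by have := NN_two (k+1); omega) n y
  rw [gg_int] at h1
  set L := Lk c κ a k
  have hL : (1/2)^k ≤ L := Lk_ge hd hκ ha k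
  refine le_trans ?_ h1
  rw [← hN]
  have hm : (mm k : ℝ) = N^2 := mm_cast k
  have hn1' : N^2 ≤ n := by rw [← hm]; exact_mod_cast hn1
  have hn2' : (n:ℝ) ≤ 2 * N^2 := by
    have : (n:ℝ) ≤ mm k + 1 := by exact_mod_cast hn2
    rw [hm] at this; nlinarith
  have hL0 : 0 < L := lt_of_lt_of_le (by positivity) hL
  -- key
  have hkey : 2 * (4 * π / c + 2) * x^p ≤ L * N := by
    have h2 : 2 * (4 * π / c + 2) * x^p * 2^k ≤ N := by
      calc 2 * (4 * π / c + 2) * x^p * 2^k ≤ x^r * x^p * x := by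
            have e1 : (2:ℝ)^k ≤ x := (pow_le_pow_right₀ (by norm_num) (by omega)).trans (NN_ge' k)
            have e2 : 2 * (4 * π / c + 2) ≤ x^r := hr.trans (pow_le_pow_left₀ (by norm_num) hx2 r)
            gcongr
        _ = x^(r+p+1) := by ring
        _ ≤ x^(k+2) := pow_le_pow_right₀ (by linarith) (by omega)
        _ = N := (NN_succ' k).symm
    have h3 : 2 * (4 * π / c + 2) * x^p ≤ (1/2)^k * N := by
      rw [one_div, inv_pow, inv_mul_eq_div, le_div_iff₀ (by positivity)]; exact h2
    exact h3.trans (by gcongr)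
  have h4 : 2 * x^p * n * π / (c * N) ≤ 4 * π / c * x^p * N := by
    rw [div_le_iff₀ (by positivity)]
    have : 4 * π / c * x^p * N * (c * N) = 2 * x^p * (2 * N^2) * π := by field_simp; ring
    rw [this]
    gcongr
  have h5 : N^2 * L ≤ n * L := by gcongr
  rw [hm]
  nlinarith [mul_le_mul_of_nonneg_right hkey (by linarith : (0:ℝ) ≤ N)]

theorem cut_aux (hd : Dio ω c) (κ : ℝ) (j : ℕ) (n : Idx c κ → ℕ) (hn2 : ∀ i, n i ≤ mm i.2 + 1)
    (b b' : Idx c κ → ℝ) (K : ℕ)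
    (hs : ∀ i : Idx c κ, K ≤ i.2 → ∀ y, Lk c κ i.1.1 i.2 * mm i.2 / 2 ≤ SS ω (gg ω c κ i.1.1 i.2) (n i) y) :
    ∃ p, ∀ i : Idx c κ, K ≤ i.2 →
      CB j (fun y => (Real.exp (ff c i.1.1 i.2 (y + b i)) - 1) * Real.exp (-2 * SS ω (gg ω c κ i.1.1 i.2) (n i) (y + b' i)))
        (X1 i ^ p * Real.exp (- X1 i)) := by
  have hf := (PB_ff hd κ j).shift b
  have hS := (((PB_SS hd κ j).reindex (fun i : Idx c κ => (⟨i, ⟨n i, by have := hn2 i; omega⟩⟩ : Idx2 c κ))).shift b')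
  have hS2 := PB.const_mul hX1 (PK.const hX1 (-2)) hS
  obtain ⟨p1, h1⟩ := PB.add hX1 hf hS2
  obtain ⟨p2, h2⟩ := hS2
  obtain ⟨r, hr⟩ := exists_two_pow (2 * j.factorial)
  refine ⟨r + (p1 + p2) * j, fun i hi => ?_⟩
  have hX := hX1 i
  have hbound : ∀ y, -2 * SS ω (gg ω c κ i.1.1 i.2) (n i) (y + b' i) ≤ - (Lk c κ i.1.1 i.2 * mm i.2) := by
    intro y; have := hs i hi (y + b' i); linarith
  have hlo := i.1.2.lo i.2
  have hhi := i.1.2.hi i.2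
  have hY : ∀ q, (1:ℝ) ≤ X1 i ^ q := fun q => one_le_pow₀ (by linarith)
  have e1 := (h1 i).exp (hY _) (σ := - X1 i) (fun y => by
    have := hbound y
    have h3 : ff c i.1.1 i.2 (y + b i) ≤ i.1.1 i.2 := by
      unfold ff
      have := chi_le_one c i.2 (y + b i)
      have := i.1.2.pos i.2
      nlinarith
    unfold X1
    linarith)
  have e2 := (h2 i).exp (hY _) (σ := - X1 i) (fun y => by
    have := hbound y
    have := i.1.2.pos i.2
    unfold X1
    linarith)
  refine CB.mono (A := _) ?_ (?_ : j.factorial * Real.exp (-X1 i) * (X1 i ^ p1)^j + j.factorial * Real.exp (-X1 i) * (X1 i ^ p2)^j ≤ _)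
  · convert e1.sub e2 using 2 with y
    rw [sub_mul, one_mul, ← Real.exp_add]
  · have l1 : (X1 i ^ p1)^j ≤ X1 i ^ ((p1+p2)*j) := by
      rw [← pow_mul]; exact pow_le_pow_right₀ (by linarith) (by gcongr; omega)
    have l2 : (X1 i ^ p2)^j ≤ X1 i ^ ((p1+p2)*j) := by
      rw [← pow_mul]; exact pow_le_pow_right₀ (by linarith) (by gcongr; omega)
    calc _ ≤ j.factorial * Real.exp (-X1 i) * X1 i ^ ((p1+p2)*j) + j.factorial * Real.exp (-X1 i) * X1 i ^ ((p1+p2)*j) := by gcongr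
      _ = 2 * j.factorial * X1 i ^ ((p1+p2)*j) * Real.exp (-X1 i) := by ring
      _ ≤ X1 i ^ r * X1 i ^ ((p1+p2)*j) * Real.exp (-X1 i) := by
        have : 2 * (j.factorial : ℝ) ≤ X1 i ^ r := hr.trans (pow_le_pow_left₀ (by norm_num) hX r)
        gcongr
      _ = _ := by rw [pow_add]

theorem cut_bound (hd : Dio ω c) (hκ : 0 < κ) (j : ℕ) : ∃ p K, ∀ i : Idx c κ, K ≤ i.2 →
    CB j (rhok ω c κ i.1.1 i.2) (X1 i ^ p * Real.exp (- X1 i)) ∧ CB j (taumk ω c κ i.1.1 i.2) (X1 i ^ p * Real.exp (- X1 i)) := by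
  obtain ⟨K, hK⟩ := SS_large hd hκ
  obtain ⟨p1, h1⟩ := cut_aux hd κ j (fun i => mm i.2 + 1) (fun _ => le_rfl) (fun i => (mm i.2 + 1 : ℕ) * ω) (fun _ => 0) K
    (fun i hi y => hK i.1.1 i.1.2 i.2 hi _ (by omega) le_rfl y)
  obtain ⟨p2, h2⟩ := cut_aux hd κ j (fun i => mm i.2) (fun _ => by omega) (fun i => -((mm i.2 : ℕ) * ω)) (fun i => -((mm i.2 : ℕ) * ω)) K
    (fun i hi y => hK i.1.1 i.1.2 i.2 hi _ le_rfl (by omega) y)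
  refine ⟨p1 + p2, K, fun i hi => ?_⟩
  have hX := hX1 i
  have hle : ∀ p, p ≤ p1 + p2 → X1 i ^ p * Real.exp (- X1 i) ≤ X1 i ^ (p1+p2) * Real.exp (- X1 i) := by
    intro p hp
    gcongr
    · linarith
  constructor
  · refine CB.mono ?_ (hle p1 (by omega))
    have := h1 i hi
    simp only [add_zero] at this
    exact this
  · exact CB.mono (h2 i hi) (hle p2 (by omega))

theorem PB_tauk (hd : Dio ω c) (κ : ℝ) (j : ℕ) : PB (X1 (c := c) (κ := κ)) j (fun i => tauk c i.1.1 i.2) := by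
  refine PB.sub hX1 (PB.const hX1 (PK.const hX1 1)) (PB.exp_neg hX1 (PB_ff hd κ j).neg ?_)
  intro i x
  have := mul_nonneg (i.1.2.pos i.2).le (chi_nonneg c i.2 x)
  unfold ff; linarith

end PartH

section PartI

variable {ω c κ : ℝ} {a : ℕ → ℝ}

theorem NN_tendsto : Tendsto (fun k => (NN k : ℝ)) atTop atTop := by
  refine tendsto_atTop_mono (fun k => ?_) tendsto_natCast_atTop_atTop
  have h1 := NN_ge k
  have h2 : k < 2^k := Nat.lt_two_pow_self
  have h3 : 2^(k+1) = 2 * 2^k := by ring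
  have : k ≤ NN k := by omega
  exact_mod_cast this

theorem growth1 (p : ℕ) (C : ℝ) : ∃ K, ∀ k ≥ K, C * (NN (k+1) : ℝ)^p * 2^k ≤ Real.exp (NN k) := by
  have h1 := (isLittleO_pow_log_id_atTop (n := 2)).bound (c := 1 / (4 * p + 2 + |C|)) (by positivity)
  have h2 := NN_tendsto.eventually h1
  have h3 := NN_tendsto.eventually (eventually_ge_atTop (Real.exp 1))
  obtain ⟨K, hK⟩ := eventually_atTop.1 (h2.and h3)
  refine ⟨K, fun k hk => ?_⟩
  obtain ⟨ha, hb⟩ := hK k hk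
  set x : ℝ := (NN k : ℝ) with hx
  have hx2 : 2 ≤ x := NN_two' k
  have hx0 : 0 < x := by linarith
  set l := Real.log x with hl
  have hl1 : 1 ≤ l := by rw [hl, Real.le_log_iff_exp_le hx0]; exact hb
  have hkl : (k:ℝ) ≤ 2 * l := by
    have e1 : (2:ℝ)^(k+1) ≤ x := NN_ge' k
    have e2 := Real.log_le_log (by positivity) e1
    rw [Real.log_pow] at e2
    have := Real.log_two_gt_d9
    push_cast at e2
    nlinarith
  simp only [id, Real.norm_eq_abs, abs_pow, abs_of_pos hx0, abs_of_nonneg (by linarith : (0:ℝ) ≤ l)] at ha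
  rw [one_div, inv_mul_eq_div, le_div_iff₀ (by positivity)] at ha
  have hC : C ≤ Real.exp (|C| * l^2) := by
    have : |C| ≤ |C| * l^2 := le_mul_of_one_le_right (abs_nonneg _) (one_le_pow₀ hl1)
    linarith [Real.add_one_le_exp (|C| * l^2), le_abs_self C]
  have h2k : (2:ℝ)^k ≤ x := (pow_le_pow_right₀ (by norm_num) (by omega)).trans (NN_ge' k)
  have hxl : x = Real.exp l := (Real.exp_log hx0).symm
  rw [NN_succ', ← hx]
  calc C * (x^(k+2))^p * 2^k ≤ Real.exp (|C| * l^2) * (x^(k+2))^p * x := by gcongr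
    _ = Real.exp (|C| * l^2 + ((k+2) * p * l) + l) := by
      rw [Real.exp_add, Real.exp_add]
      rw [← pow_mul, hxl, ← Real.exp_nat_mul]
      push_cast; ring_nf
    _ ≤ Real.exp x := by
      apply Real.exp_le_exp.2
      have hp : (0:ℝ) ≤ p := by positivity
      have e1 : (k+2) * (p:ℝ) * l ≤ (2*l + 2 * l) * p * l := by gcongr; linarith
      nlinarith

theorem growth2 (q p : ℕ) (C : ℝ) : ∃ K, ∀ k ≥ K, C * Real.exp (2 * (NN k : ℝ)^q) * (NN (k+1) : ℝ)^p * 2^k ≤ Real.exp (NN (k+1)) := by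
  have h1 : Tendsto (fun x : ℝ => 4 * |C| * ((2:ℝ)^(p+1) * ((x/2)^(p+1) * Real.exp (-(x/2))))) atTop (nhds (4 * |C| * ((2:ℝ)^(p+1) * 0))) := by
    refine Tendsto.const_mul _ (Tendsto.const_mul _ ?_)
    exact (tendsto_pow_mul_exp_neg_atTop_nhds_zero (p+1)).comp (tendsto_id.atTop_div_const (by norm_num))
  simp only [mul_zero] at h1
  have h2 := (NN_tendsto.comp (tendsto_add_atTop_nat 1)).eventually (h1.eventually (gt_mem_nhds zero_lt_one))
  obtain ⟨K, hK⟩ := eventually_atTop.1 h2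
  refine ⟨K + q, fun k hk => ?_⟩
  have h3 := hK k (by omega)
  simp only [Function.comp] at h3
  set x : ℝ := (NN k : ℝ) with hx
  set y : ℝ := (NN (k+1) : ℝ) with hy
  have hx2 : 2 ≤ x := NN_two' k
  have hy2 : 2 ≤ y := NN_two' (k+1)
  have h4 : 4 * x^q ≤ y := by
    rw [hy, NN_succ', ← hx]
    calc 4 * x^q ≤ x^2 * x^q := by gcongr; nlinarith
      _ = x^(q+2) := by ring
      _ ≤ x^(k+2) := pow_le_pow_right₀ (by linarith) (by omega)
  have h2k : (2:ℝ)^k ≤ y := (pow_le_pow_right₀ (by norm_num) (by omega)).trans (NN_ge' (k+1))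
  have h5 : C * y^(p+1) ≤ Real.exp (y/2) := by
    have e : (2:ℝ)^(p+1) * (y/2)^(p+1) = y^(p+1) := by rw [← mul_pow]; congr 1; ring
    have e2 : |C| * y^(p+1) * Real.exp (-(y/2)) < 1 := by
      have : 4 * |C| * (2 ^ (p + 1) * ((y / 2) ^ (p + 1) * Real.exp (-(y / 2)))) = 4 * (|C| * y^(p+1) * Real.exp (-(y/2))) := by
        rw [← e]; ring
      rw [this] at h3
      have : 0 ≤ |C| * y^(p+1) * Real.exp (-(y/2)) := by positivity
      linarith
    rw [Real.exp_neg, ← div_eq_mul_inv, div_lt_one (Real.exp_pos _)] at e2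
    have : C * y^(p+1) ≤ |C| * y^(p+1) := by gcongr; exact le_abs_self C
    linarith
  have h6 : Real.exp (2 * x^q) ≤ Real.exp (y/2) := Real.exp_le_exp.2 (by linarith)
  rcases le_or_gt C 0 with hC | hC
  · have : C * Real.exp (2 * x^q) * y^p * 2^k ≤ 0 := by
      have : 0 ≤ Real.exp (2 * x^q) * y^p * 2^k := by positivity
      nlinarith
    linarith [Real.exp_pos y]
  calc C * Real.exp (2 * x^q) * y^p * 2^k ≤ C * Real.exp (y/2) * y^p * y := by gcongr
    _ = (C * y^(p+1)) * Real.exp (y/2) := by ring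
    _ ≤ Real.exp (y/2) * Real.exp (y/2) := by gcongr
    _ = Real.exp y := by rw [← Real.exp_add]; congr 1; ring

theorem DD_zero (ω c κ : ℝ) (a : ℕ → ℝ) (y : ℝ) : DD ω c κ a 0 y = Dmat (κ+2) := by
  simp [DD, VV, gg]

theorem DN_abs (r s : Fin 2) : |(Dmat (κ+2) * Nmat) r s| ≤ Real.exp |κ+2| := by
  have h1 := le_abs_self (κ+2)
  have h2 := neg_le_abs (κ+2)
  fin_cases r <;> fin_cases s <;> simp [Dmat, Nmat, Matrix.mul_apply, Fin.sum_univ_two] <;> linarith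

theorem DD_step (hd : Dio ω c) (hκ : 0 < κ) (j : ℕ) : ∃ K, ∀ a, Adm c κ a → ∀ k ≥ K, ∀ r s,
    CB j (fun y => DD ω c κ a (k+1) y r s - DD ω c κ a k y r s) ((1/2)^k) := by
  obtain ⟨p1, h1⟩ := PB_tauk hd κ j
  obtain ⟨p2, K2, h2⟩ := cut_bound hd hκ j
  obtain ⟨q1, hP⟩ := EM.uniform hX0 (EM.mul hX0 ((EM_VV hd κ j).shift (fun _ => ω)) (EM_Dgg hd κ j))
  obtain ⟨q2, hQ⟩ := EM.uniform hX0 (EM_VV hd κ j).adj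
  obtain ⟨K3, h3⟩ := growth1 p1 (16 * Real.exp |κ+2|)
  obtain ⟨K4, h4⟩ := growth2 (q1+q2) p2 (4 * 4^j)
  refine ⟨K2 + K3 + K4, fun a ha k hk r s => ?_⟩
  have h1 := h1 (⟨a, ha⟩, k)
  obtain ⟨hρ, hτ⟩ := h2 (⟨a, ha⟩, k) (by simp only; omega)
  have hP := hP (⟨a, ha⟩, k)
  have hQ := hQ (⟨a, ha⟩, k)
  have h3 := h3 k (by omega)
  have h4 := h4 k (by omega)
  simp only [X0, X1] at *
  set x : ℝ := (NN k : ℝ) with hx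
  set y : ℝ := (NN (k+1) : ℝ) with hy
  have hx2 : 2 ≤ x := NN_two' k
  have hy2 : 2 ≤ y := NN_two' (k+1)
  -- main term
  have m1 : CB j (fun z => (EE a k * (Dmat (κ+2) * Nmat) r s) * tauk c a k z) ((1/2)^(k+1)) := by
    refine (h1.const_mul _).mono ?_
    have hE : 0 < EE a k := Real.exp_pos _
    rw [abs_mul, abs_of_pos hE]
    calc EE a k * |(Dmat (κ+2) * Nmat) r s| * y^p1 ≤ (8 * Real.exp (-x)) * Real.exp |κ+2| * y^p1 := by
          gcongr
          · exact EE_le ha k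
          · exact DN_abs r s
      _ = (16 * Real.exp |κ+2| * y^p1 * 2^k) * Real.exp (-x) * (1/2)^(k+1) := by
          have : (2:ℝ)^k * (1/2)^(k+1) = 1/2 := by rw [pow_succ, ← mul_assoc, ← mul_pow]; norm_num
          linear_combination (-(16 * Real.exp |κ+2| * y^p1 * Real.exp (-x))) * this
      _ ≤ Real.exp x * Real.exp (-x) * (1/2)^(k+1) := by gcongr
      _ = _ := by rw [← Real.exp_add]; simp
  have cutEst : ∀ {F G H : ℝ → ℝ}, CB j F (Real.exp (x^q1)) → CB j G (y ^ p2 * Real.exp (-y)) → CB j H (Real.exp (x^q2)) →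
      CB j (fun z => F z * G z * H z) ((1/2)^(k+2)) := by
    intro F G H hF hG hH
    refine ((hF.mul hG).mul hH).mono ?_
    have e1 : Real.exp (x^q1) * Real.exp (x^q2) ≤ Real.exp (2 * x^(q1+q2)) := by
      rw [← Real.exp_add]; apply Real.exp_le_exp.2
      have := pow_le_pow_right₀ (by linarith : 1 ≤ x) (show q1 ≤ q1 + q2 by omega)
      have := pow_le_pow_right₀ (by linarith : 1 ≤ x) (show q2 ≤ q1 + q2 by omega)
      linarith
    have e4 : (4:ℝ)^j = 2^j * 2^j := by rw [← mul_pow]; norm_num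
    calc 2^j * (2^j * (Real.exp (x^q1) * (y ^ p2 * Real.exp (-y))) * Real.exp (x^q2))
        = 4^j * (Real.exp (x^q1) * Real.exp (x^q2)) * y^p2 * Real.exp (-y) := by rw [e4]; ring
      _ ≤ 4^j * Real.exp (2 * x^(q1+q2)) * y^p2 * Real.exp (-y) := by gcongr
      _ = (4 * 4^j * Real.exp (2 * x^(q1+q2)) * y^p2 * 2^k) * Real.exp (-y) * (1/2)^(k+2) := by
          have : (2:ℝ)^k * (1/2)^(k+2) = 1/4 := by rw [pow_add, ← mul_assoc, ← mul_pow]; norm_num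
          linear_combination (-(4 * 4^j * Real.exp (2 * x^(q1+q2)) * y^p2 * Real.exp (-y))) * this
      _ ≤ Real.exp y * Real.exp (-y) * (1/2)^(k+2) := by gcongr
      _ = _ := by rw [← Real.exp_add]; simp
  have c1 := cutEst (hP r 0) hρ (hQ 1 s)
  have c2 := cutEst (hP r 1) hτ (hQ 0 s)
  refine CB.mono (A := _) ?_ (?_ : (1/2)^(k+1) + ((1/2)^(k+2) + (1/2)^(k+2)) ≤ ((1/2)^k : ℝ))
  · convert m1.add (c1.sub c2) using 2 with z
    rw [DD_succ hd (fun i => (ha.pos i).ne') k z, DD_zero]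
    generalize VV ω c κ a k (z + ω) * Dmat (gg ω c κ a k z) = P
    generalize (VV ω c κ a k z).adjugate = Q
    simp only [Matrix.add_apply, Matrix.smul_apply, smul_eq_mul]
    rw [Matrix.mul_apply (M := P * _) (N := Q), Fin.sum_univ_two, Matrix.mul_apply (M := P), Matrix.mul_apply (M := P), Fin.sum_univ_two, Fin.sum_univ_two]
    simp only [Cut, Matrix.of_apply, Matrix.cons_val_zero, Matrix.cons_val_one, Matrix.cons_val', Matrix.cons_val_fin_one]
    ring
  · rw [pow_succ, pow_add]; apply le_of_eq; ring

end PartI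

section PartJ

variable {ω c κ : ℝ} {a : ℕ → ℝ}

theorem tsum_CB_smooth {Z : ℕ → ℝ → ℝ} (hZ : ∀ k, ContDiff ℝ (⊤ : ℕ∞) (Z k))
    (h : ∀ j, ∃ K, ∀ k ≥ K, CB j (Z k) ((1/2)^k)) : ContDiff ℝ (⊤ : ℕ∞) (fun y => ∑' k, Z k y) := by
  refine contDiff_tsum_of_eventually (v := fun _ k => (1/2)^k) hZ (fun _ _ => summable_geometric_of_lt_one (by norm_num) (by norm_num)) ?_
  intro j _
  obtain ⟨K, hK⟩ := h j
  rw [Nat.cofinite_eq_atTop]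
  filter_upwards [eventually_ge_atTop K] with k hk x
  rw [norm_iteratedFDeriv_eq_norm_iteratedDeriv]
  exact (hK k hk).2 j le_rfl x

theorem tsum_CB_tail {Z : ℕ → ℝ → ℝ} (hs : ContDiff ℝ (⊤ : ℕ∞) (fun y => ∑' k, Z k y)) {j n : ℕ} 
    (h : ∀ k, CB j (Z k) ((1/2)^(k+n))) : CB j (fun y => ∑' k, Z k y) (2 * (1/2)^n) := by
  refine ⟨hs, fun i hi x => ?_⟩
  have hsum : HasSum (fun k : ℕ => ((1:ℝ)/2)^(k+n)) (2 * (1/2)^n) := by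
    have := hasSum_geometric_two.mul_right (((1:ℝ)/2)^n)
    simpa only [pow_add] using this
  rw [← norm_iteratedFDeriv_eq_norm_iteratedDeriv,
    iteratedFDeriv_tsum_apply (N := (j : ℕ∞)) (v := fun _ k => (1/2)^(k+n)) (fun k => (h k).1.of_le (by exact_mod_cast le_top))
      (fun _ _ => hsum.summable) (fun l k x hl => by
        rw [norm_iteratedFDeriv_eq_norm_iteratedDeriv]; exact (h k).2 l (by exact_mod_cast hl) x) (by exact_mod_cast hi)]
  refine tsum_of_norm_bounded hsum fun k => ?_
  rw [norm_iteratedFDeriv_eq_norm_iteratedDeriv]; exact (h k).2 i hi x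

theorem EM_DD (hd : Dio ω c) (κ : ℝ) (j : ℕ) : EM (X0 (c := c) (κ := κ)) j (fun i => DD ω c κ i.1.1 i.2) :=
  EM.mul hX0 (EM.mul hX0 ((EM_VV hd κ j).shift (fun _ => ω)) (EM_Dgg hd κ j)) (EM_VV hd κ j).adj

theorem DD_smooth (hd : Dio ω c) (ha : Adm c κ a) (k : ℕ) (r s : Fin 2) :
    ContDiff ℝ (⊤ : ℕ∞) (fun y => DD ω c κ a k y r s) := by
  obtain ⟨p, hp⟩ := EM_DD hd κ 0 r s
  exact (hp (⟨a, ha⟩, k)).1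

noncomputable def Dinf (ω c κ : ℝ) (a : ℕ → ℝ) (y : ℝ) : M2 :=
  Matrix.of fun r s => DD ω c κ a 0 y r s + ∑' k, (DD ω c κ a (k+1) y r s - DD ω c κ a k y r s)

theorem DD_summable (hd : Dio ω c) (hκ : 0 < κ) (ha : Adm c κ a) (y : ℝ) (r s : Fin 2) :
    Summable (fun k => (DD ω c κ a (k+1) y r s - DD ω c κ a k y r s)) := by
  obtain ⟨K, hK⟩ := DD_step hd hκ 0
  rw [← summable_nat_add_iff K]
  refine Summable.of_norm_bounded (g := fun k : ℕ => ((1:ℝ)/2)^(k+K)) ?_ ?_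
  · rw [summable_nat_add_iff K (f := fun k : ℕ => ((1:ℝ)/2)^k)]
    exact summable_geometric_of_lt_one (by norm_num) (by norm_num)
  · intro k; exact (hK a ha (k+K) (by omega) r s).abs_le y

theorem Dinf_sub (hd : Dio ω c) (hκ : 0 < κ) (ha : Adm c κ a) (k : ℕ) (y : ℝ) (r s : Fin 2) :
    Dinf ω c κ a y r s - DD ω c κ a k y r s = ∑' i, (DD ω c κ a (i+k+1) y r s - DD ω c κ a (i+k) y r s) := by
  have h1 := (DD_summable hd hκ ha y r s).sum_add_tsum_nat_add k
  rw [Finset.sum_range_sub (fun i => DD ω c κ a i y r s)] at h1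
  simp only [Dinf, Matrix.of_apply]
  linarith

theorem Dinf_close (hd : Dio ω c) (hκ : 0 < κ) (j : ℕ) : ∃ K, ∀ a, Adm c κ a → ∀ k ≥ K, ∀ r s,
    CB j (fun y => Dinf ω c κ a y r s - DD ω c κ a k y r s) (2 * (1/2)^k) := by
  obtain ⟨K, hK⟩ := DD_step hd hκ j
  refine ⟨K, fun a ha k hk r s => ?_⟩
  simp only [Dinf_sub hd hκ ha k]
  apply tsum_CB_tail
  · refine tsum_CB_smooth (Z := fun i y => (DD ω c κ a (i+k+1) y r s - DD ω c κ a (i+k) y r s)) (fun i => (DD_smooth hd ha _ r s).sub (DD_smooth hd ha _ r s)) ?_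
    intro j
    obtain ⟨K, hK⟩ := DD_step hd hκ j
    refine ⟨K, fun i hi => (hK a ha (i+k) (by omega) r s).mono ?_⟩
    exact pow_le_pow_of_le_one (by norm_num) (by norm_num) (by omega)
  · intro i
    exact hK a ha (i+k) (by omega) r s

theorem Dinf_smooth (hd : Dio ω c) (hκ : 0 < κ) (ha : Adm c κ a) (r s : Fin 2) :
    ContDiff ℝ (⊤ : ℕ∞) (fun y => Dinf ω c κ a y r s) := by
  obtain ⟨K, hK⟩ := Dinf_close hd hκ 0
  have := (hK a ha K le_rfl r s).1.add (DD_smooth hd ha K r s)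
  simpa using this

theorem Dinf_periodic (ω c κ : ℝ) (a : ℕ → ℝ) : Function.Periodic (Dinf ω c κ a) 1 := by
  intro y
  unfold Dinf
  simp only [DD_periodic ω c κ a _ y]

theorem Dinf_tendsto (hd : Dio ω c) (hκ : 0 < κ) (ha : Adm c κ a) (y : ℝ) :
    Tendsto (fun k => DD ω c κ a k y) atTop (nhds (Dinf ω c κ a y)) := by
  refine tendsto_pi_nhds.2 fun r => tendsto_pi_nhds.2 fun s => ?_
  have h := (DD_summable hd hκ ha y r s).hasSum.tendsto_sum_nat
  have h2 := h.const_add (DD ω c κ a 0 y r s)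
  refine h2.congr fun k => ?_
  rw [Finset.sum_range_sub (fun i => DD ω c κ a i y r s)]; ring

theorem Dinf_det (hd : Dio ω c) (hκ : 0 < κ) (ha : Adm c κ a) (y : ℝ) : (Dinf ω c κ a y).det = 1 := by
  have h1 := ((continuous_id.matrix_det).tendsto (Dinf ω c κ a y)).comp (Dinf_tendsto hd hκ ha y)
  have h2 : Tendsto (fun _ : ℕ => (1:ℝ)) atTop (nhds (Dinf ω c κ a y).det) := by
    refine h1.congr fun k => ?_
    simp [det_DD]
  exact tendsto_nhds_unique h2 tendsto_const_nhds

end PartJ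

section PartK

variable {ω c κ : ℝ}

noncomputable def aOf (b : Bool) (L : ℝ) (k : ℕ) : ℝ := if b then L * mm k / 2 else (NN (k+1) : ℝ)

noncomputable def Lrec (c κ : ℝ) (s : ℕ → Bool) : ℕ → ℝ
  | 0 => κ + 2
  | k + 1 => Lrec c κ s k - aOf (s k) (Lrec c κ s k) k * II c k

noncomputable def seqA (c κ : ℝ) (s : ℕ → Bool) (k : ℕ) : ℝ := aOf (s k) (Lrec c κ s k) k

theorem Lk_seqA (c κ : ℝ) (s : ℕ → Bool) (k : ℕ) : Lk c κ (seqA c κ s) k = Lrec c κ s k := by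
  induction k with
  | zero => simp [Lk, Lrec]
  | succ k ih => rw [Lk_succ, ih]; simp only [Lrec, seqA]

theorem aOf_lo {L : ℝ} {k : ℕ} (hL : (1/2)^k ≤ L) : (NN (k+1) : ℝ) ≤ L * mm k / 2 := by
  rw [mm_cast]
  have h1 := NN_ge' (k+1)
  have h3 : 2 ≤ L * NN (k+1) := by
    calc (2:ℝ) ≤ (1/2)^k * 2^(k+1+1) := by
          rw [pow_succ, pow_succ, ← mul_assoc, ← mul_assoc, ← mul_pow]; norm_num
      _ ≤ L * NN (k+1) := by gcongr; exact le_trans (by positivity) hL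
  have := NN_two' (k+1)
  nlinarith

theorem aOf_hi {L : ℝ} {k : ℕ} (hL : (1/2)^k ≤ L) (b : Bool) : aOf b L k ≤ L * mm k / 2 := by
  unfold aOf; split_ifs
  · exact le_rfl
  · exact aOf_lo hL

theorem Lrec_ge (hd : Dio ω c) (hκ : 0 < κ) (s : ℕ → Bool) (k : ℕ) : (1/2)^k ≤ Lrec c κ s k := by
  induction k with
  | zero => simp [Lrec]; linarith
  | succ k ih =>
    simp only [Lrec]
    have h0 : 0 ≤ Lrec c κ s k := le_trans (by positivity) ih
    have h1 := Lk_half hd _ h0 k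
    have h2 : aOf (s k) (Lrec c κ s k) k * II c k ≤ (Lrec c κ s k * mm k / 2) * II c k :=
      mul_le_mul_of_nonneg_right (aOf_hi ih _) (II_nonneg c k)
    rw [pow_succ]
    linarith

theorem seqA_adm (hd : Dio ω c) (hκ : 0 < κ) (s : ℕ → Bool) : Adm c κ (seqA c κ s) := by
  refine ⟨fun i => ?_, fun i => ?_⟩
  · have h := Lrec_ge hd hκ s i
    unfold seqA aOf; split_ifs
    · exact aOf_lo h
    · exact le_rfl
  · rw [Lk_seqA]; exact aOf_hi (Lrec_ge hd hκ s i) _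

theorem Lrec_initseg {s t : ℕ → Bool} (k : ℕ) (h : ∀ i < k, s i = t i) : Lrec c κ s k = Lrec c κ t k := by
  induction k with
  | zero => rfl
  | succ k ih => simp only [Lrec]; rw [ih (fun i hi => h i (by omega)), h k (by omega)]

theorem seqA_initseg {s t : ℕ → Bool} (k : ℕ) (h : ∀ i < k, s i = t i) : ∀ i < k, seqA c κ s i = seqA c κ t i := by
  intro i hi
  unfold seqA
  rw [Lrec_initseg i (fun l hl => h l (by omega)), h i hi]

theorem Lk_false (hd : Dio ω c) (κ : ℝ) (k : ℕ) : κ ≤ Lk c κ (seqA c κ (fun _ => false)) k := by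
  have h : κ + 1 + (1/2)^k ≤ Lk c κ (seqA c κ (fun _ => false)) k := by
    induction k with
    | zero => simp [Lk]; linarith
    | succ k ih =>
      rw [Lk_succ]
      have h1 : seqA c κ (fun _ => false) k * II c k ≤ (1/2)^(k+1) := by
        have e : seqA c κ (fun _ => false) k = NN (k+1) := by simp [seqA, aOf]
        rw [e]
        have h2 := II_le hd k
        rw [mm_cast] at h2
        have h3 := NN_ge' (k+1)
        have h4 := NN_two' (k+1)
        calc (NN (k+1) : ℝ) * II c k ≤ NN (k+1) * (1 / (NN (k+1) : ℝ)^2) := by gcongr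
          _ = 1 / NN (k+1) := by field_simp
          _ ≤ 1 / 2^(k+1+1) := by gcongr
          _ ≤ 1 / 2^(k+1) := by gcongr <;> norm_num
          _ = _ := by rw [one_div_pow]
      have : ((1:ℝ)/2)^k = (1/2)^(k+1) + (1/2)^(k+1) := by rw [pow_succ]; ring
      linarith
  have : (0:ℝ) ≤ (1/2)^k := by positivity
  linarith

theorem Lk_true (hd : Dio ω c) (hκ : 0 < κ) (s : ℕ → Bool) (k0 : ℕ) (hs : ∀ i ≥ k0, s i = true) :
    Tendsto (fun k => Lk c κ (seqA c κ s) k) atTop (nhds 0) := by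
  have hc := hd.pos
  have hc1 := hd.le_one
  have hstep : ∀ n, Lk c κ (seqA c κ s) (n + k0) ≤ Lk c κ (seqA c κ s) k0 * (1 - c/96)^n := by
    intro n
    induction n with
    | zero => simp
    | succ n ih =>
      rw [show n + 1 + k0 = (n + k0) + 1 by ring, Lk_succ]
      have e : seqA c κ s (n+k0) = Lk c κ (seqA c κ s) (n+k0) * mm (n+k0) / 2 := by
        rw [Lk_seqA]; simp [seqA, aOf, hs (n+k0) (by omega)]
      have hp := Lk_pos hd hκ (seqA_adm hd hκ s) (n+k0)
      rw [e]
      set L := Lk c κ (seqA c κ s) (n+k0)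
      have h1 := II_ge hd (n+k0)
      have h2 := mm_pos' (n+k0)
      have h3 : c/48 ≤ mm (n+k0) * II c (n+k0) := by
        rw [div_le_iff₀ (by positivity)] at h1
        linarith
      have h4 : L * (c/48) ≤ L * (mm (n+k0) * II c (n+k0)) := by gcongr
      calc L - L * mm (n+k0) / 2 * II c (n+k0) ≤ L * (1 - c/96) := by linarith
        _ ≤ (Lk c κ (seqA c κ s) k0 * (1 - c/96)^n) * (1 - c/96) := by
          gcongr; linarith
        _ = _ := by rw [pow_succ]; ring
  rw [← tendsto_add_atTop_iff_nat k0]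
  refine squeeze_zero (fun n => (Lk_pos hd hκ (seqA_adm hd hκ s) _).le) hstep ?_
  have := (tendsto_pow_atTop_nhds_zero_of_lt_one (r := 1 - c/96) (by linarith) (by linarith)).const_mul (Lk c κ (seqA c κ s) k0)
  simpa using this

end PartK

section PartL

variable {ω : ℝ}

theorem opNorm_nonneg (A : M2) : 0 ≤ opNorm A := norm_nonneg _

theorem opNorm_mul (A B : M2) : opNorm (A * B) ≤ opNorm A * opNorm B := by
  unfold opNorm; rw [map_mul]; exact norm_mul_le _ _

theorem opNorm_one : opNorm (1 : M2) = 1 := by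
  unfold opNorm; rw [map_one]; exact norm_one

theorem opNorm_add (A B : M2) : opNorm (A + B) ≤ opNorm A + opNorm B := by
  unfold opNorm; rw [map_add]; exact norm_add_le _ _

theorem opNorm_continuous : Continuous opNorm := by
  unfold opNorm
  have : Continuous (fun A : M2 => (Matrix.toEuclideanCLM (n := Fin 2) (𝕜 := ℝ) A)) :=
    LinearMap.continuous_of_finiteDimensional ((Matrix.toEuclideanCLM (n := Fin 2) (𝕜 := ℝ)).toAlgEquiv.toLinearMap)
  exact this.norm

theorem opNorm_col (A : M2) (s : Fin 2) : (A 0 s)^2 + (A 1 s)^2 ≤ (opNorm A)^2 := by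
  have h := (Matrix.toEuclideanCLM (n := Fin 2) (𝕜 := ℝ) A).le_opNorm (EuclideanSpace.single s (1:ℝ))
  rw [EuclideanSpace.norm_single, norm_one, mul_one] at h
  have h2 := pow_le_pow_left₀ (norm_nonneg _) h 2
  rw [EuclideanSpace.norm_sq_eq, Fin.sum_univ_two] at h2
  have e : ∀ r, (Matrix.toEuclideanCLM (n := Fin 2) (𝕜 := ℝ) A (EuclideanSpace.single s (1:ℝ))) r = A r s := by
    intro r
    simp [Matrix.ofLp_toEuclideanCLM]
  rw [e, e, Real.norm_eq_abs, Real.norm_eq_abs, sq_abs, sq_abs] at h2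
  exact h2

theorem entry_le (A : M2) (r s : Fin 2) : |A r s| ≤ opNorm A := by
  apply abs_le_of_sq_le_sq _ (opNorm_nonneg A)
  have h := opNorm_col A s
  fin_cases r
  · simp only [Fin.zero_eta]; nlinarith [sq_nonneg (A 1 s)]
  · simp only [Fin.mk_one]; nlinarith [sq_nonneg (A 0 s)]

theorem opNorm_le {A : M2} {B : ℝ} (h : ∀ r s, |A r s| ≤ B) : opNorm A ≤ 4 * B := by
  have hB : 0 ≤ B := (abs_nonneg _).trans (h 0 0)
  unfold opNorm
  refine ContinuousLinearMap.opNorm_le_bound _ (by positivity) fun x => ?_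
  have hx : ∀ i, |x i| ≤ ‖x‖ := fun i => by simpa using PiLp.norm_apply_le x i
  have e : ∀ r, (Matrix.toEuclideanCLM (n := Fin 2) (𝕜 := ℝ) A x) r = A r 0 * x 0 + A r 1 * x 1 := by
    intro r
    simp [Matrix.ofLp_toEuclideanCLM, Matrix.mulVec, dotProduct, Fin.sum_univ_two]
  have hr : ∀ r, |(Matrix.toEuclideanCLM (n := Fin 2) (𝕜 := ℝ) A x) r| ≤ 2 * B * ‖x‖ := by
    intro r
    rw [e]
    refine (abs_add_le _ _).trans ?_
    rw [abs_mul, abs_mul]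
    have := mul_le_mul (h r 0) (hx 0) (abs_nonneg _) hB
    have := mul_le_mul (h r 1) (hx 1) (abs_nonneg _) hB
    linarith
  rw [← abs_of_nonneg (norm_nonneg (Matrix.toEuclideanCLM (n := Fin 2) (𝕜 := ℝ) A x))]
  apply abs_le_of_sq_le_sq _ (by positivity)
  rw [EuclideanSpace.norm_sq_eq, Fin.sum_univ_two, Real.norm_eq_abs, Real.norm_eq_abs]
  have h0 := pow_le_pow_left₀ (abs_nonneg _) (hr 0) 2
  have h1 := pow_le_pow_left₀ (abs_nonneg _) (hr 1) 2
  nlinarith [sq_nonneg (B * ‖x‖)]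

theorem opNorm_adj (A : M2) : opNorm A.adjugate ≤ 4 * opNorm A := by
  apply opNorm_le
  intro r s
  rw [Matrix.adjugate_fin_two]
  fin_cases r <;> fin_cases s <;> simp [entry_le]

theorem opNorm_ge_one {A : M2} (h : A.det = 1) : 1 ≤ opNorm A := by
  have h0 := opNorm_col A 0
  have h1 := opNorm_col A 1
  rw [Matrix.det_fin_two] at h
  by_contra hc
  push Not at hc
  have hn := opNorm_nonneg A
  have h2 : (opNorm A)^2 < 1 := by nlinarith
  nlinarith [sq_nonneg (A 0 0 - A 1 1), sq_nonneg (A 0 1 + A 1 0)]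

structure Coc (A : ℝ → M2) : Prop where
  per : Function.Periodic A 1
  cont : Continuous A
  det : ∀ x, (A x).det = 1

theorem coc_det {A : ℝ → M2} (h : Coc A) (n : ℕ) (x : ℝ) : (cocycle ω A n x).det = 1 := by
  induction n with
  | zero => simp [cocycle]
  | succ n ih => simp [cocycle, Matrix.det_mul, h.det, ih]

theorem coc_cont {A : ℝ → M2} (h : Coc A) (n : ℕ) : Continuous (cocycle ω A n) := by
  induction n with
  | zero => exact continuous_const
  | succ n ih =>
    have := h.cont
    show Continuous (fun x => A (x + n * ω) * cocycle ω A n x)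
    fun_prop

theorem coc_per {A : ℝ → M2} (h : Coc A) (n : ℕ) : Function.Periodic (cocycle ω A n) 1 := by
  induction n with
  | zero => intro x; rfl
  | succ n ih =>
    intro x
    simp only [cocycle]
    rw [ih x, show x + 1 + n * ω = x + n * ω + 1 by ring, h.per]

theorem coc_add (A : ℝ → M2) (m n : ℕ) (x : ℝ) : cocycle ω A (m + n) x = cocycle ω A m (x + n * ω) * cocycle ω A n x := by
  induction m with
  | zero => simp [cocycle]
  | succ m ih =>
    rw [show m + 1 + n = (m + n) + 1 by ring]
    simp only [cocycle]
    rw [ih, ← mul_assoc]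
    congr 3
    push_cast; ring

noncomputable def phi (ω : ℝ) (A : ℝ → M2) (n : ℕ) (x : ℝ) : ℝ := Real.log (opNorm (cocycle ω A n x))
noncomputable def uu (ω : ℝ) (A : ℝ → M2) (n : ℕ) : ℝ := ∫ x in (0:ℝ)..1, phi ω A n x

theorem phi_nonneg {A : ℝ → M2} (h : Coc A) (n : ℕ) (x : ℝ) : 0 ≤ phi ω A n x :=
  Real.log_nonneg (opNorm_ge_one (coc_det h n x))

theorem phi_cont {A : ℝ → M2} (h : Coc A) (n : ℕ) : Continuous (phi ω A n) := by
  refine Continuous.log (opNorm_continuous.comp (coc_cont h n)) fun x => ?_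
  have := opNorm_ge_one (coc_det (ω := ω) h n x)
  linarith

theorem phi_per {A : ℝ → M2} (h : Coc A) (n : ℕ) : Function.Periodic (phi ω A n) 1 := by
  intro x; unfold phi; rw [coc_per h n x]

theorem log_mul_le {A B : M2} (hA : A.det = 1) (hB : B.det = 1) :
    Real.log (opNorm (A * B)) ≤ Real.log (opNorm A) + Real.log (opNorm B) := by
  have h1 := opNorm_ge_one hA
  have h2 := opNorm_ge_one hB
  have h3 : 1 ≤ opNorm (A * B) := opNorm_ge_one (by rw [Matrix.det_mul, hA, hB, one_mul])
  rw [← Real.log_mul (by linarith) (by linarith)]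
  exact Real.log_le_log (by linarith) (opNorm_mul A B)

theorem phi_add {A : ℝ → M2} (h : Coc A) (m n : ℕ) (x : ℝ) : phi ω A (m+n) x ≤ phi ω A m (x + n*ω) + phi ω A n x := by
  unfold phi
  rw [coc_add]
  exact log_mul_le (coc_det h _ _) (coc_det h _ _)

theorem uu_sub {A : ℝ → M2} (h : Coc A) : Subadditive (uu ω A) := by
  intro m n
  unfold uu
  rw [← pb_shift (phi_per h m) (n*ω), ← intervalIntegral.integral_add]
  · apply intervalIntegral.integral_mono_on (by norm_num)
    · exact (phi_cont h _).intervalIntegrable _ _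
    · apply Continuous.intervalIntegrable
      have := phi_cont (ω := ω) h m
      have := phi_cont (ω := ω) h n
      fun_prop
    · intro x _; exact phi_add h m n x
  · apply Continuous.intervalIntegrable
    have := phi_cont (ω := ω) h m
    fun_prop
  · exact (phi_cont h _).intervalIntegrable _ _

theorem uu_nonneg {A : ℝ → M2} (h : Coc A) (n : ℕ) : 0 ≤ uu ω A n :=
  intervalIntegral.integral_nonneg (by norm_num) fun x _ => phi_nonneg h n x

theorem uu_bdd {A : ℝ → M2} (h : Coc A) : BddBelow (Set.range fun n => uu ω A n / n) :=
  ⟨0, by rintro _ ⟨n, rfl⟩; exact div_nonneg (uu_nonneg h n) (by positivity)⟩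

theorem LEn_eq (A : ℝ → M2) (n : ℕ) : LEn ω A n = uu ω A n / n := by
  unfold LEn uu phi; rw [one_div, inv_mul_eq_div]

theorem LEn_tendsto {A : ℝ → M2} (h : Coc A) : Tendsto (fun m => LEn ω A m) atTop (nhds (uu_sub (ω := ω) h).lim) := by
  simp only [LEn_eq]
  exact (uu_sub h).tendsto_lim (uu_bdd h)

theorem lim_nonneg' {A : ℝ → M2} (h : Coc A) : 0 ≤ (uu_sub (ω := ω) h).lim :=
  ge_of_tendsto' ((uu_sub h).tendsto_lim (uu_bdd h)) fun n => div_nonneg (uu_nonneg h n) (by positivity)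

theorem phi_le {A : ℝ → M2} (h : Coc A) {B : ℝ} (hB : ∀ x, opNorm (A x) ≤ B) (n : ℕ) (x : ℝ) : phi ω A n x ≤ n * Real.log B := by
  induction n with
  | zero => simp [phi, cocycle, opNorm_one]
  | succ n ih =>
    have h1 : phi ω A (n+1) x ≤ Real.log (opNorm (A (x + n*ω))) + phi ω A n x := by
      unfold phi; simp only [cocycle]
      exact log_mul_le (h.det _) (coc_det h _ _)
    have h2 := Real.log_le_log (by linarith [opNorm_ge_one (h.det (x + n*ω))]) (hB (x + n * ω))
    push_cast
    linarith

end PartL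

section PartM

variable {ω c κ : ℝ} {a : ℕ → ℝ}

theorem m2_cont {A : ℝ → M2} (h : ∀ r s, Continuous (fun y => A y r s)) : Continuous A :=
  continuous_pi fun r => continuous_pi fun s => h r s

theorem Coc_DD (hd : Dio ω c) (ha : Adm c κ a) (k : ℕ) : Coc (DD ω c κ a k) :=
  ⟨DD_periodic ω c κ a k, m2_cont fun r s => (DD_smooth hd ha k r s).continuous, det_DD ω c κ a k⟩

theorem Coc_Dinf (hd : Dio ω c) (hκ : 0 < κ) (ha : Adm c κ a) : Coc (Dinf ω c κ a) :=
  ⟨Dinf_periodic ω c κ a, m2_cont fun r s => (Dinf_smooth hd hκ ha r s).continuous, Dinf_det hd hκ ha⟩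

theorem coc_DD (ω c κ : ℝ) (a : ℕ → ℝ) (k n : ℕ) (x : ℝ) : cocycle ω (DD ω c κ a k) n x =
    VV ω c κ a k (x + n * ω) * Dmat (SS ω (gg ω c κ a k) n x) * (VV ω c κ a k x).adjugate := by
  induction n with
  | zero =>
    have : Dmat 0 = 1 := by unfold Dmat; apply m2_ext <;> simp
    simp [cocycle, SS, this, VV_mul_adj]
  | succ n ih =>
    simp only [cocycle]
    rw [ih, SS_succ, add_comm (SS ω _ n x), Dmat_add, DD,
      show x + n * ω + ω = x + (n+1 : ℕ) * ω by push_cast; ring]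
    have := adj_mul_VV ω c κ a k (x + n*ω)
    simp only [mul_assoc]
    rw [← mul_assoc (VV ω c κ a k (x + n*ω)).adjugate, this, one_mul]

theorem SS_int (ω c κ : ℝ) (a : ℕ → ℝ) (k n : ℕ) : ∫ x in (0:ℝ)..1, SS ω (gg ω c κ a k) n x = n * Lk c κ a k := by
  have hg := (gg_contDiff ω c κ a k).continuous
  unfold SS
  rw [intervalIntegral.integral_finset_sum]
  · simp only [pb_shift (gg_periodic ω c κ a k), gg_int]
    simp
  · intro i _
    apply Continuous.intervalIntegrable; fun_prop

theorem SS_cont (ω c κ : ℝ) (a : ℕ → ℝ) (k n : ℕ) : Continuous (SS ω (gg ω c κ a k) n) := by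
  have hg := (gg_contDiff ω c κ a k).continuous
  unfold SS; fun_prop

theorem DD_lower (hd : Dio ω c) (ha : Adm c κ a) (k : ℕ) : ∃ C, ∀ n : ℕ, n * Lk c κ a k - C ≤ uu ω (DD ω c κ a k) n := by
  obtain ⟨p, hp⟩ := EM.uniform hX0 (EM_VV hd κ 0)
  have hp := hp (⟨a, ha⟩, k)
  set E := Real.exp (X0 ((⟨a, ha⟩, k) : Idx c κ) ^ p)
  have hE : 1 ≤ E := Real.one_le_exp (by have := hX0 ((⟨a, ha⟩, k) : Idx c κ); positivity)
  have hV : ∀ x, opNorm (VV ω c κ a k x) ≤ 4 * E := fun x => opNorm_le fun r s => (hp r s).abs_le x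
  refine ⟨Real.log (16 * E * (4 * E)), fun n => ?_⟩
  rw [← SS_int]
  have hC := Coc_DD hd ha k
  have h1 : ∀ x, SS ω (gg ω c κ a k) n x - Real.log (16 * E * (4 * E)) ≤ phi ω (DD ω c κ a k) n x := by
    intro x
    have e : Dmat (SS ω (gg ω c κ a k) n x) = (VV ω c κ a k (x + n * ω)).adjugate * cocycle ω (DD ω c κ a k) n x * VV ω c κ a k x := by
      rw [coc_DD]
      have h1 := adj_mul_VV ω c κ a k (x + n*ω)
      have h2 := adj_mul_VV ω c κ a k x
      simp only [mul_assoc]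
      rw [h2, mul_one, ← mul_assoc, h1, one_mul]
    have h2 := entry_le (Dmat (SS ω (gg ω c κ a k) n x)) 0 0
    have h3 : Real.exp (SS ω (gg ω c κ a k) n x) ≤ (16 * E * (4 * E)) * opNorm (cocycle ω (DD ω c κ a k) n x) := by
      have h4 : |Dmat (SS ω (gg ω c κ a k) n x) 0 0| = Real.exp (SS ω (gg ω c κ a k) n x) := by
        simp [Dmat]
      rw [← h4]
      refine h2.trans ?_
      rw [e]
      have hadj := (opNorm_adj (VV ω c κ a k (x + n * ω))).trans (mul_le_mul_of_nonneg_left (hV _) (by norm_num))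
      calc _ ≤ opNorm (VV ω c κ a k (x + n * ω)).adjugate * opNorm (cocycle ω (DD ω c κ a k) n x) * opNorm (VV ω c κ a k x) :=
            (opNorm_mul _ _).trans (mul_le_mul_of_nonneg_right (opNorm_mul _ _) (opNorm_nonneg _))
        _ ≤ (4 * (4 * E)) * opNorm (cocycle ω (DD ω c κ a k) n x) * (4 * E) := by
            have := opNorm_nonneg (cocycle ω (DD ω c κ a k) n x)
            have := opNorm_nonneg (VV ω c κ a k x)
            gcongr
            exact hV x
        _ = _ := by ring
    have h5 := opNorm_ge_one (coc_det (ω := ω) hC n x)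
    have h6 := Real.log_le_log (Real.exp_pos _) h3
    rw [Real.log_exp, Real.log_mul (by positivity) (by linarith)] at h6
    unfold phi; linarith
  have hS := SS_cont ω c κ a k n
  have h2 : ∫ x in (0:ℝ)..1, (SS ω (gg ω c κ a k) n x - Real.log (16 * E * (4 * E))) ≤ uu ω (DD ω c κ a k) n := by
    apply intervalIntegral.integral_mono_on (by norm_num)
    · apply Continuous.intervalIntegrable; fun_prop
    · exact (phi_cont hC n).intervalIntegrable _ _
    · intro x _; exact h1 x
  rw [intervalIntegral.integral_sub (hS.intervalIntegrable _ _) (by simp)] at h2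
  simpa using h2

theorem DD_uu_ge (hd : Dio ω c) (ha : Adm c κ a) (k n : ℕ) : n * Lk c κ a k ≤ uu ω (DD ω c κ a k) n := by
  obtain ⟨C, hC⟩ := DD_lower hd ha k
  have hco := Coc_DD hd ha k
  have h1 : Lk c κ a k ≤ (uu_sub (ω := ω) hco).lim := by
    have t1 := (uu_sub (ω := ω) hco).tendsto_lim (uu_bdd hco)
    have t2 : Tendsto (fun n : ℕ => Lk c κ a k - C / n) atTop (nhds (Lk c κ a k - 0)) :=
      tendsto_const_nhds.sub (tendsto_const_div_atTop_nhds_zero_nat C)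
    rw [sub_zero] at t2
    refine le_of_tendsto_of_tendsto t2 t1 ?_
    filter_upwards [eventually_ge_atTop 1] with n hn
    have hn' : (0:ℝ) < n := by exact_mod_cast hn
    rw [le_div_iff₀ hn', sub_mul, div_mul_cancel₀ _ hn'.ne']
    linarith [hC n]
  rcases Nat.eq_zero_or_pos n with rfl | hn
  · simp; exact uu_nonneg hco 0
  · have h2 := (uu_sub (ω := ω) hco).lim_le_div (uu_bdd hco) (n := n) (by omega)
    have hn' : (0:ℝ) < n := by exact_mod_cast hn
    rw [le_div_iff₀ hn'] at h2
    nlinarith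

theorem DD_bdd (hd : Dio ω c) (hκ : 0 < κ) (ha : Adm c κ a) : ∃ B K, 1 ≤ B ∧ ∀ k ≥ K, ∀ x, opNorm (DD ω c κ a k x) ≤ B := by
  obtain ⟨K, hK⟩ := Dinf_close hd hκ 0
  have h1 : ∀ r s, ∃ A, CB 0 (fun y => Dinf ω c κ a y r s) A := fun r s =>
    CB_of_periodic (Dinf_smooth hd hκ ha r s) (by intro y; simp only [Dinf_periodic ω c κ a y]) 0
  choose A hA using h1
  have hA0 : ∀ r s, 0 ≤ A r s := fun r s => (hA r s).nonneg
  refine ⟨4 * (A 0 0 + A 0 1 + A 1 0 + A 1 1 + 2), K, ?_, fun k hk x => opNorm_le fun r s => ?_⟩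
  · linarith [hA0 0 0, hA0 0 1, hA0 1 0, hA0 1 1]
  · have e1 := (hA r s).abs_le x
    have e2 := (hK a ha k hk r s).abs_le x
    have e3 : 2 * ((1:ℝ)/2)^k ≤ 2 := by
      have : ((1:ℝ)/2)^k ≤ 1 := pow_le_one₀ (by norm_num) (by norm_num)
      linarith
    have e4 : A r s ≤ A 0 0 + A 0 1 + A 1 0 + A 1 1 := by
      have := hA0 0 0; have := hA0 0 1; have := hA0 1 0; have := hA0 1 1
      fin_cases r <;> fin_cases s <;> simp <;> linarith
    have e5 : |DD ω c κ a k x r s| ≤ |Dinf ω c κ a x r s| + |Dinf ω c κ a x r s - DD ω c κ a k x r s| := by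
      have := abs_sub (Dinf ω c κ a x r s) (Dinf ω c κ a x r s - DD ω c κ a k x r s)
      simpa using this
    linarith

theorem coc_tendsto (hd : Dio ω c) (hκ : 0 < κ) (ha : Adm c κ a) (n : ℕ) (x : ℝ) :
    Tendsto (fun k => cocycle ω (DD ω c κ a k) n x) atTop (nhds (cocycle ω (Dinf ω c κ a) n x)) := by
  induction n with
  | zero => exact tendsto_const_nhds
  | succ n ih => exact (Dinf_tendsto hd hκ ha _).mul ih

theorem uu_tendsto (hd : Dio ω c) (hκ : 0 < κ) (ha : Adm c κ a) (n : ℕ) :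
    Tendsto (fun k => uu ω (DD ω c κ a k) n) atTop (nhds (uu ω (Dinf ω c κ a) n)) := by
  obtain ⟨B, K, hB1, hB⟩ := DD_bdd hd hκ ha
  unfold uu
  apply intervalIntegral.tendsto_integral_filter_of_dominated_convergence (fun _ => n * Real.log B)
  · exact Eventually.of_forall fun k => (phi_cont (Coc_DD hd ha k) n).aestronglyMeasurable
  · filter_upwards [eventually_ge_atTop K] with k hk
    refine Eventually.of_forall fun x _ => ?_
    rw [Real.norm_eq_abs, abs_of_nonneg (phi_nonneg (Coc_DD hd ha k) n x)]
    exact phi_le (Coc_DD hd ha k) (hB k hk) n x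
  · simp
  · refine Eventually.of_forall fun x _ => ?_
    have h1 := (opNorm_continuous.tendsto _).comp (coc_tendsto hd hκ ha n x)
    exact h1.log (by have := opNorm_ge_one (coc_det (ω := ω) (Coc_Dinf hd hκ ha) n x); linarith)

theorem part_i (hd : Dio ω c) (hκ : 0 < κ) (ha : Adm c κ a) (hL : ∀ k, κ ≤ Lk c κ a k) :
    ∃ L : ℝ, κ ≤ L ∧ Tendsto (fun m => LEn ω (Dinf ω c κ a) m) atTop (nhds L) := by
  have hco := Coc_Dinf hd hκ ha
  refine ⟨_, ?_, LEn_tendsto hco⟩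
  refine ge_of_tendsto (LEn_tendsto hco) ?_
  filter_upwards [eventually_ge_atTop 1] with n hn
  have hn' : (0:ℝ) < n := by exact_mod_cast hn
  rw [LEn_eq, le_div_iff₀ hn']
  refine ge_of_tendsto' (uu_tendsto hd hκ ha n) fun k => ?_
  have := DD_uu_ge hd ha k n
  nlinarith [hL k]

end PartM

section PartN

variable {ω c κ : ℝ} {a : ℕ → ℝ}

/-- majorant of the indicator of the set where `DD (i+1)` and `DD i` differ -/
noncomputable def badf (ω c : ℝ) (i : ℕ) (y : ℝ) : ℝ :=
  theta c i y + theta c i (y + (-(mm i * ω))) + theta c i (y + (mm i + 1 : ℕ) * ω)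

theorem badf_nonneg (ω c : ℝ) (i : ℕ) (y : ℝ) : 0 ≤ badf ω c i y := by
  unfold badf
  have := theta_nonneg c i y
  have := theta_nonneg c i (y + (-(mm i * ω)))
  have := theta_nonneg c i (y + (mm i + 1 : ℕ) * ω)
  linarith

theorem theta_cases (c : ℝ) (i : ℕ) (y : ℝ) : (theta c i y = 1) ∨ (theta c i y = 0 ∧ chi c i y = 0) := by
  unfold theta; split_ifs with h
  · right; exact ⟨rfl, h⟩
  · left; rfl

theorem DD_same (hd : Dio ω c) (ha : Adm c κ a) (i : ℕ) (y : ℝ) (h : badf ω c i y < 1) :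
    DD ω c κ a (i+1) y = DD ω c κ a i y := by
  have t1 := theta_nonneg c i y
  have t2 := theta_nonneg c i (y + (-(mm i * ω)))
  have t3 := theta_nonneg c i (y + (mm i + 1 : ℕ) * ω)
  unfold badf at h
  have h1 : chi c i y = 0 := by
    rcases theta_cases c i y with e | e
    · linarith
    · exact e.2
  have h2 : chi c i (y + (-(mm i * ω))) = 0 := by
    rcases theta_cases c i (y + (-(mm i * ω))) with e | e
    · linarith
    · exact e.2
  have h3 : chi c i (y + (mm i + 1 : ℕ) * ω) = 0 := by
    rcases theta_cases c i (y + (mm i + 1 : ℕ) * ω) with e | e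
    · linarith
    · exact e.2
  rw [DD_succ hd (fun i => (ha.pos i).ne') i y]
  have e1 : tauk c a i y = 0 := by simp [tauk, ff, h1]
  have e2 : rhok ω c κ a i y = 0 := rterm_zero (by simp only [ff, h3, mul_zero])
  have e3 : taumk ω c κ a i y = 0 := tterm_zero (by simp only [ff, sub_eq_add_neg, h2, mul_zero])
  have e4 : Cut 0 0 = 0 := by unfold Cut; apply m2_ext <;> simp
  rw [e1, e2, e3, e4]; simp

theorem coc_congr {A B : ℝ → M2} (n : ℕ) (x : ℝ) (h : ∀ j < n, A (x + j * ω) = B (x + j * ω)) :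
    cocycle ω A n x = cocycle ω B n x := by
  induction n with
  | zero => rfl
  | succ n ih => simp only [cocycle]; rw [h n (by omega), ih fun j hj => h j (by omega)]

theorem theta_ii (c : ℝ) (k : ℕ) (b : ℝ) : IntervalIntegrable (fun x => theta c k (x + b)) volume 0 1 := by
  rw [intervalIntegrable_iff]
  refine Measure.integrableOn_of_bounded (M := 1) (by simp) ?_ ?_
  · exact ((theta_measurable c k).comp (measurable_add_const b)).aestronglyMeasurable
  · refine Eventually.of_forall fun x => ?_
    rw [Real.norm_eq_abs, abs_of_nonneg (theta_nonneg _ _ _)]; exact theta_le_one _ _ _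

theorem badf_ii (ω c : ℝ) (k : ℕ) (b : ℝ) : IntervalIntegrable (fun x => badf ω c k (x + b)) volume 0 1 := by
  unfold badf
  simp only [add_assoc]
  exact (theta_ii c k _).add ((theta_ii c k _).add (theta_ii c k _))

theorem badf_int (hd : Dio ω c) (k : ℕ) (b : ℝ) : ∫ x in (0:ℝ)..1, badf ω c k (x + b) ≤ 3 / mm k := by
  unfold badf
  simp only [add_assoc]
  rw [intervalIntegral.integral_add (theta_ii c k _) ((theta_ii c k _).add (theta_ii c k _)),
    intervalIntegral.integral_add (theta_ii c k _) (theta_ii c k _)]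
  simp only [pb_shift (theta_periodic c k)]
  have := theta_int hd k
  have e : (3:ℝ) / mm k = 1 / mm k + (1 / mm k + 1 / mm k) := by ring
  linarith

theorem uu_step (hd : Dio ω c) (ha : Adm c κ a) (i n : ℕ) {B : ℝ} (hB1 : 1 ≤ B)
    (hB : ∀ x, opNorm (DD ω c κ a (i+1) x) ≤ B) :
    uu ω (DD ω c κ a (i+1)) n ≤ uu ω (DD ω c κ a i) n + (n:ℝ)^2 * Real.log B * (3 / mm i) := by
  have hl := Real.log_nonneg hB1
  have hpt : ∀ x, phi ω (DD ω c κ a (i+1)) n x ≤ phi ω (DD ω c κ a i) n x +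
      n * Real.log B * ∑ j ∈ Finset.range n, badf ω c i (x + j * ω) := by
    intro x
    have hs : 0 ≤ ∑ j ∈ Finset.range n, badf ω c i (x + j * ω) := Finset.sum_nonneg fun j _ => badf_nonneg _ _ _ _
    by_cases h : ∀ j < n, badf ω c i (x + j * ω) < 1
    · have : phi ω (DD ω c κ a (i+1)) n x = phi ω (DD ω c κ a i) n x := by
        unfold phi; rw [coc_congr n x fun j hj => DD_same hd ha i _ (h j hj)]
      rw [this]
      have : 0 ≤ n * Real.log B * ∑ j ∈ Finset.range n, badf ω c i (x + j * ω) := by positivity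
      linarith
    · push Not at h
      obtain ⟨j, hj, hb⟩ := h
      have h1 := Finset.single_le_sum (f := fun j : ℕ => badf ω c i (x + j * ω)) (fun j _ => badf_nonneg ω c i (x + j * ω)) (Finset.mem_range.2 hj)
      have h2 : 1 ≤ ∑ j ∈ Finset.range n, badf ω c i (x + j * ω) := hb.trans h1
      have h3 := phi_le (ω := ω) (Coc_DD hd ha (i+1)) hB n x
      have h4 := phi_nonneg (ω := ω) (Coc_DD hd ha i) n x
      have h5 : 0 ≤ n * Real.log B := by positivity
      nlinarith
  have hii : IntervalIntegrable (fun x => ∑ j ∈ Finset.range n, badf ω c i (x + j * ω)) volume 0 1 := by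
    have := IntervalIntegrable.sum (μ := volume) (a := 0) (b := 1) (Finset.range n) (f := fun (j:ℕ) x => badf ω c i (x + j * ω)) (fun j _ => badf_ii ω c i _)
    have e : (fun x => ∑ j ∈ Finset.range n, badf ω c i (x + j * ω)) =
        ∑ j ∈ Finset.range n, (fun (j:ℕ) x => badf ω c i (x + j * ω)) j := by ext x; simp
    rw [e]; exact this
  have hI : ∫ x in (0:ℝ)..1, ∑ j ∈ Finset.range n, badf ω c i (x + j * ω) ≤ n * (3 / mm i) := by
    rw [intervalIntegral.integral_finsetSum fun j _ => badf_ii ω c i _]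
    calc _ ≤ ∑ j ∈ Finset.range n, (3 / (mm i : ℝ)) := Finset.sum_le_sum fun j _ => badf_int hd i _
      _ = _ := by simp
  have hp0 := (phi_cont (ω := ω) (Coc_DD hd ha i) n).intervalIntegrable (μ := volume) 0 1
  have hp1 := (phi_cont (ω := ω) (Coc_DD hd ha (i+1)) n).intervalIntegrable (μ := volume) 0 1
  calc uu ω (DD ω c κ a (i+1)) n ≤ ∫ x in (0:ℝ)..1, (phi ω (DD ω c κ a i) n x +
      n * Real.log B * ∑ j ∈ Finset.range n, badf ω c i (x + j * ω)) :=
        intervalIntegral.integral_mono_on (by norm_num) hp1 (hp0.add (hii.const_mul _)) fun x _ => hpt x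
    _ = uu ω (DD ω c κ a i) n + n * Real.log B * ∫ x in (0:ℝ)..1, ∑ j ∈ Finset.range n, badf ω c i (x + j * ω) := by
        rw [intervalIntegral.integral_add hp0 (hii.const_mul _), intervalIntegral.integral_const_mul]; rfl
    _ ≤ uu ω (DD ω c κ a i) n + n * Real.log B * (n * (3 / mm i)) := by gcongr
    _ = _ := by ring

theorem uu_far (hd : Dio ω c) (hκ : 0 < κ) (ha : Adm c κ a) : ∃ b K, 0 ≤ b ∧ ∀ k ≥ K, ∀ n,
    uu ω (Dinf ω c κ a) n ≤ uu ω (DD ω c κ a k) n + (n:ℝ)^2 * b / mm k := by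
  obtain ⟨B, K, hB1, hB⟩ := DD_bdd hd hκ ha
  have hl := Real.log_nonneg hB1
  refine ⟨6 * Real.log B, K, by positivity, fun k hk n => ?_⟩
  have hmk := mm_pos' k
  have hm : ∀ l, (2:ℝ)^l * mm k ≤ mm (k + l) := by
    intro l
    induction l with
    | zero => simp
    | succ l ih =>
      have : ((2 * mm (k+l) : ℕ) : ℝ) ≤ mm (k+(l+1)) := by exact_mod_cast mm_lt (by omega)
      push_cast at this
      rw [pow_succ]; linarith
  have key : ∀ l, uu ω (DD ω c κ a (k+l)) n ≤ uu ω (DD ω c κ a k) n + (n:ℝ)^2 * (6 * Real.log B) / mm k * (1 - (1/2)^l) := by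
    intro l
    induction l with
    | zero => simp
    | succ l ih =>
      have h1 := uu_step hd ha (k+l) n hB1 (hB (k+l+1) (by omega))
      have h2 : (3:ℝ) / mm (k+l) ≤ 3 / mm k * (1/2)^l := by
        rw [div_pow, one_pow, div_mul_div_comm, mul_one]
        exact div_le_div_of_nonneg_left (by norm_num) (by positivity) (by have := hm l; linarith)
      have h3 := mul_le_mul_of_nonneg_left h2 (show 0 ≤ (n:ℝ)^2 * Real.log B by positivity)
      have e : (n:ℝ)^2 * (6 * Real.log B) / mm k * (1 - (1/2)^(l+1)) =
        (n:ℝ)^2 * (6 * Real.log B) / mm k * (1 - (1/2)^l) + (n:ℝ)^2 * Real.log B * (3 / mm k * (1/2)^l) := by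
        rw [pow_succ]; ring
      rw [e]
      have e2 : k + (l+1) = k + l + 1 := rfl
      rw [e2]; linarith
  have t := (tendsto_add_atTop_iff_nat k).2 (uu_tendsto hd hκ ha n)
  refine le_of_tendsto' t fun l => ?_
  rw [add_comm l k]
  refine (key l).trans ?_
  have : (0:ℝ) ≤ (1/2)^l := by positivity
  have : 0 ≤ (n:ℝ)^2 * (6 * Real.log B) / mm k := by positivity
  nlinarith

theorem uu_near (hd : Dio ω c) (hκ : 0 < κ) (ha : Adm c κ a) : ∃ (r : ℕ) (C : ℝ), 0 ≤ C ∧ ∀ k,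
    uu ω (DD ω c κ a k) (NN k ^ (r+1)) ≤ (NN k : ℝ)^(r+1) * Lk c κ a k + C * (NN k : ℝ)^r := by
  obtain ⟨p2, hp2⟩ := EM.uniform hX0 (EM_VV hd κ 0)
  obtain ⟨p1, hp1⟩ := PB_gg hd κ 1
  have hc := hd.pos
  refine ⟨2 * (p1 + p2) + 1, 4 * π / c + 4 + 2 + Real.log 256, by have := Real.log_nonneg (show (1:ℝ) ≤ 256 by norm_num); positivity, fun k => ?_⟩
  set r := 2 * (p1 + p2) + 1 with hr
  have hp2 := hp2 (⟨a, ha⟩, k)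
  have hp1 := hp1 (⟨a, ha⟩, k)
  simp only [X0] at hp1 hp2
  set N : ℝ := (NN k : ℝ) with hN
  have hN2 : 2 ≤ N := NN_two' k
  have hL := Lk_pos hd hκ ha k
  set E := Real.exp (N ^ p2) with hE
  have hV : ∀ x, opNorm (VV ω c κ a k x) ≤ 4 * E := fun x => opNorm_le fun r s => (hp2 r s).abs_le x
  set n := NN k ^ (r+1) with hn
  have hnN : (n:ℝ) = N^(r+1) := by rw [hn]; push_cast; rfl
  have hco := Coc_DD hd ha k
  set T := 2 * π / c * N^r + 2 * N^(2*p1+1) with hT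
  have hS : ∀ x, -T ≤ SS ω (gg ω c κ a k) n x := by
    intro x
    have h := pb_equi ω c hc hd.sin_ge (gg_periodic ω c κ a k) (gg_contDiff ω c κ a k).continuous hp1.lip hp1.abs_le
      (NN k ^ (p1+1)) (by have := NN_two k; positivity) n x
    rw [gg_int] at h
    have e1 : 2 * N^p1 * n * π / (c * ((NN k ^ (p1+1) : ℕ) : ℝ)) = 2 * π / c * N^r := by
      push_cast; rw [hnN, ← hN]; field_simp; ring
    have e2 : 2 * ((NN k ^ (p1+1) : ℕ) : ℝ) * N^p1 = 2 * N^(2*p1+1) := by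
      push_cast; rw [← hN]; ring
    rw [e1, e2] at h
    have : 0 ≤ (n:ℝ) * Lk c κ a k := by positivity
    unfold SS; linarith
  have hT0 : 0 ≤ T := by positivity
  have hpt : ∀ x, phi ω (DD ω c κ a k) n x ≤ SS ω (gg ω c κ a k) n x + (2 * T + 2 * N^p2 + Real.log 256) := by
    intro x
    set S := SS ω (gg ω c κ a k) n x with hSdef
    have hSx : -T ≤ S := hS x
    have hSa : |S| ≤ S + 2 * T := abs_le.2 ⟨by linarith, by linarith⟩
    have hD : opNorm (Dmat S) ≤ 4 * Real.exp |S| := by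
      apply opNorm_le
      intro r s
      have h1 := le_abs_self S
      have h2 := neg_le_abs S
      fin_cases r <;> fin_cases s <;> simp [Dmat] <;> first | assumption | positivity
    have hadj := (opNorm_adj (VV ω c κ a k x)).trans (mul_le_mul_of_nonneg_left (hV x) (by norm_num))
    have h1 : opNorm (cocycle ω (DD ω c κ a k) n x) ≤ 256 * (E * E * Real.exp |S|) := by
      rw [coc_DD]
      calc _ ≤ opNorm (VV ω c κ a k (x + n * ω)) * opNorm (Dmat S) * opNorm (VV ω c κ a k x).adjugate :=
            (opNorm_mul _ _).trans (mul_le_mul_of_nonneg_right (opNorm_mul _ _) (opNorm_nonneg _))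
        _ ≤ (4 * E) * (4 * Real.exp |S|) * (4 * (4 * E)) := by
            have := opNorm_nonneg (Dmat S)
            have := opNorm_nonneg (VV ω c κ a k x).adjugate
            have := hV (x + n * ω)
            gcongr
        _ = _ := by ring
    have h2 := opNorm_ge_one (coc_det (ω := ω) hco n x)
    have h3 := Real.log_le_log (by linarith) h1
    rw [Real.log_mul (by norm_num) (by positivity), hE, ← Real.exp_add, ← Real.exp_add, Real.log_exp] at h3
    unfold phi; linarith
  have hSc := SS_cont ω c κ a k n
  have h2 : uu ω (DD ω c κ a k) n ≤ ∫ x in (0:ℝ)..1, (SS ω (gg ω c κ a k) n x + (2 * T + 2 * N^p2 + Real.log 256)) := by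
    apply intervalIntegral.integral_mono_on (by norm_num)
    · exact (phi_cont hco n).intervalIntegrable _ _
    · apply Continuous.intervalIntegrable; fun_prop
    · intro x _; exact hpt x
  rw [intervalIntegral.integral_add (hSc.intervalIntegrable _ _) (by simp), SS_int, hnN] at h2
  simp only [intervalIntegral.integral_const, sub_zero, one_smul] at h2
  have b1 : N^(2*p1+1) ≤ N^r := pow_le_pow_right₀ (by linarith) (by omega)
  have b2 : N^p2 ≤ N^r := pow_le_pow_right₀ (by linarith) (by omega)
  have b3 : 1 ≤ N^r := one_le_pow₀ (by linarith)
  have b4 : Real.log 256 ≤ Real.log 256 * N^r := le_mul_of_one_le_right (Real.log_nonneg (by norm_num)) b3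
  have e : 4 * π / c * N^r = 2 * (2 * π / c * N^r) := by ring
  calc _ ≤ _ := h2
    _ ≤ _ := by rw [hT]; nlinarith

theorem part_ii (hd : Dio ω c) (hκ : 0 < κ) (ha : Adm c κ a) (hL : Tendsto (fun k => Lk c κ a k) atTop (nhds 0)) :
    Tendsto (fun m => LEn ω (Dinf ω c κ a) m) atTop (nhds 0) := by
  have hco := Coc_Dinf hd hκ ha
  have h := LEn_tendsto (ω := ω) hco
  suffices e : (uu_sub (ω := ω) hco).lim = 0 by rwa [e] at h
  refine le_antisymm ?_ (lim_nonneg' hco)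
  obtain ⟨b, K, hb, hfar⟩ := uu_far hd hκ ha
  obtain ⟨r, C, hC, hnear⟩ := uu_near hd hκ ha
  have ht : Tendsto (fun k => Lk c κ a k + (C + b) * (NN k : ℝ)⁻¹) atTop (nhds (0 + (C + b) * 0)) :=
    hL.add (NN_tendsto.inv_tendsto_atTop.const_mul _)
  rw [mul_zero, add_zero] at ht
  refine ge_of_tendsto ht ?_
  filter_upwards [eventually_ge_atTop (K + r)] with k hk
  set N : ℝ := (NN k : ℝ) with hN
  have hN2 : 2 ≤ N := NN_two' k
  have h1 := (uu_sub (ω := ω) hco).lim_le_div (uu_bdd hco) (n := NN k ^ (r+1)) (by have := NN_two k; positivity)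
  refine h1.trans ?_
  push_cast
  rw [← hN, div_le_iff₀ (by positivity)]
  have h2 := hfar k (by omega) (NN k ^ (r+1))
  have h3 := hnear k
  have h4 : ((NN k ^ (r+1) : ℕ) : ℝ)^2 * b / mm k ≤ b * N^r := by
    rw [mm_cast, NN_succ', div_le_iff₀ (by positivity)]
    push_cast
    rw [← hN]
    have h5 : (N^(r+1))^2 ≤ (N^(k+2))^2 := by
      apply pow_le_pow_left₀ (by positivity)
      exact pow_le_pow_right₀ (by linarith) (by omega)
    have h6 : 1 ≤ N^r := one_le_pow₀ (by linarith)
    calc _ ≤ (N^(k+2))^2 * b := by gcongr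
      _ = b * 1 * (N^(k+2))^2 := by ring
      _ ≤ _ := by gcongr
  have e : (Lk c κ a k + (C + b) * N⁻¹) * N^(r+1) = N^(r+1) * Lk c κ a k + C * N^r + b * N^r := by
    field_simp; ring
  rw [e]; linarith

end PartN

section PartO

variable {ω c κ : ℝ} {a : ℕ → ℝ}

theorem m2_smooth {A : ℝ → M2} (h : ∀ r s, ContDiff ℝ (⊤ : ℕ∞) (fun y => A y r s)) : ContDiff ℝ (⊤ : ℕ∞) A :=
  contDiff_pi.2 fun r => contDiff_pi.2 fun s => h r s

theorem m2_iter {A : ℝ → M2} (h : ∀ r s, ContDiff ℝ (⊤ : ℕ∞) (fun y => A y r s)) (j : ℕ) (x : ℝ) (r s : Fin 2) :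
    iteratedDeriv j A x r s = iteratedDeriv j (fun y => A y r s) x := by
  have hA := m2_smooth h
  induction j generalizing x with
  | zero => simp
  | succ j ih =>
    have e : iteratedDeriv j (fun y => A y r s) = fun x => iteratedDeriv j A x r s := by ext x; exact (ih x).symm
    rw [iteratedDeriv_succ, iteratedDeriv_succ, e]
    have hdiff : DifferentiableAt ℝ (iteratedDeriv j A) x :=
      (hA.differentiable_iteratedDeriv j (by exact_mod_cast WithTop.coe_lt_top j)) x
    have h1 := hasDerivAt_pi.1 hdiff.hasDerivAt r
    have h2 := hasDerivAt_pi.1 h1 s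
    exact h2.deriv.symm

end PartO

theorem sl2_positive_LE_not_Cinf_open_approx
    (ω : ℝ) (hω : Irrational ω)
    (M : ℝ) (hM : 1 ≤ M) (hbt : ∀ k : ℕ, cfDen ω (k + 1) ≤ M * cfDen ω k)
    (κ : ℝ) (hκ : 0 < κ) :
    ∃ (D : ℝ → Matrix (Fin 2) (Fin 2) ℝ) (C : ℕ → ℝ → Matrix (Fin 2) (Fin 2) ℝ),
      Function.Periodic D 1 ∧ ContDiff ℝ (⊤ : ℕ∞) D ∧ (∀ x, (D x).det = 1) ∧
      (∀ k, Function.Periodic (C k) 1 ∧ ContDiff ℝ (⊤ : ℕ∞) (C k) ∧ ∀ x, ((C k) x).det = 1) ∧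
      -- (i) L(D) ≥ κ
      (∃ L : ℝ, κ ≤ L ∧ Tendsto (fun m => LEn ω D m) atTop (nhds L)) ∧
      -- (ii) L(C_k) = 0 for every k
      (∀ k, Tendsto (fun m => LEn ω (C k) m) atTop (nhds 0)) ∧
      -- (iii) for every j, sup_x ‖(C_k − D)^{(j)}(x)‖ → 0 as k → ∞
      (∀ j : ℕ, ∀ ε : ℝ, 0 < ε → ∃ K : ℕ, ∀ k ≥ K, ∀ x : ℝ,
        opNorm (iteratedDeriv j (fun y => C k y - D y) x) ≤ ε) := by
  obtain ⟨c, hc0, hc1, hsin⟩ := pa_sin ω hω M hM hbt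
  have hd : Dio ω c := ⟨hc0, hc1, hsin⟩
  let sD : ℕ → Bool := fun _ => false
  let sC : ℕ → ℕ → Bool := fun k i => decide (k ≤ i)
  have aD := seqA_adm hd hκ sD
  have aC := fun k => seqA_adm hd hκ (sC k)
  refine ⟨Dinf ω c κ (seqA c κ sD), fun k => Dinf ω c κ (seqA c κ (sC k)), Dinf_periodic _ _ _ _,
    m2_smooth (Dinf_smooth hd hκ aD), Dinf_det hd hκ aD,
    fun k => ⟨Dinf_periodic _ _ _ _, m2_smooth (Dinf_smooth hd hκ (aC k)), Dinf_det hd hκ (aC k)⟩,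
    part_i hd hκ aD (Lk_false hd κ),
    fun k => part_ii hd hκ (aC k) (Lk_true hd hκ (sC k) k fun i hi => by simpa [sC] using hi), ?_⟩
  intro j ε hε
  obtain ⟨K, hK⟩ := Dinf_close hd hκ j
  obtain ⟨K2, hK2⟩ := exists_pow_lt_of_lt_one (show 0 < ε / 16 by positivity) (show (1/2 : ℝ) < 1 by norm_num)
  refine ⟨K + K2, fun k hk x => ?_⟩
  have hpre : DD ω c κ (seqA c κ (sC k)) k = DD ω c κ (seqA c κ sD) k :=
    DD_initseg k (seqA_initseg k fun i hi => by simp [sC, sD, hi])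
  have hk2 : (1/2 : ℝ)^k ≤ ε / 16 :=
    (pow_le_pow_of_le_one (by norm_num) (by norm_num) (by omega)).trans hK2.le
  have hcb : ∀ r s, CB j (fun y => (Dinf ω c κ (seqA c κ (sC k)) y - Dinf ω c κ (seqA c κ sD) y) r s) (4 * (1/2)^k) := by
    intro r s
    have h1 := hK _ (aC k) k (by omega) r s
    have h2 := hK _ aD k (by omega) r s
    rw [hpre] at h1
    have h3 := h1.sub h2
    have e : (fun y => (Dinf ω c κ (seqA c κ (sC k)) y - Dinf ω c κ (seqA c κ sD) y) r s) =
        fun y => (Dinf ω c κ (seqA c κ (sC k)) y r s - DD ω c κ (seqA c κ sD) k y r s) -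
          (Dinf ω c κ (seqA c κ sD) y r s - DD ω c κ (seqA c κ sD) k y r s) := by
      ext y; simp [Matrix.sub_apply]
    rw [e]
    refine h3.mono (by linarith)
  have h4 := opNorm_le (A := iteratedDeriv j (fun y => Dinf ω c κ (seqA c κ (sC k)) y - Dinf ω c κ (seqA c κ sD) y) x)
    (B := 4 * (1/2)^k) fun r s => by
      rw [m2_iter fun r s => (hcb r s).1]
      exact (hcb r s).2 j le_rfl x
  linarith
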